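/- arXiv:2601.11083 — 2 statements merged into one kernel-verified Lean document; each statement's English description precedes it below -/
import Mathlib

section
/- Suppose Γ is a configuration satisfying the Working Conditions with at least one bad vertex, and let φ be an embedding of Γ into ℤ^N. Suppose x is a vertex of Γ that is not bad and is adjacent to two bad vertices. If v is a vertex with v ≠ x and supp(φ(v)) ∩ supp(φ(x)) ≠ ∅, then v belongs to the bad part of Γ. -/
namespace LensPaper

/-- A finite weighted simple graph: the combinatorial data underlying a configuration
(a disjoint union of weighted linear graphs).  The fact that every connected component
is a path is recorded separately by `Config.IsLinear`. -/
structure Config where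
  V : Type
  fin : Fintype V
  deq : DecidableEq V
  graph : SimpleGraph V
  adjDec : DecidableRel graph.Adj
  w : V → ℤ

attribute [instance] Config.fin Config.deq Config.adjDec

namespace Config

/-- The degree of a vertex. -/
noncomputable def deg (C : Config) (v : C.V) : ℕ := (C.graph.neighborSet v).ncard

/-- A configuration: every component is a path, i.e. all degrees are at most `2` and the
graph is acyclic. -/
def IsLinear (C : Config) : Prop :=
  (∀ v : C.V, C.deg v ≤ 2) ∧ C.graph.IsAcyclic

/-- The adjusted weight `w'(v) = w(v) - deg(v)`. -/
noncomputable def adjw (C : Config) (v : C.V) : ℤ := C.w v - C.deg v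

/-- A vertex is bad if it is adjacent to two distinct vertices of positive adjusted
weight. -/
def IsBad (C : Config) (x : C.V) : Prop :=
  ∃ u v : C.V, u ≠ v ∧ C.graph.Adj x u ∧ C.graph.Adj x v ∧ 0 < C.adjw u ∧ 0 < C.adjw v

/-- A leaf: a vertex of degree at most one. -/
def IsLeaf (C : Config) (v : C.V) : Prop := C.deg v ≤ 1

/-- `v 0, v 1, …, v m` is a chain of consecutive (distinct) vertices. -/
def IsChain (C : Config) (m : ℕ) (v : ℕ → C.V) : Prop :=
  (∀ i ≤ m, ∀ j ≤ m, v i = v j → i = j) ∧ ∀ i < m, C.graph.Adj (v i) (v (i + 1))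

/-- The chain `v 0, …, v m` has the list `p` as its sequence of adjusted weights. -/
def ChainPattern (C : Config) (m : ℕ) (v : ℕ → C.V) (p : List ℤ) : Prop :=
  C.IsChain m v ∧ m + 1 = p.length ∧ ∀ i : Fin p.length, C.adjw (v i) = p.get i

/-- `Γ` contains a chain of consecutive vertices whose adjusted weights, read in order,
form the list `p`. -/
def HasPattern (C : Config) (p : List ℤ) : Prop := ∃ m v, C.ChainPattern m v p

/-- A chain realizing a bad-part pattern `p` (each entry of `p` is an adjusted weight
together with a flag marking the bad positions): the chain has the prescribed adjusted
weights, and the bad vertices of the configuration are exactly the vertices of the chain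
in the flagged positions. -/
def IsBadPartChain (C : Config) (p : List (ℤ × Bool)) (m : ℕ) (v : ℕ → C.V) : Prop :=
  C.IsChain m v ∧ m + 1 = p.length ∧
  (∀ i : Fin p.length, C.adjw (v i) = (p.get i).1) ∧
  (∀ x : C.V, C.IsBad x ↔ ∃ i : Fin p.length, (p.get i).2 = true ∧ v i = x)

end Config

/-- The chains of adjusted weights forbidden by Working Condition VI. -/
def forbiddenPatterns : List (List ℤ) :=
  [[1, 0, 0, 2], [1, 0, 0, 3], [1, 0, 0, 0, 3], [1, 1, 0, 0, 1, 2], [3, 1, 0, 0, 1],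
   [1, 0, 1, 2], [1, 0, 1, 3], [1, 1, 0, 2], [1, 1, 0, 1, 1, 2]]

/-- The bad-part patterns of Working Condition VII; `true` marks the bad positions. -/
def badPatterns : List (List (ℤ × Bool)) :=
  [[(1, false), (0, true), (1, false)],
   [(1, false), (0, true), (2, false)],
   [(1, false), (0, true), (3, false)],
   [(1, false), (1, true), (1, false)],
   [(1, false), (1, true), (2, false)],
   [(1, false), (2, true), (1, false)],
   [(1, false), (0, true), (1, false), (0, true), (1, false)],
   [(1, false), (0, true), (1, false), (0, true), (2, false)],
   [(1, false), (0, true), (1, false), (1, true), (1, false)],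
   [(1, false), (0, true), (1, false), (1, true), (2, false)],
   [(1, false), (1, true), (1, true), (1, false)],
   [(1, false), (1, true), (1, true), (1, true), (1, false)],
   [(1, false), (1, true), (2, true), (1, false)]]

namespace Config

/-- The Working Conditions (I)–(VII). -/
def WorkingConditions (C : Config) : Prop :=
  (∀ v : C.V, 2 ≤ C.w v) ∧
  (∀ v : C.V, C.adjw v ≤ 3) ∧
  (∀ u v : C.V, 1 < C.adjw u → 1 < C.adjw v → u = v) ∧
  (∀ v x : C.V, 1 < C.adjw v → C.IsBad x → C.adjw x = 1 → C.graph.Adj x v) ∧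
  ((∃ v : C.V, C.adjw v = 3) →
     ∀ u u' : C.V, C.graph.Adj u u' → C.adjw u = 1 → C.adjw u' = 1 → False) ∧
  (∀ u v x : C.V, C.graph.Adj u v → C.adjw u = 1 → C.adjw v = 1 →
     C.IsBad x → C.adjw x = 2 → C.graph.Adj x u ∨ C.graph.Adj x v) ∧
  (∀ p ∈ forbiddenPatterns, ¬ C.HasPattern p) ∧
  ((∃ x : C.V, C.IsBad x) → ∃ p ∈ badPatterns, ∃ m v, C.IsBadPartChain p m v)

end Config

/-- The standard inner product on `ℤ^N`. -/
def dot {N : ℕ} (x y : Fin N → ℤ) : ℤ := ∑ i, x i * y i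

/-- The support of a vector of `ℤ^N` with respect to the standard orthonormal basis. -/
def supp {N : ℕ} (x : Fin N → ℤ) : Finset (Fin N) :=
  Finset.univ.filter fun i => x i ≠ 0

namespace Config

/-- An embedding of a configuration into `ℤ^N`. -/
def IsEmbedding (C : Config) (N : ℕ) (φ : C.V → Fin N → ℤ) : Prop :=
  ∀ u v : C.V, dot (φ u) (φ v) =
    if u = v then C.w u else if C.graph.Adj u v then -1 else 0

/-- The restriction of `φ` to `S` is standard. -/
def IsStandardOn (C : Config) (N : ℕ) (φ : C.V → Fin N → ℤ) (S : Set C.V) : Prop :=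
  ∀ u ∈ S, ∀ v ∈ S,
    ((supp (φ u) ∩ supp (φ v)).card : ℤ) =
      if u = v then C.w v else if C.graph.Adj u v then 1 else 0

/-- A standard embedding. -/
def IsStandard (C : Config) (N : ℕ) (φ : C.V → Fin N → ℤ) : Prop :=
  C.IsStandardOn N φ Set.univ

/-- The restriction of `φ` to `S` is semi-standard at `x`. -/
def IsSemiStandardAtOn (C : Config) (N : ℕ) (φ : C.V → Fin N → ℤ) (x : C.V)
    (S : Set C.V) : Prop :=
  (∀ u ∈ S, ∀ v ∈ S,
    ((supp (φ u) ∩ supp (φ v)).card : ℤ) =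
      if u = v then C.w v
      else if C.graph.Adj u v then 1
      else if C.graph.Adj x u ∧ C.graph.Adj x v then 2
      else 0) ∧
  (∀ u ∈ S, ∀ v ∈ S, u ≠ v → C.graph.Adj x u → C.graph.Adj x v →
    (supp (φ u) ∩ supp (φ x) ∩ supp (φ v)).card = 1)

/-- A semi-standard embedding: semi-standard at some bad vertex. -/
def IsSemiStandard (C : Config) (N : ℕ) (φ : C.V → Fin N → ℤ) : Prop :=
  ∃ x : C.V, C.IsBad x ∧ C.IsSemiStandardAtOn N φ x Set.univ

/-- A candidate for the extended bad part: a chain containing the bad part whose two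
ends are either leaves or preceded by two consecutive vertices of vanishing adjusted
weight. -/
def IsEBPCand (C : Config) (m : ℕ) (v : ℕ → C.V) : Prop :=
  C.IsChain m v ∧
  (∀ p ∈ badPatterns, ∀ mb vb, C.IsBadPartChain p mb vb →
     ∀ i ≤ mb, ∃ j ≤ m, v j = vb i) ∧
  (C.IsLeaf (v 0) ∨ (2 ≤ m ∧ C.adjw (v 1) = 0 ∧ C.adjw (v 2) = 0)) ∧
  (C.IsLeaf (v m) ∨ (2 ≤ m ∧ C.adjw (v (m - 1)) = 0 ∧ C.adjw (v (m - 2)) = 0))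

/-- The extended bad part: a candidate with the fewest vertices. -/
def IsExtBadPart (C : Config) (m : ℕ) (v : ℕ → C.V) : Prop :=
  C.IsEBPCand m v ∧ ∀ m' v', C.IsEBPCand m' v' → m ≤ m'

/-- The set of vertices of the chain `v 0, …, v m`. -/
def ebpSet (C : Config) (m : ℕ) (v : ℕ → C.V) : Set C.V := {y | ∃ i ≤ m, v i = y}

/-- The outside part of `Γ` relative to the extended bad part `v 0, …, v m`. -/
def OutsidePart (C : Config) (m : ℕ) (v : ℕ → C.V) : Set C.V :=
  {x | ∀ i ≤ m, v i ≠ x}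
  ∪ {x | ¬ C.IsLeaf (v 0) ∧ (x = v 0 ∨ x = v 1 ∨ x = v 2)}
  ∪ {x | ¬ C.IsLeaf (v m) ∧ (x = v m ∨ x = v (m - 1) ∨ x = v (m - 2))}

/-- A screw at the front end of the extended bad part. -/
def IsFrontScrew (C : Config) (N : ℕ) (φ : C.V → Fin N → ℤ) (m : ℕ) (v : ℕ → C.V)
    (e : Fin N) : Prop :=
  ¬ C.IsLeaf (v 0) ∧ 3 ≤ m ∧ φ (v 2) e ≠ 0 ∧ φ (v 3) e ≠ 0

/-- A screw at the back end of the extended bad part. -/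
def IsBackScrew (C : Config) (N : ℕ) (φ : C.V → Fin N → ℤ) (m : ℕ) (v : ℕ → C.V)
    (e : Fin N) : Prop :=
  ¬ C.IsLeaf (v m) ∧ 3 ≤ m ∧ φ (v (m - 2)) e ≠ 0 ∧ φ (v (m - 3)) e ≠ 0

/-- All screws of `Γ` (with respect to `φ`) are clean. -/
def AllScrewsClean (C : Config) (N : ℕ) (φ : C.V → Fin N → ℤ) (m : ℕ)
    (v : ℕ → C.V) : Prop :=
  (∀ e : Fin N, C.IsFrontScrew N φ m v e →
    ∀ u : C.V, u ≠ v 2 → u ≠ v 3 → φ u e = 0) ∧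
  (∀ e : Fin N, C.IsBackScrew N φ m v e →
    ∀ u : C.V, u ≠ v (m - 2) → u ≠ v (m - 3) → φ u e = 0)

end Config

/-! helper material -/

def NB {V : Type} (G : SimpleGraph V) : List V → Prop
  | [] => True
  | [_] => True
  | [a, b] => G.Adj a b
  | a :: b :: c :: l => G.Adj a b ∧ a ≠ c ∧ NB G (b :: c :: l)

theorem NB.walk {V : Type} {G : SimpleGraph V} (hG : G.IsAcyclic) :
    ∀ (l : List V) (a b : V), NB G (a :: b :: l) →
      ∃ (z : V) (p : G.Walk a z), p.support = a :: b :: l ∧ p.IsPath ∧ p.snd = b := by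
  intro l
  induction l with
  | nil =>
    intro a b h
    have h' : G.Adj a b := h
    exact ⟨b, SimpleGraph.Walk.cons h' SimpleGraph.Walk.nil, by simp, by simp [h'.ne], by simp⟩
  | cons c l ih =>
    intro a b h
    obtain ⟨hab, hac, hnb⟩ := h
    obtain ⟨z, p, hs, hp, hsnd⟩ := ih b c hnb
    refine ⟨z, SimpleGraph.Walk.cons hab p, by simp [hs], ?_, by simp⟩
    rw [SimpleGraph.Walk.cons_isPath_iff]
    refine ⟨hp, fun hmem => ?_⟩
    have := hG.eq_snd_of_adj_start hp hab.symm hmem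
    exact hac (this.trans hsnd)

theorem NB.far0 {V : Type} {G : SimpleGraph V} (hG : G.IsAcyclic) {l : List V} {a b : V}
    (h : NB G (a :: b :: l)) {y : V} (hy : y ∈ l) : a ≠ y ∧ ¬ G.Adj a y := by
  obtain ⟨z, p, hs, hp, hsnd⟩ := NB.walk hG l a b h
  have hn : (a :: b :: l).Nodup := by rw [← hs]; exact hp.support_nodup
  simp only [List.nodup_cons, List.mem_cons, not_or] at hn
  refine ⟨fun e => hn.1.2 (e ▸ hy), fun hadj => ?_⟩
  have := hG.eq_snd_of_adj_start hp (w := y) hadj (by rw [hs]; simp [hy])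
  rw [hsnd] at this
  exact hn.2.1 (this ▸ hy)

theorem NB.tail {V : Type} {G : SimpleGraph V} {a : V} {l : List V} (h : NB G (a :: l)) :
    NB G l := by
  match l, h with
  | [], _ => trivial
  | [_], _ => trivial
  | _ :: _ :: _, h => exact h.2.2

theorem NB.far {V : Type} {G : SimpleGraph V} (hG : G.IsAcyclic) :
    ∀ {l : List V} (_ : NB G l) (i j : ℕ) (hij : i + 2 ≤ j) (hj : j < l.length),
      l[i] ≠ l[j] ∧ ¬ G.Adj l[i] l[j] := by
  intro l
  induction l with
  | nil => intro _ i j _ hj; simp at hj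
  | cons a l ih =>
    intro h i j hij hj
    obtain ⟨j, rfl⟩ : ∃ k, j = k + 1 := ⟨j - 1, by omega⟩
    match i with
    | 0 =>
      match l, h with
      | [], _ => simp at hj
      | b :: l, h =>
        obtain ⟨j, rfl⟩ : ∃ k, j = k + 1 := ⟨j - 1, by omega⟩
        simp only [List.getElem_cons_zero, List.getElem_cons_succ]
        exact NB.far0 hG h (List.getElem_mem _)
    | i + 1 =>
      simp only [List.getElem_cons_succ]
      exact ih h.tail i j (by omega) (by simpa using hj)

/-- Gram matrices of integer vectors. -/
def Gram {V : Type} (R : V → V → ℤ) : Prop :=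
  ∃ (N : ℕ) (φ : V → Fin N → ℤ) (S : Finset (Fin N)), ∀ a b, R a b = ∑ i ∈ S, φ a i * φ b i

theorem Gram.symm {V : Type} {R : V → V → ℤ} (h : Gram R) (a b : V) : R a b = R b a := by
  obtain ⟨N, φ, S, h⟩ := h
  rw [h, h]
  exact Finset.sum_congr rfl fun i _ => mul_comm _ _

theorem Gram.nonneg {V : Type} {R : V → V → ℤ} (h : Gram R) (a : V) : 0 ≤ R a a := by
  obtain ⟨N, φ, S, h⟩ := h
  rw [h]
  exact Finset.sum_nonneg fun i _ => mul_self_nonneg _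

theorem Gram.zero {V : Type} {R : V → V → ℤ} (h : Gram R) {a : V} (ha : R a a = 0) (b : V) :
    R a b = 0 := by
  obtain ⟨N, φ, S, h⟩ := h
  rw [h] at ha ⊢
  rw [Finset.sum_eq_zero_iff_of_nonneg (fun i _ => mul_self_nonneg _)] at ha
  refine Finset.sum_eq_zero fun i hi => ?_
  have := ha i hi
  rw [mul_self_eq_zero] at this
  rw [this, zero_mul]

theorem Gram.zero' {V : Type} {R : V → V → ℤ} (h : Gram R) {a : V} (ha : R a a = 0) (b : V) :
    R b a = 0 := by
  rw [h.symm]; exact h.zero ha b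

theorem Gram.peel {V : Type} {R : V → V → ℤ} (h : Gram R) (u : V) (hu : 0 < R u u) :
    ∃ (k : V → ℤ) (R' : V → V → ℤ), Gram R' ∧ 1 ≤ k u ∧ ∀ a b, R a b = k a * k b + R' a b := by
  obtain ⟨N, φ, S, h⟩ := h
  rw [h] at hu
  obtain ⟨i, hi, hne⟩ : ∃ i ∈ S, φ u i ≠ 0 := by
    by_contra hcon
    push Not at hcon
    rw [Finset.sum_eq_zero (fun i hi => by rw [hcon i hi, zero_mul])] at hu
    exact lt_irrefl _ hu
  have key : ∀ a b, R a b = φ a i * φ b i + ∑ j ∈ S.erase i, φ a j * φ b j := by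
    intro a b
    rw [h, Finset.add_sum_erase S (fun j => φ a j * φ b j) hi]
  rcases lt_or_gt_of_ne hne with hlt | hgt
  · refine ⟨fun a => - φ a i, _, ⟨N, φ, S.erase i, fun a b => rfl⟩, by simp only; omega, ?_⟩
    intro a b
    rw [key]; ring
  · exact ⟨fun a => φ a i, _, ⟨N, φ, S.erase i, fun a b => rfl⟩, by simp only; omega, key⟩

theorem cut (c : ℤ) : 0 ≤ c * c ∧ c ≤ c * c ∧ -c ≤ c * c ∧ 3 * c - 2 ≤ c * c ∧
    -3 * c - 2 ≤ c * c ∧ 5 * c - 6 ≤ c * c ∧ -5 * c - 6 ≤ c * c := by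
  have key : ∀ n : ℤ, 0 ≤ (c - n) * (c - n - 1) := by
    intro n
    rcases le_or_gt c n with h | h
    · exact mul_nonneg_of_nonpos_of_nonpos (by omega) (by omega)
    · exact mul_nonneg (by omega) (by omega)
  have h0 := key 0
  have h1 := key 1
  have h2 := key 2
  have m1 := key (-1)
  have m2 := key (-2)
  have m3 := key (-3)
  refine ⟨mul_self_nonneg c, ?_, ?_, ?_, ?_, ?_, ?_⟩ <;> nlinarith

theorem tri {c : ℤ} (h : c * c ≤ 3) : c = -1 ∨ c = 0 ∨ c = 1 := by
  have := cut c
  omega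

/-- Refined peeling: the new coordinate of `u` equals `1` when the remaining norm is small. -/
theorem Gram.peel1 {V : Type} {R : V → V → ℤ} (h : Gram R) (u : V) (hu : 0 < R u u)
    (hu3 : R u u ≤ 3) :
    ∃ (k : V → ℤ) (R' : V → V → ℤ), Gram R' ∧ k u = 1 ∧ R' u u = R u u - 1 ∧
      (∀ a b, R a b = k a * k b + R' a b) ∧ (∀ p, R p p = 0 → k p = 0 ∧ R' p p = 0) := by
  obtain ⟨k, R', hR', hk, hRR⟩ := h.peel u hu
  have h1 := hRR u u
  have h2 := hR'.nonneg u
  have h3 := cut (k u)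
  have h4 : k u = 1 := by omega
  refine ⟨k, R', hR', h4, ?_, hRR, ?_⟩
  · rw [h4] at h1; omega
  · intro p hp
    have h5 := hRR p p
    have h6 := hR'.nonneg p
    have h7 := cut (k p)
    constructor <;> omega

theorem Gram.diff {V : Type} {R : V → V → ℤ} (h : Gram R) (a b : V) :
    2 * R a b ≤ R a a + R b b := by
  obtain ⟨N, φ, S, h⟩ := h
  rw [h, h, h, Finset.mul_sum, ← Finset.sum_add_distrib]
  refine Finset.sum_le_sum fun i _ => ?_
  nlinarith [mul_self_nonneg (φ a i - φ b i)]

structure Env (C : Config) (G : C.V → C.V → ℤ) : Prop where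
  lin : C.IsLinear
  wc : C.WorkingConditions
  gram : Gram G
  self : ∀ u, G u u = C.adjw u + C.deg u
  adj : ∀ u v, C.graph.Adj u v → G u v = -1
  nadj : ∀ u v, u ≠ v → ¬ C.graph.Adj u v → G u v = 0

namespace Env

variable {C : Config} {G : C.V → C.V → ℤ}

theorem far (E : Env C G) {l : List C.V} (h : NB C.graph l) (i j : ℕ)
    (hij : i + 2 ≤ j := by decide) (hj : j < l.length := by simp) : G l[i] l[j] = 0 :=
  E.nadj _ _ (NB.far E.lin.2 h i j hij hj).1 (NB.far E.lin.2 h i j hij hj).2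

theorem far' (E : Env C G) {l : List C.V} (h : NB C.graph l) (i j : ℕ)
    (hij : i + 2 ≤ j := by decide) (hj : j < l.length := by simp) : G l[j] l[i] = 0 := by
  rw [E.gram.symm]; exact E.far h i j hij hj

theorem ne (E : Env C G) {l : List C.V} (h : NB C.graph l) (i j : ℕ)
    (hij : i + 2 ≤ j := by decide) (hj : j < l.length := by simp) : l[i] ≠ l[j] :=
  (NB.far E.lin.2 h i j hij hj).1

theorem nA (E : Env C G) {l : List C.V} (h : NB C.graph l) (i j : ℕ)
    (hij : i + 2 ≤ j := by decide) (hj : j < l.length := by simp) : ¬ C.graph.Adj l[i] l[j] :=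
  (NB.far E.lin.2 h i j hij hj).2

theorem or (E : Env C G) {u v : C.V} (h : u ≠ v) :
    G u v = 0 ∧ ¬ C.graph.Adj u v ∨ G u v = -1 ∧ C.graph.Adj u v := by
  by_cases ha : C.graph.Adj u v
  · exact Or.inr ⟨E.adj _ _ ha, ha⟩
  · exact Or.inl ⟨E.nadj _ _ h ha, ha⟩

theorem W0 (E : Env C G) (u : C.V) : 0 ≤ C.adjw u := by
  have h1 := E.wc.1 u
  have h2 := E.lin.1 u
  unfold Config.adjw
  omega

theorem W3 (E : Env C G) (u : C.V) : C.adjw u ≤ 3 := E.wc.2.1 u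

theorem d2 (E : Env C G) (u : C.V) : C.deg u ≤ 2 := E.lin.1 u

theorem w2 (E : Env C G) (u : C.V) : 2 ≤ G u u := by
  have h1 := E.wc.1 u
  rw [E.self]
  unfold Config.adjw
  omega

theorem uniq (E : Env C G) {u v : C.V} (hu : 1 < C.adjw u) (hv : 1 < C.adjw v) : u = v :=
  E.wc.2.2.1 u v hu hv

theorem adj_eq (E : Env C G) {p q r s : C.V} (hq : C.graph.Adj p q) (hr : C.graph.Adj p r)
    (hqr : q ≠ r) (hs : C.graph.Adj p s) : s = q ∨ s = r := by
  by_contra hcon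
  push Not at hcon
  have h1 : ({s, q, r} : Set C.V) ⊆ C.graph.neighborSet p := by
    intro y hy
    simp only [Set.mem_insert_iff, Set.mem_singleton_iff] at hy
    rcases hy with rfl | rfl | rfl <;> assumption
  have h2 := Set.ncard_le_ncard h1 (Set.toFinite _)
  rw [Set.ncard_eq_three.mpr ⟨s, q, r, hcon.1, hcon.2, hqr, rfl⟩] at h2
  have h3 := E.lin.1 p
  unfold Config.deg at h3
  omega

theorem deg_two (E : Env C G) {p q r : C.V} (hq : C.graph.Adj p q) (hr : C.graph.Adj p r)
    (hqr : q ≠ r) : C.deg p = 2 := by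
  have h1 : ({q, r} : Set C.V) ⊆ C.graph.neighborSet p := by
    intro y hy
    simp only [Set.mem_insert_iff, Set.mem_singleton_iff] at hy
    rcases hy with rfl | rfl <;> assumption
  have h2 := Set.ncard_le_ncard h1 (Set.toFinite _)
  rw [Set.ncard_pair hqr] at h2
  have h3 := E.lin.1 p
  unfold Config.deg at *
  omega

theorem deg_pos (_ : Env C G) {p q : C.V} (hq : C.graph.Adj p q) : 1 ≤ C.deg p := by
  unfold Config.deg
  rw [Nat.one_le_iff_ne_zero, Ne, Set.ncard_eq_zero (Set.toFinite _)]
  intro h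
  have : q ∈ C.graph.neighborSet p := hq
  rw [h] at this
  exact this

theorem nbr1 (_ : Env C G) {p : C.V} (h : 1 ≤ C.deg p) : ∃ q, C.graph.Adj p q := by
  unfold Config.deg at h
  obtain ⟨q, hq⟩ := Set.nonempty_of_ncard_ne_zero (s := C.graph.neighborSet p) (by omega)
  exact ⟨q, hq⟩

theorem nbr2 (_ : Env C G) {p : C.V} (h : C.deg p = 2) (q : C.V) :
    ∃ r, C.graph.Adj p r ∧ r ≠ q := by
  unfold Config.deg at h
  obtain ⟨r, hr, hne⟩ := Set.exists_ne_of_one_lt_ncard (s := C.graph.neighborSet p)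
    (by omega) q
  exact ⟨r, hr, hne⟩

theorem bad (_ : Env C G) {p q r : C.V} (hq : C.graph.Adj p q) (hr : C.graph.Adj p r)
    (hqr : q ≠ r) (h1 : 0 < C.adjw q) (h2 : 0 < C.adjw r) : C.IsBad p :=
  ⟨q, r, hqr, hq, hr, h1, h2⟩

/-- Forbidden patterns, as non-backtracking chains. -/
theorem forb (E : Env C G) {l : List C.V} (h : NB C.graph l) {pt : List ℤ}
    (hpt : pt ∈ forbiddenPatterns) (hl : l.map C.adjw = pt) : False := by
  refine E.wc.2.2.2.2.2.2.1 pt hpt ?_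
  have hlen : 3 < pt.length := by
    revert pt; intro pt hpt _
    fin_cases hpt <;> simp
  have hlen' : l.length = pt.length := by rw [← hl]; simp
  have hadj : ∀ (l : List C.V), NB C.graph l → ∀ i (hi : i + 1 < l.length),
      C.graph.Adj l[i] l[i+1] := by
    intro l
    induction l with
    | nil => intro _ i hi; simp at hi
    | cons a l ih =>
      intro h i hi
      match i with
      | 0 =>
        match l, h with
        | [], _ => simp at hi
        | [b], h => exact h
        | b :: c :: l, h => exact h.1
      | i + 1 =>
        simp only [List.getElem_cons_succ]
        exact ih h.tail i (by simpa using hi)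
  have hA := hadj l h
  have hd : l[0]'(by omega) = l[0]'(by omega) := rfl
  refine ⟨l.length - 1, fun i => l.getD i (l[0]'(by omega)), ⟨?_, ?_⟩, by omega, ?_⟩
  · intro i hi j hj hij
    have hi' : i < l.length := by omega
    have hj' : j < l.length := by omega
    simp only [List.getD_eq_getElem _ _ hi', List.getD_eq_getElem _ _ hj'] at hij
    by_contra hne
    rcases lt_or_gt_of_ne hne with hlt | hlt
    · by_cases h1 : j = i + 1
      · subst h1; exact (hA i (by omega)).ne hij
      · exact (NB.far E.lin.2 h i j (by omega) hj').1 hij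
    · by_cases h1 : i = j + 1
      · subst h1; exact (hA j (by omega)).ne hij.symm
      · exact (NB.far E.lin.2 h j i (by omega) hi').1 hij.symm
  · intro i hi
    have hi' : i < l.length := by omega
    have hj' : i + 1 < l.length := by omega
    simp only [List.getD_eq_getElem _ _ hi', List.getD_eq_getElem _ _ hj']
    exact hA i hj'
  · intro i
    have hi' : (i : ℕ) < l.length := by omega
    simp only [List.getD_eq_getElem _ _ hi']
    subst hl
    simp

end Env

structure Ch (C : Config) (a b x c d : C.V) : Prop where
  nb : NB C.graph [a, b, x, c, d]
  Wa : C.adjw a = 1 ∨ C.adjw a = 2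
  Wb : C.adjw b = 0
  Wx : C.adjw x = 1
  Wc : C.adjw c = 0 ∨ C.adjw c = 1
  Wd : C.adjw d = 1 ∨ C.adjw d = 2
  bad : ∀ p, C.IsBad p → p = b ∨ p = c

def Out {V : Type} (a b x c d p : V) : Prop := p ≠ a ∧ p ≠ b ∧ p ≠ x ∧ p ≠ c ∧ p ≠ d

namespace Ch
variable {C : Config} {G : C.V → C.V → ℤ} {a b x c d : C.V}

theorem ab (H : Ch C a b x c d) : C.graph.Adj a b := H.nb.1
theorem bx (H : Ch C a b x c d) : C.graph.Adj b x := H.nb.2.2.1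
theorem xc (H : Ch C a b x c d) : C.graph.Adj x c := H.nb.2.2.2.2.1
theorem cd (H : Ch C a b x c d) : C.graph.Adj c d := H.nb.2.2.2.2.2.2
theorem nax (H : Ch C a b x c d) : a ≠ x := H.nb.2.1
theorem nbc (H : Ch C a b x c d) : b ≠ c := H.nb.2.2.2.1
theorem nxd (H : Ch C a b x c d) : x ≠ d := H.nb.2.2.2.2.2.1

theorem rev (H : Ch C a b x c d) (hc : C.adjw c = 0) : Ch C d c x b a where
  nb := ⟨H.cd.symm, H.nxd.symm, H.xc.symm, H.nbc.symm, H.bx.symm, H.nax.symm, H.ab.symm⟩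
  Wa := H.Wd
  Wb := hc
  Wx := H.Wx
  Wc := Or.inl H.Wb
  Wd := H.Wa
  bad := fun p hp => (H.bad p hp).symm

theorem wb (H : Ch C a b x c d) (E : Env C G) : G b b = 2 := by
  rw [E.self, H.Wb, E.deg_two H.ab.symm H.bx H.nax]; rfl
theorem wx (H : Ch C a b x c d) (E : Env C G) : G x x = 3 := by
  rw [E.self, H.Wx, E.deg_two H.bx.symm H.xc H.nbc]; rfl
theorem wwc (H : Ch C a b x c d) (E : Env C G) : G c c = C.adjw c + 2 := by
  rw [E.self, E.deg_two H.xc.symm H.cd H.nxd]; rfl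
theorem wa (H : Ch C a b x c d) (E : Env C G) : C.adjw a + 1 ≤ G a a ∧ G a a ≤ C.adjw a + 2 := by
  have h1 := E.self a
  have h2 := E.d2 a
  have h3 := E.deg_pos H.ab
  omega
theorem wd (H : Ch C a b x c d) (E : Env C G) : C.adjw d + 1 ≤ G d d ∧ G d d ≤ C.adjw d + 2 := by
  have h1 := E.self d
  have h2 := E.d2 d
  have h3 := E.deg_pos H.cd.symm
  omega

theorem out_b (H : Ch C a b x c d) (E : Env C G) {p : C.V} (hp : Out a b x c d p) :
    G b p = 0 := by
  apply E.nadj _ _ hp.2.1.symm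
  intro h
  rcases E.adj_eq H.ab.symm H.bx H.nax h with h | h
  · exact hp.1 h
  · exact hp.2.2.1 h
theorem out_x (H : Ch C a b x c d) (E : Env C G) {p : C.V} (hp : Out a b x c d p) :
    G x p = 0 := by
  apply E.nadj _ _ hp.2.2.1.symm
  intro h
  rcases E.adj_eq H.bx.symm H.xc H.nbc h with h | h
  · exact hp.2.1 h
  · exact hp.2.2.2.1 h
theorem out_c (H : Ch C a b x c d) (E : Env C G) {p : C.V} (hp : Out a b x c d p) :
    G c p = 0 := by
  apply E.nadj _ _ hp.2.2.2.1.symm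
  intro h
  rcases E.adj_eq H.xc.symm H.cd H.nxd h with h | h
  · exact hp.2.2.1 h
  · exact hp.2.2.2.2 h

theorem nbo (H : Ch C a b x c d) {p : C.V} (hp : Out a b x c d p) : ¬ C.IsBad p := by
  intro h
  rcases H.bad p h with h | h
  · exact hp.2.1 h
  · exact hp.2.2.2.1 h

theorem nba (H : Ch C a b x c d) (E : Env C G) : ¬ C.IsBad a := by
  intro h
  rcases H.bad a h with h | h
  · exact H.ab.ne h
  · exact (E.ne H.nb 0 3) h
theorem nbd (H : Ch C a b x c d) (E : Env C G) : ¬ C.IsBad d := by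
  intro h
  rcases H.bad d h with h | h
  · exact (E.ne H.nb 1 4) h.symm
  · exact H.cd.ne h.symm

/-- An outer neighbour of an outer vertex not adjacent to the ends is outer. -/
theorem out_nbr (H : Ch C a b x c d) (E : Env C G) {p q : C.V} (hp : Out a b x c d p)
    (hpq : C.graph.Adj p q) (ha : q ≠ a) (hd : q ≠ d) : Out a b x c d q := by
  have h0 : G p q = -1 := E.adj _ _ hpq
  refine ⟨ha, ?_, ?_, ?_, hd⟩ <;> rintro rfl
  · have := H.out_b E hp; rw [E.gram.symm] at h0; omega
  · have := H.out_x E hp; rw [E.gram.symm] at h0; omega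
  · have := H.out_c E hp; rw [E.gram.symm] at h0; omega

/-- A further neighbour of `a` is outer. -/
theorem out_a (H : Ch C a b x c d) (E : Env C G) {z : C.V} (h : C.graph.Adj a z) (hz : z ≠ b) :
    Out a b x c d z ∧ NB C.graph [z, a, b, x, c, d] := by
  have h1 : NB C.graph [z, a, b, x, c, d] := ⟨h.symm, hz, H.nb⟩
  exact ⟨⟨h.ne.symm, hz, E.ne h1 0 3, E.ne h1 0 4, E.ne h1 0 5⟩, h1⟩

theorem out_d (H : Ch C a b x c d) (E : Env C G) {z : C.V} (h : C.graph.Adj d z) (hz : z ≠ c) :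
    Out a b x c d z ∧ NB C.graph [a, b, x, c, d, z] := by
  have h1 : NB C.graph [a, b, x, c, d, z] :=
    ⟨H.ab, H.nax, H.bx, H.nbc, H.xc, H.nxd, H.cd, hz.symm, h⟩
  exact ⟨⟨(E.ne h1 0 5).symm, (E.ne h1 1 5).symm, (E.ne h1 2 5).symm, hz, h.ne.symm⟩, h1⟩

end Ch

section

structure F1 (C : Config) (G : C.V → C.V → ℤ) (b x c : C.V) (e1 e2 e3 f g : C.V → ℤ)
    (R : C.V → C.V → ℤ) : Prop where
  gR : Gram R
  dec : ∀ p q, G p q = e1 p * e1 q + e2 p * e2 q + e3 p * e3 q + f p * f q + g p * g q + R p q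
  hx : ∀ p, G x p = e1 p + e2 p + e3 p
  hb : ∀ p, G b p = - e1 p + f p
  hc : ∀ p, G c p = - e2 p + g p

structure F3 (C : Config) (G : C.V → C.V → ℤ) (b x c : C.V) (e1 e2 e3 f h : C.V → ℤ)
    (R : C.V → C.V → ℤ) : Prop where
  gR : Gram R
  dec : ∀ p q, G p q = e1 p * e1 q + e2 p * e2 q + e3 p * e3 q + f p * f q + h p * h q + R p q
  hx : ∀ p, G x p = e1 p + e2 p + e3 p
  hb : ∀ p, G b p = - e1 p + f p
  hc : ∀ p, G c p = - e1 p - f p + h p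

structure F4 (C : Config) (G : C.V → C.V → ℤ) (b x c : C.V) (e1 e2 e3 f g h : C.V → ℤ)
    (R : C.V → C.V → ℤ) : Prop where
  gR : Gram R
  dec : ∀ p q, G p q = e1 p * e1 q + e2 p * e2 q + e3 p * e3 q + f p * f q + g p * g q +
    h p * h q + R p q
  hx : ∀ p, G x p = e1 p + e2 p + e3 p
  hb : ∀ p, G b p = - e1 p + f p
  hc : ∀ p, G c p = - e2 p + g p + h p

variable {C : Config} {G : C.V → C.V → ℤ} {a b x c d : C.V}

theorem frame_x (E : Env C G) (H : Ch C a b x c d) (v : C.V) (k : C.V → ℤ)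
    (R0 : C.V → C.V → ℤ) (hR0 : Gram R0) (h0 : ∀ p q, G p q = k p * k q + R0 p q)
    (kx : k x ≠ 0) (kv : k v ≠ 0) :
    ∃ (e1 e2 e3 : C.V → ℤ) (R : C.V → C.V → ℤ), Gram R ∧
      (∀ p q, G p q = e1 p * e1 q + e2 p * e2 q + e3 p * e3 q + R p q) ∧
      (e1 x = 1 ∧ e2 x = 1 ∧ e3 x = 1 ∧ R x x = 0) ∧
      (e1 v ≠ 0 ∨ e2 v ≠ 0 ∨ e3 v ≠ 0) := by
  have wx := H.wx E
  obtain ⟨e1, hd1, e1x, e1v⟩ : ∃ e1 : C.V → ℤ, (∀ p q, G p q = e1 p * e1 q + R0 p q) ∧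
      e1 x = 1 ∧ e1 v ≠ 0 := by
    have h1 := h0 x x
    have h2 := hR0.nonneg x
    have h3 := cut (k x)
    have h4 : k x = 1 ∨ k x = -1 := by omega
    rcases h4 with h4 | h4
    · exact ⟨k, h0, h4, kv⟩
    · exact ⟨fun p => - k p, fun p q => by rw [h0]; ring, by simp only; omega,
        by simp only; omega⟩
  have r0 : R0 x x = 2 := by have := hd1 x x; rw [e1x] at this; omega
  obtain ⟨e2, R1, gR1, e2x, r1, hd2, -⟩ := hR0.peel1 x (by omega) (by omega)
  obtain ⟨e3, R2, gR2, e3x, r2, hd3, -⟩ := gR1.peel1 x (by omega) (by omega)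
  exact ⟨e1, e2, e3, R2, gR2, fun p q => by rw [hd1, hd2, hd3]; ring,
    ⟨e1x, e2x, e3x, by omega⟩, Or.inl e1v⟩

theorem frame_b (E : Env C G) (H : Ch C a b x c d) (v : C.V) (k : C.V → ℤ)
    (R0 : C.V → C.V → ℤ) (hR0 : Gram R0) (h0 : ∀ p q, G p q = k p * k q + R0 p q)
    (kx : k x ≠ 0) (kv : k v ≠ 0) :
    ∃ (e1 e2 e3 f : C.V → ℤ) (R : C.V → C.V → ℤ), Gram R ∧
      (∀ p q, G p q = e1 p * e1 q + e2 p * e2 q + e3 p * e3 q + f p * f q + R p q) ∧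
      (∀ p, G x p = e1 p + e2 p + e3 p) ∧ (∀ p, G b p = - e1 p + f p) ∧
      (e1 v ≠ 0 ∨ e2 v ≠ 0 ∨ e3 v ≠ 0) := by
  obtain ⟨e1, e2, e3, R, gR, dec, ⟨x1, x2, x3, x4⟩, hv⟩ := frame_x E H v k R0 hR0 h0 kx kv
  have hx : ∀ p, G x p = e1 p + e2 p + e3 p := by
    intro p; rw [dec, x1, x2, x3, gR.zero x4]; ring
  have hxb := hx b
  rw [E.adj _ _ H.bx.symm] at hxb
  -- permute so that the coordinate of `b` is the first
  obtain ⟨e1, e2, e3, dec, hx, hv, b1, b2, b3, rb⟩ : ∃ (e1 e2 e3 : C.V → ℤ),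
      (∀ p q, G p q = e1 p * e1 q + e2 p * e2 q + e3 p * e3 q + R p q) ∧
      (∀ p, G x p = e1 p + e2 p + e3 p) ∧ (e1 v ≠ 0 ∨ e2 v ≠ 0 ∨ e3 v ≠ 0) ∧
      e1 b = -1 ∧ e2 b = 0 ∧ e3 b = 0 ∧ R b b = 1 := by
    have hbb := dec b b
    rw [H.wb E] at hbb
    have h1 := cut (e1 b)
    have h2 := cut (e2 b)
    have h3 := cut (e3 b)
    have h4 := gR.nonneg b
    have : (e1 b = -1 ∧ e2 b = 0 ∧ e3 b = 0) ∨ (e1 b = 0 ∧ e2 b = -1 ∧ e3 b = 0) ∨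
      (e1 b = 0 ∧ e2 b = 0 ∧ e3 b = -1) := by omega
    rcases this with ⟨h5, h6, h7⟩ | ⟨h5, h6, h7⟩ | ⟨h5, h6, h7⟩ <;> rw [h5, h6, h7] at hbb
    · exact ⟨e1, e2, e3, dec, hx, hv, h5, h6, h7, by omega⟩
    · exact ⟨e2, e1, e3, fun p q => by rw [dec]; ring, fun p => by rw [hx]; ring, by tauto,
        h6, h5, h7, by omega⟩
    · exact ⟨e3, e2, e1, fun p q => by rw [dec]; ring, fun p => by rw [hx]; ring, by tauto,
        h7, h6, h5, by omega⟩
  obtain ⟨f, R1, gR1, fb, r1, hd, -⟩ := gR.peel1 b (by omega) (by omega)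
  refine ⟨e1, e2, e3, f, R1, gR1, fun p q => by rw [dec, hd]; ring, hx, fun p => ?_, hv⟩
  rw [dec, hd, b1, b2, b3, fb, gR1.zero (by omega)]; ring

theorem num_c {p q r f R W : ℤ} (h1 : -1 = p + q + r) (h2 : 0 = -p + f) (hR : 0 ≤ R)
    (hW : W = 0 ∨ W = 1) (h : p * p + q * q + r * r + f * f + R = W + 2) :
    (p = -1 ∧ q = 0 ∧ r = 0 ∧ f = -1) ∨ (p = 0 ∧ q = -1 ∧ r = 0 ∧ f = 0) ∨
        (p = 0 ∧ q = 0 ∧ r = -1 ∧ f = 0) := by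
  have a1 := mul_self_nonneg p
  have a2 := mul_self_nonneg q
  have a3 := mul_self_nonneg r
  have a4 := mul_self_nonneg f
  rcases tri (c := p) (by omega) with rfl | rfl | rfl <;>
  rcases tri (c := q) (by omega) with rfl | rfl | rfl <;>
  rcases tri (c := f) (by omega) with rfl | rfl | rfl <;>
  rcases tri (c := r) (by omega) with rfl | rfl | rfl <;>
  omega

theorem frame (E : Env C G) (H : Ch C a b x c d) (v : C.V) (k : C.V → ℤ)
    (R0 : C.V → C.V → ℤ) (hR0 : Gram R0) (h0 : ∀ p q, G p q = k p * k q + R0 p q)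
    (kx : k x ≠ 0) (kv : k v ≠ 0) :
    ∃ (e1 e2 e3 f g h : C.V → ℤ) (R : C.V → C.V → ℤ),
      (e1 v ≠ 0 ∨ e2 v ≠ 0 ∨ e3 v ≠ 0) ∧
      ((C.adjw c = 0 ∧ F1 C G b x c e1 e2 e3 f g R) ∨
       (C.adjw c = 1 ∧ F3 C G b x c e1 e2 e3 f h R) ∨
       (C.adjw c = 1 ∧ F4 C G b x c e1 e2 e3 f g h R)) := by
  obtain ⟨e1, e2, e3, f, R, gR, dec, hx, hb, hv⟩ := frame_b E H v k R0 hR0 h0 kx kv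
  have hxc := hx c
  rw [E.adj _ _ H.xc] at hxc
  have hbc := hb c
  have q1 : G b c = 0 := E.far H.nb 1 3
  have q2 : G c a = 0 := E.far' H.nb 0 3
  rw [q1] at hbc
  have hba := hb a
  rw [E.adj _ _ H.ab.symm] at hba
  have hcc := dec c c
  have wc := H.wwc E
  have Wc := H.Wc
  have h4 := gR.nonneg c
  have key := num_c hxc hbc h4 Wc (by rw [← wc, hcc])
  rcases Wc with Wc | Wc
  · -- weight two
    obtain ⟨e2, e3, dec, hx, hv, c1, c2, c3, c4⟩ : ∃ (e2 e3 : C.V → ℤ),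
      (∀ p q, G p q = e1 p * e1 q + e2 p * e2 q + e3 p * e3 q + f p * f q + R p q) ∧
      (∀ p, G x p = e1 p + e2 p + e3 p) ∧ (e1 v ≠ 0 ∨ e2 v ≠ 0 ∨ e3 v ≠ 0) ∧
      e1 c = 0 ∧ e2 c = -1 ∧ e3 c = 0 ∧ f c = 0 := by
      rcases key with ⟨h5, h6, h7, h8⟩ | ⟨h5, h6, h7, h8⟩ | ⟨h5, h6, h7, h8⟩
      · exfalso
        have hac := dec c a
        have h9 : R c c = 0 := by rw [h5, h6, h7, h8] at hcc; omega
        rw [h5, h6, h7, h8, gR.zero h9, q2] at hac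
        omega
      · exact ⟨e2, e3, dec, hx, hv, h5, h6, h7, h8⟩
      · exact ⟨e3, e2, fun p q => by rw [dec]; ring, fun p => by rw [hx]; ring, by tauto,
          h5, h7, h6, h8⟩
    have hcc := dec c c
    have r : R c c = 1 := by rw [c1, c2, c3, c4] at hcc; omega
    obtain ⟨g, R1, gR1, gc, r1, hd, -⟩ := gR.peel1 c (by omega) (by omega)
    refine ⟨e1, e2, e3, f, g, g, R1, hv, Or.inl ⟨Wc, gR1, fun p q => by rw [dec, hd]; ring, hx,
      hb, fun p => ?_⟩⟩
    rw [dec, hd, c1, c2, c3, c4, gc, gR1.zero (by omega)]; ring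
  · by_cases e1c : e1 c = 0
    · obtain ⟨e2, e3, dec, hx, hv, c1, c2, c3, c4⟩ : ∃ (e2 e3 : C.V → ℤ),
        (∀ p q, G p q = e1 p * e1 q + e2 p * e2 q + e3 p * e3 q + f p * f q + R p q) ∧
        (∀ p, G x p = e1 p + e2 p + e3 p) ∧ (e1 v ≠ 0 ∨ e2 v ≠ 0 ∨ e3 v ≠ 0) ∧
        e1 c = 0 ∧ e2 c = -1 ∧ e3 c = 0 ∧ f c = 0 := by
        rcases key.resolve_left (fun hh => by omega) with ⟨h5, h6, h7, h8⟩ | ⟨h5, h6, h7, h8⟩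
        · exact ⟨e2, e3, dec, hx, hv, h5, h6, h7, h8⟩
        · exact ⟨e3, e2, fun p q => by rw [dec]; ring, fun p => by rw [hx]; ring, by tauto,
            h5, h7, h6, h8⟩
      have hcc := dec c c
      have r : R c c = 2 := by rw [c1, c2, c3, c4] at hcc; omega
      obtain ⟨g, R1, gR1, gc, r1, hd, -⟩ := gR.peel1 c (by omega) (by omega)
      obtain ⟨h, R2, gR2, hc, r2, hd2, -⟩ := gR1.peel1 c (by omega) (by omega)
      refine ⟨e1, e2, e3, f, g, h, R2, hv, Or.inr (Or.inr ⟨Wc, gR2,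
        fun p q => by rw [dec, hd, hd2]; ring, hx, hb, fun p => ?_⟩)⟩
      rw [dec, hd, hd2, c1, c2, c3, c4, gc, hc, gR2.zero (by omega)]; ring
    · have h5 : e1 c = -1 ∧ e2 c = 0 ∧ e3 c = 0 ∧ f c = -1 := by omega
      obtain ⟨c1, c2, c3, c4⟩ := h5
      have r : R c c = 1 := by rw [c1, c2, c3, c4] at hcc; omega
      obtain ⟨h, R1, gR1, gc, r1, hd, -⟩ := gR.peel1 c (by omega) (by omega)
      refine ⟨e1, e2, e3, f, h, h, R1, hv, Or.inr (Or.inl ⟨Wc, gR1,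
        fun p q => by rw [dec, hd]; ring, hx, hb, fun p => ?_⟩)⟩
      rw [dec, hd, c1, c2, c3, c4, gc, gR1.zero (by omega)]; ring

end

section

variable {C : Config} {G : C.V → C.V → ℤ} {a b x c d : C.V}

theorem num4 {e1 e2 e3 f g h R w : ℤ} (hx : 0 = e1 + e2 + e3) (hb : 0 = -e1 + f)
    (hc : 0 = -e2 + g + h) (hR : 0 ≤ R) (hw : w ≤ 3)
    (dec : w = e1 * e1 + e2 * e2 + e3 * e3 + f * f + g * g + h * h + R) :
    (e1 = 0 ∧ e2 = 0 ∧ e3 = 0 ∧ f = 0 ∧ h = -g) ∨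
    (w = 3 ∧ ∃ s : ℤ, (s = 1 ∨ s = -1) ∧ R = 0 ∧
      ((e1 = s ∧ e2 = 0 ∧ e3 = -s ∧ f = s ∧ g = 0 ∧ h = 0) ∨
       (e1 = 0 ∧ e2 = s ∧ e3 = -s ∧ f = 0 ∧ g = s ∧ h = 0) ∨
       (e1 = 0 ∧ e2 = s ∧ e3 = -s ∧ f = 0 ∧ g = 0 ∧ h = s))) := by
  have a1 := mul_self_nonneg e1
  have a2 := mul_self_nonneg e2
  have a3 := mul_self_nonneg e3
  have a4 := mul_self_nonneg f
  have a5 := mul_self_nonneg g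
  have a6 := mul_self_nonneg h
  obtain rfl : f = e1 := by omega
  obtain rfl : e3 = - f - e2 := by omega
  obtain rfl : e2 = g + h := by omega
  rcases tri (c := f) (by omega) with rfl | rfl | rfl <;>
  rcases tri (c := g) (by omega) with rfl | rfl | rfl <;>
  rcases tri (c := h) (by omega) with rfl | rfl | rfl <;>
  first
  | (exfalso; omega)
  | (left; omega)
  | (right; exact ⟨by omega, 1, by omega⟩)
  | (right; exact ⟨by omega, -1, by omega⟩)

section
variable {e1 e2 e3 f g h : C.V → ℤ} {R : C.V → C.V → ℤ}

theorem F4.swap (F : F4 C G b x c e1 e2 e3 f g h R) : F4 C G b x c e1 e2 e3 f h g R :=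
  ⟨F.gR, fun p q => by rw [F.dec]; ring, F.hx, F.hb, fun p => by rw [F.hc]; ring⟩

theorem c4_W (E : Env C G) (H : Ch C a b x c d) (hWc : C.adjw c = 1) {p : C.V} (hp : p ≠ d) :
    C.adjw p ≤ 1 := by
  by_contra hcon
  have Wd := H.Wd
  have Wx := H.Wx
  have hbad : C.IsBad c := E.bad H.xc.symm H.cd H.nxd (by omega) (by omega)
  have h1 := E.wc.2.2.2.1 p c (by omega) hbad hWc
  rcases E.adj_eq H.xc.symm H.cd H.nxd h1 with rfl | h2
  · omega
  · exact hp h2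

theorem c4_out (E : Env C G) (H : Ch C a b x c d) (hWc : C.adjw c = 1)
    (F : F4 C G b x c e1 e2 e3 f g h R) {p : C.V} (hp : Out a b x c d p) :
    (e1 p = 0 ∧ e2 p = 0 ∧ e3 p = 0 ∧ f p = 0 ∧ h p = -g p) ∨
    (G p p = 3 ∧ ∃ s : ℤ, (s = 1 ∨ s = -1) ∧ R p p = 0 ∧
      ((e1 p = s ∧ e2 p = 0 ∧ e3 p = -s ∧ f p = s ∧ g p = 0 ∧ h p = 0) ∨
       (e1 p = 0 ∧ e2 p = s ∧ e3 p = -s ∧ f p = 0 ∧ g p = s ∧ h p = 0) ∨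
       (e1 p = 0 ∧ e2 p = s ∧ e3 p = -s ∧ f p = 0 ∧ g p = 0 ∧ h p = s))) := by
  have h1 := F.hx p
  have h2 := F.hb p
  have h3 := F.hc p
  rw [H.out_x E hp] at h1
  rw [H.out_b E hp] at h2
  rw [H.out_c E hp] at h3
  have h4 := c4_W E H hWc hp.2.2.2.2
  have h5 := E.self p
  have h6 := E.d2 p
  exact num4 h1 h2 h3 (F.gR.nonneg p) (by omega) (F.dec p p)

theorem c4_ii (E : Env C G) (H : Ch C a b x c d) (hWc : C.adjw c = 1)
    (F : F4 C G b x c e1 e2 e3 f g h R) {v : C.V} (hv : Out a b x c d v) : e1 v = 0 := by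
  rcases c4_out E H hWc F hv with h0 | ⟨hw, s, hs, hR, h0 | h0 | h0⟩
  · exact h0.1
  · exfalso
    obtain ⟨v1, v2, v3, v4, v5, v6⟩ := h0
    have ex : ∀ p, G v p = s * (e1 p - e3 p + f p) := by
      intro p; rw [F.dec, v1, v2, v3, v4, v5, v6, F.gR.zero hR]; ring
    have h4 := c4_W E H hWc hv.2.2.2.2
    have h5 := E.self v
    have h6 := E.d2 v
    have dv : C.deg v = 2 := by omega
    have ad : C.graph.Adj v a := by
      rcases E.or hv.1 with ⟨h7, -⟩ | h7
      · exfalso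
        rw [ex] at h7
        have h8 : e1 a - e3 a + f a = 0 := by rcases hs with rfl | rfl <;> omega
        have q1 : G x a = 0 := E.far' H.nb 0 2
        have q2 : G b a = -1 := E.adj _ _ H.ab.symm
        have q3 : G c a = 0 := E.far' H.nb 0 3
        rw [F.hx] at q1
        rw [F.hb] at q2
        rw [F.hc] at q3
        have q4 := F.dec a a
        have q5 := F.gR.nonneg a
        have q6 := E.self a
        have q7 := E.d2 a
        have q8 : C.adjw a ≤ 1 := c4_W E H hWc (E.ne H.nb 0 4 : a ≠ d)
        have c1 := cut (e1 a)
        have c2 := cut (e2 a)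
        have c3 := cut (e3 a)
        have c4 := cut (f a)
        have c5 := cut (g a)
        have c6 := cut (h a)
        omega
      · exact h7.2
    obtain ⟨u, hvu, hua⟩ := E.nbr2 dv a
    have nb : NB C.graph [v, a, b, x, c, d] := ⟨ad, hv.2.1, H.nb⟩
    have hu : Out a b x c d u := H.out_nbr E hv hvu hua
      (by rintro rfl; exact (E.nA nb 0 5) hvu)
    have h7 := E.adj _ _ hvu
    rw [ex] at h7
    have h8 := E.self u
    have h9 := E.d2 u
    have Wa := H.Wa
    rcases c4_out E H hWc F hu with h0 | ⟨hw, t, ht, hR, h0⟩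
    · obtain ⟨u1, u2, u3, u4, u5⟩ := h0
      rw [u1, u3, u4] at h7
      omega
    · exact H.nbo hv (E.bad ad hvu hua.symm (by omega) (by omega))
  · exact h0.1
  · exact h0.1

theorem c4_iii (E : Env C G) (H : Ch C a b x c d) (hWc : C.adjw c = 1)
    (F : F4 C G b x c e1 e2 e3 f g h R) {v : C.V} (hv : Out a b x c d v) {s : ℤ}
    (hs : s = 1 ∨ s = -1) (hR : R v v = 0) (hw : G v v = 3)
    (h0 : e1 v = 0 ∧ e2 v = s ∧ e3 v = -s ∧ f v = 0 ∧ g v = s ∧ h v = 0) : False := by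
  obtain ⟨v1, v2, v3, v4, v5, v6⟩ := h0
  have ex : ∀ p, G v p = s * (e2 p - e3 p + g p) := by
    intro p; rw [F.dec, v1, v2, v3, v4, v5, v6, F.gR.zero hR]; ring
  have h4 := c4_W E H hWc hv.2.2.2.2
  have h5 := E.self v
  have h6 := E.d2 v
  have dv : C.deg v = 2 := by omega
  have nd : ¬ C.graph.Adj v d := by
    intro hh
    exact H.nbd E (E.bad H.cd.symm hh.symm hv.2.2.2.1.symm (by omega) (by omega))
  have hvd := E.nadj _ _ hv.2.2.2.2 nd
  rw [ex] at hvd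
  have hvd' : e2 d - e3 d + g d = 0 := by rcases hs with rfl | rfl <;> omega
  -- neighbours of `v`
  have nbr : ∀ u, C.graph.Adj v u → u ≠ a → Out a b x c d u ∧ g u = -s ∧ h u = s ∧
      e1 u = 0 ∧ e2 u = 0 ∧ e3 u = 0 ∧ f u = 0 := by
    intro u hvu hua
    have hu : Out a b x c d u := H.out_nbr E hv hvu hua (by rintro rfl; exact nd hvu)
    have h7 := E.adj _ _ hvu
    rw [ex] at h7
    have h8 := c4_ii E H hWc F hu
    rcases c4_out E H hWc F hu with h0 | ⟨hw, t, ht, hR, h0⟩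
    · obtain ⟨u1, u2, u3, u4, u5⟩ := h0
      rw [u2, u3] at h7
      refine ⟨hu, ?_, ?_, u1, u2, u3, u4⟩ <;> rcases hs with rfl | rfl <;> omega
    · exfalso
      rcases hs with rfl | rfl <;> omega
  have exu : ∀ u, C.graph.Adj v u → u ≠ a → C.adjw u = 0 → ∀ p, G u p = - s * (g p - h p) := by
    intro u hvu hua hW
    obtain ⟨hu, u1, u2, u3, u4, u5, u6⟩ := nbr u hvu hua
    have h1 := E.self u
    have h2 := E.d2 u
    have h3 := F.dec u u
    have h7 := F.gR.nonneg u
    rw [u1, u2, u3, u4, u5, u6] at h3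
    have h8 : R u u = 0 := by rcases hs with rfl | rfl <;> omega
    intro p
    rw [F.dec, u1, u2, u3, u4, u5, u6, F.gR.zero h8]
    ring
  by_cases ad : C.graph.Adj v a
  · obtain ⟨u, hvu, hua⟩ := E.nbr2 dv a
    have Wa := H.Wa
    have W0 := E.W0 u
    have Wu : C.adjw u = 0 := by
      by_contra hcon
      exact H.nbo hv (E.bad ad hvu hua.symm (by omega) (by omega))
    have nb : NB C.graph [u, v, a, b, x, c, d] := ⟨hvu.symm, hua, ad, hv.2.1, H.nb⟩
    have q : G u d = 0 := E.far nb 0 6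
    rw [exu u hvu hua Wu] at q
    have q' : g d = h d := by rcases hs with rfl | rfl <;> omega
    have q1 : G x d = 0 := E.far H.nb 2 4
    have q2 : G b d = 0 := E.far H.nb 1 4
    have q3 : G c d = -1 := E.adj _ _ H.cd
    rw [F.hx] at q1
    rw [F.hb] at q2
    rw [F.hc] at q3
    have q4 := F.dec d d
    have q5 := F.gR.nonneg d
    have q6 := H.wd E
    have q7 := H.Wd
    have c1 := cut (e1 d)
    have c2 := cut (e2 d)
    have c3 := cut (e3 d)
    have c4 := cut (f d)
    have c5 := cut (g d)
    have c6 := cut (h d)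
    omega
  · obtain ⟨u1, hu1⟩ := E.nbr1 (by omega : 1 ≤ C.deg v)
    obtain ⟨u2, hu2, hne⟩ := E.nbr2 dv u1
    have n1 : u1 ≠ a := by rintro rfl; exact ad hu1
    have n2 : u2 ≠ a := by rintro rfl; exact ad hu2
    have nb : NB C.graph [u1, v, u2] := ⟨hu1.symm, hne.symm, hu2⟩
    have q : G u1 u2 = 0 := E.far nb 0 2
    have q' : G u2 u1 = 0 := E.far' nb 0 2
    obtain ⟨-, g1, g2, -⟩ := nbr u1 hu1 n1
    obtain ⟨-, g3, g4, -⟩ := nbr u2 hu2 n2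
    have W1 := E.W0 u1
    have W2 := E.W0 u2
    by_cases z1 : C.adjw u1 = 0
    · rw [exu u1 hu1 n1 z1, g3, g4] at q
      rcases hs with rfl | rfl <;> omega
    · by_cases z2 : C.adjw u2 = 0
      · rw [exu u2 hu2 n2 z2, g1, g2] at q'
        rcases hs with rfl | rfl <;> omega
      · exact H.nbo hv (E.bad hu1 hu2 hne.symm (by omega) (by omega))

theorem case4 (E : Env C G) (H : Ch C a b x c d) (hWc : C.adjw c = 1)
    (F : F4 C G b x c e1 e2 e3 f g h R) {v : C.V} (hv : Out a b x c d v)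
    (hm : e1 v ≠ 0 ∨ e2 v ≠ 0 ∨ e3 v ≠ 0) : False := by
  have h1 := c4_ii E H hWc F hv
  rcases c4_out E H hWc F hv with h0 | ⟨hw, s, hs, hR, h0 | h0 | h0⟩
  · omega
  · omega
  · exact c4_iii E H hWc F hv hs hR hw h0
  · exact c4_iii E H hWc F.swap hv hs hR hw (by tauto)

end

end

section

variable {C : Config} {G : C.V → C.V → ℤ} {a b x c d : C.V}

theorem num3a {e1 e2 e3 f h R w : ℤ} (hx : 0 = e1 + e2 + e3) (hb : -1 = -e1 + f)
    (hc : 0 = -e1 - f + h) (hR : 0 ≤ R) (hw : w ≤ 3)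
    (dec : w = e1 * e1 + e2 * e2 + e3 * e3 + f * f + h * h + R) :
    (e1 = 1 ∧ e2 = -1 ∧ e3 = 0 ∧ f = 0 ∧ h = 1 ∧ R = 0) ∨
    (e1 = 1 ∧ e2 = 0 ∧ e3 = -1 ∧ f = 0 ∧ h = 1 ∧ R = 0) ∨
    (e1 = 0 ∧ e2 = 0 ∧ e3 = 0 ∧ f = -1 ∧ h = -1) := by
  have a1 := mul_self_nonneg e1
  have a2 := mul_self_nonneg e2
  have a3 := mul_self_nonneg e3
  have a4 := mul_self_nonneg f
  have a5 := mul_self_nonneg h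
  obtain rfl : f = e1 - 1 := by omega
  obtain rfl : e3 = - e1 - e2 := by omega
  obtain rfl : h = e1 + (e1 - 1) := by omega
  rcases tri (c := e1) (by omega) with rfl | rfl | rfl <;>
  rcases tri (c := e2) (by omega) with rfl | rfl | rfl <;> omega

theorem num3d {e1 e2 e3 f h R w : ℤ} (hx : 0 = e1 + e2 + e3) (hb : 0 = -e1 + f)
    (hc : -1 = -e1 - f + h) (hR : 0 ≤ R) (hw : w ≤ 4)
    (dec : w = e1 * e1 + e2 * e2 + e3 * e3 + f * f + h * h + R) :
    (e1 = 1 ∧ e2 + e3 = -1 ∧ (e2 = 0 ∨ e3 = 0) ∧ f = 1 ∧ h = 1 ∧ R = 0) ∨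
    (e1 = 0 ∧ e3 = -e2 ∧ f = 0 ∧ h = -1) := by
  have a1 := mul_self_nonneg e1
  have a2 := cut e2
  have a3 := mul_self_nonneg e3
  have a4 := mul_self_nonneg f
  have a5 := mul_self_nonneg h
  obtain rfl : f = e1 := by omega
  obtain rfl : e3 = - f - e2 := by omega
  obtain rfl : h = f + f - 1 := by omega
  rcases tri (c := f) (by omega) with rfl | rfl | rfl
  · omega
  · omega
  · rcases tri (c := e2) (by omega) with rfl | rfl | rfl <;> omega

section
variable {e1 e2 e3 f g h : C.V → ℤ} {R : C.V → C.V → ℤ}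

theorem F3.swap (F : F3 C G b x c e1 e2 e3 f h R) : F3 C G b x c e1 e3 e2 f h R :=
  ⟨F.gR, fun p q => by rw [F.dec]; ring, fun p => by rw [F.hx]; ring, F.hb, F.hc⟩

theorem c3_out (E : Env C G) (H : Ch C a b x c d) (hWc : C.adjw c = 1)
    (F : F3 C G b x c e1 e2 e3 f h R) {p : C.V} (hp : Out a b x c d p) :
    G p p ≤ 3 ∧ e1 p = 0 ∧ f p = 0 ∧ h p = 0 ∧ e3 p = - e2 p := by
  have h1 := F.hx p
  have h2 := F.hb p
  have h3 := F.hc p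
  rw [H.out_x E hp] at h1
  rw [H.out_b E hp] at h2
  rw [H.out_c E hp] at h3
  have h4 := c4_W E H hWc hp.2.2.2.2
  have h5 := E.self p
  have h6 := E.d2 p
  have h7 := F.dec p p
  have h8 := F.gR.nonneg p
  have c1 := cut (e1 p)
  have c2 := cut (e2 p)
  have c3 := cut (e3 p)
  have c4 := cut (f p)
  have c5 := cut (h p)
  have : e1 p = 0 := by omega
  refine ⟨?_, ?_, ?_, ?_, ?_⟩ <;> omega

theorem c3_A1 (E : Env C G) (H : Ch C a b x c d) (hWc : C.adjw c = 1)
    (F : F3 C G b x c e1 e2 e3 f h R) {v : C.V} (hv : Out a b x c d v)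
    (hm : e2 v ≠ 0)
    (ha : e1 a = 1 ∧ e2 a = -1 ∧ e3 a = 0 ∧ f a = 0 ∧ h a = 1 ∧ R a a = 0)
    (hd : (e1 d = 1 ∧ e2 d + e3 d = -1 ∧ (e2 d = 0 ∨ e3 d = 0) ∧ f d = 1 ∧ h d = 1 ∧ R d d = 0) ∨
    (e1 d = 0 ∧ e3 d = -e2 d ∧ f d = 0 ∧ h d = -1)) : False := by
  obtain ⟨a1, a2, a3, a4, a5, a6⟩ := ha
  have ex : ∀ p, G a p = e1 p - e2 p + h p := by
    intro p; rw [F.dec, a1, a2, a3, a4, a5, F.gR.zero a6]; ring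
  have q : G a d = 0 := E.far H.nb 0 4
  rw [ex] at q
  obtain ⟨d1, d3, d4, d5⟩ := hd.resolve_left (by omega)
  have d2 : e2 d = -1 := by omega
  obtain ⟨wv, v1, v2, v3, v4⟩ := c3_out E H hWc F hv
  have av : G a v = -1 ∧ C.graph.Adj a v := (E.or hv.1.symm).resolve_left (by
    rintro ⟨h1, -⟩; rw [ex] at h1; omega)
  have nb : NB C.graph [v, a, b, x, c, d] := ⟨av.2.symm, hv.2.1, H.nb⟩
  have q2 : G v d = 0 := E.far nb 0 5
  have q3 := av.1
  rw [ex] at q3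
  have v5 : e2 v = 1 := by omega
  have v6 : e3 v = -1 := by omega
  have d6 : e3 d = 1 := by omega
  have q4 := F.dec v v
  have q5 := F.dec d d
  have q6 := F.gR.diff v d
  rw [F.dec, v1, v2, v3, v5, v6, d2, d6] at q2
  rw [v1, v2, v3, v5, v6] at q4
  rw [d1, d2, d6, d4, d5] at q5
  have q7 := H.wd E
  have q8 := H.Wd
  omega

theorem c3_W1 (E : Env C G) (H : Ch C a b x c d) (hWc : C.adjw c = 1)
    (F : F3 C G b x c e1 e2 e3 f h R) {k : C.V → ℤ} {R1 : C.V → C.V → ℤ} (gR1 : Gram R1)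
    (dec : ∀ p q, G p q = e1 p * e1 q + e2 p * e2 q + e3 p * e3 q + f p * f q + h p * h q +
      k p * k q + R1 p q)
    (ex : ∀ p, G a p = - f p - h p + k p) (kd : k d = -1)
    (hd : e1 d = 0 ∧ e3 d = -e2 d ∧ f d = 0 ∧ h d = -1)
    {z : C.V} (az : C.graph.Adj a z) (zb : z ≠ b) (hW : C.adjw d = 1) : False := by
  obtain ⟨d1, d2, d3, d4⟩ := hd
  obtain ⟨hz, nbz⟩ := H.out_a E az zb
  obtain ⟨wz, z1, z2, z3, z4⟩ := c3_out E H hWc F hz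
  have kz : k z = -1 := by have := E.adj _ _ az; rw [ex] at this; omega
  have wd := H.wd E
  have decd := dec d d
  have rd := gR1.nonneg d
  have d5 : e2 d = 0 := by
    rw [d1, d2, d3, d4, kd] at decd
    have := cut (e2 d)
    have : e2 d * e2 d = - e2 d * - e2 d := by ring
    omega
  have d6 : e3 d = 0 := by omega
  rw [d1, d5, d6, d3, d4, kd] at decd
  have dz : G d z = 0 := E.far' nbz 0 5
  rw [dec, d1, d5, d6, d3, d4, kd, z3, kz] at dz
  have rd0 : R1 d d ≠ 0 := fun h0 => by rw [gR1.zero h0] at dz; omega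
  obtain ⟨l, R2, gR2, ld, r2, dec2, -⟩ := gR1.peel1 d (by omega) (by omega)
  have exd : ∀ p, G d p = - h p - k p + l p := by
    intro p; rw [dec, dec2, d1, d5, d6, d3, d4, kd, ld, gR2.zero (by omega)]; ring
  have lz : l z = -1 := by
    have : G d z = 0 := E.far' nbz 0 5
    rw [exd] at this; omega
  have dd : C.deg d = 2 := by have := E.self d; omega
  obtain ⟨y, dy, yc⟩ := E.nbr2 dd c
  obtain ⟨hy, nby⟩ := H.out_d E dy yc
  have nb2 : NB C.graph [z, a, b, x, c, d, y] := ⟨az.symm, zb, nby⟩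
  obtain ⟨wy, y1, y2, y3, y4⟩ := c3_out E H hWc F hy
  have ky : k y = 0 := by
    have : G a y = 0 := E.far nby 0 5
    rw [ex] at this; omega
  have ly : l y = -1 := by
    have := E.adj _ _ dy
    rw [exd] at this; omega
  have Wy0 := E.W0 y
  have Wy : C.adjw y = 0 := by
    by_contra hcon
    exact H.nbd E (E.bad H.cd.symm dy yc.symm (by omega) (by omega))
  have sy := E.self y
  have dy2 := E.d2 y
  have wwy := E.w2 y
  have decy := dec y y
  rw [dec2, y1, y2, y3, ky, ly] at decy
  have ry := gR2.nonneg y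
  have cy2 := cut (e2 y)
  have cy3 := cut (e3 y)
  have ey2 : e2 y = 0 := by omega
  have ey3 : e3 y = 0 := by omega
  rw [ey2, ey3] at decy
  obtain ⟨m, R3, gR3, my, r3, dec3, -⟩ := gR2.peel1 y (by omega) (by omega)
  have exy : ∀ p, G y p = - l p + m p := by
    intro p; rw [dec, dec2, dec3, y1, y2, y3, ky, ly, ey2, ey3, my, gR3.zero (by omega)]; ring
  have mz : m z = -1 := by
    have : G y z = 0 := E.far' nb2 0 6
    rw [exy] at this; omega
  have decz := dec z z
  rw [dec2, dec3, z1, z2, z3, kz, lz, mz] at decz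
  have rz := gR3.nonneg z
  have cz2 := cut (e2 z)
  have cz3 := cut (e3 z)
  have ez2 : e2 z = 0 := by omega
  have ez3 : e3 z = 0 := by omega
  have rz0 : R3 z z = 0 := by omega
  obtain ⟨t, yt, td⟩ := E.nbr2 (by omega : C.deg y = 2) d
  have nb3 : NB C.graph [z, a, b, x, c, d, y, t] :=
    ⟨az.symm, zb, H.ab, H.nax, H.bx, H.nbc, H.xc, H.nxd, H.cd, yc.symm, dy, td.symm, yt⟩
  have ht : Out a b x c d t := ⟨(E.ne nb3 1 7).symm, (E.ne nb3 2 7).symm, (E.ne nb3 3 7).symm,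
    (E.ne nb3 4 7).symm, td⟩
  obtain ⟨wt, t1, t2, t3, t4⟩ := c3_out E H hWc F ht
  have g1 : G a t = 0 := E.far nb3 1 7
  have g2 : G d t = 0 := E.far nb3 5 7
  have g3 : G y t = -1 := E.adj _ _ yt
  have g4 : G z t = 0 := E.far nb3 0 7
  rw [ex] at g1
  rw [exd] at g2
  rw [exy] at g3
  rw [dec, dec2, dec3, z1, z2, z3, kz, lz, mz, ez2, ez3, gR3.zero rz0] at g4
  omega

theorem c3_W2 (E : Env C G) (H : Ch C a b x c d) (hWc : C.adjw c = 1)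
    (F : F3 C G b x c e1 e2 e3 f h R) {k : C.V → ℤ} {R1 : C.V → C.V → ℤ} (gR1 : Gram R1)
    (dec : ∀ p q, G p q = e1 p * e1 q + e2 p * e2 q + e3 p * e3 q + f p * f q + h p * h q +
      k p * k q + R1 p q)
    (ex : ∀ p, G a p = - f p - h p + k p) (kd : k d = -1)
    (hd : e1 d = 0 ∧ e3 d = -e2 d ∧ f d = 0 ∧ h d = -1)
    {z : C.V} (az : C.graph.Adj a z) (zb : z ≠ b) (hW : C.adjw d = 2) : False := by
  obtain ⟨d1, d2, d3, d4⟩ := hd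
  obtain ⟨hz, nbz⟩ := H.out_a E az zb
  obtain ⟨wz, z1, z2, z3, z4⟩ := c3_out E H hWc F hz
  have kz : k z = -1 := by have := E.adj _ _ az; rw [ex] at this; omega
  have wd := H.wd E
  have Wz : C.adjw z = 0 := by
    have h1 := E.W0 z
    have h2 := c4_W E H hWc hz.2.2.2.2
    by_contra hcon
    have h3 : C.adjw z = 1 := by omega
    have Wa : C.adjw a = 1 := by
      have h1 := H.Wa
      have h2 : C.adjw a ≤ 1 := c4_W E H hWc (E.ne H.nb 0 4 : a ≠ d)
      omega
    exact E.forb nbz (pt := [1, 1, 0, 1, 1, 2]) (by simp [forbiddenPatterns])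
      (by simp [h3, Wa, H.Wb, H.Wx, hWc, hW])
  have sz := E.self z
  have dz := E.d2 z
  have wwz := E.w2 z
  have decz := dec z z
  rw [z1, z2, z3, kz] at decz
  have rz := gR1.nonneg z
  have cz2 := cut (e2 z)
  have cz3 := cut (e3 z)
  have ez2 : e2 z = 0 := by omega
  have ez3 : e3 z = 0 := by omega
  rw [ez2, ez3] at decz
  obtain ⟨l, R2, gR2, lz, r2, dec2, -⟩ := gR1.peel1 z (by omega) (by omega)
  have exz : ∀ p, G z p = - k p + l p := by
    intro p; rw [dec, dec2, z1, z2, z3, kz, lz, ez2, ez3, gR2.zero (by omega)]; ring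
  have ld : l d = -1 := by
    have : G z d = 0 := E.far nbz 0 5
    rw [exz] at this; omega
  have decd := dec d d
  have rd := gR2.nonneg d
  rw [dec2] at decd
  have cd2 := cut (e2 d)
  have cd3 := cut (e3 d)
  rw [d1, d3, d4, kd, ld] at decd
  have d5 : e2 d = 0 := by omega
  have d6 : e3 d = 0 := by omega
  rw [d5, d6] at decd
  obtain ⟨s, zs, sa⟩ := E.nbr2 (by omega : C.deg z = 2) a
  have nbs : NB C.graph [s, z, a, b, x, c, d] := ⟨zs.symm, sa, nbz⟩
  have hs : Out a b x c d s := ⟨sa, E.ne nbs 0 3, E.ne nbs 0 4, E.ne nbs 0 5, E.ne nbs 0 6⟩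
  obtain ⟨ws, s1, s2, s3, s4⟩ := c3_out E H hWc F hs
  have ks : k s = 0 := by
    have : G a s = 0 := E.far' nbs 0 2
    rw [ex] at this; omega
  have ls : l s = -1 := by
    have := E.adj _ _ zs
    rw [exz] at this; omega
  have gds : G d s = 0 := E.far' nbs 0 6
  have gds' := gds
  rw [dec, dec2, d1, d5, d6, d3, d4, kd, ld, s3, ks, ls] at gds
  have rd0 : R2 d d ≠ 0 := fun h0 => by rw [gR2.zero h0] at gds; omega
  obtain ⟨m, R3, gR3, md, r3, dec3, -⟩ := gR2.peel1 d (by omega) (by omega)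
  have exd : ∀ p, G d p = - h p - k p - l p + m p := by
    intro p; rw [dec, dec2, dec3, d1, d5, d6, d3, d4, kd, ld, md, gR3.zero (by omega)]; ring
  have ms : m s = -1 := by rw [exd] at gds'; omega
  have dd : C.deg d = 2 := by have := E.self d; omega
  obtain ⟨y, dy, yc⟩ := E.nbr2 dd c
  obtain ⟨hy, nby⟩ := H.out_d E dy yc
  have nb2 : NB C.graph [s, z, a, b, x, c, d, y] := ⟨zs.symm, sa, az.symm, zb, nby⟩
  obtain ⟨wy, y1, y2, y3, y4⟩ := c3_out E H hWc F hy
  have ky : k y = 0 := by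
    have : G a y = 0 := E.far nby 0 5
    rw [ex] at this; omega
  have ly : l y = 0 := by
    have : G z y = 0 := E.far nb2 1 7
    rw [exz] at this; omega
  have my : m y = -1 := by
    have := E.adj _ _ dy
    rw [exd] at this; omega
  have Wy0 := E.W0 y
  have Wy : C.adjw y = 0 := by
    by_contra hcon
    exact H.nbd E (E.bad H.cd.symm dy yc.symm (by omega) (by omega))
  have sy := E.self y
  have dy2 := E.d2 y
  have wwy := E.w2 y
  have decy := dec y y
  rw [dec2, dec3, y1, y2, y3, ky, ly, my] at decy
  have ry := gR3.nonneg y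
  have cy2 := cut (e2 y)
  have cy3 := cut (e3 y)
  have ey2 : e2 y = 0 := by omega
  have ey3 : e3 y = 0 := by omega
  rw [ey2, ey3] at decy
  obtain ⟨n, R4, gR4, ny, r4, dec4, -⟩ := gR3.peel1 y (by omega) (by omega)
  have exy : ∀ p, G y p = - m p + n p := by
    intro p
    rw [dec, dec2, dec3, dec4, y1, y2, y3, ky, ly, ey2, ey3, my, ny, gR4.zero (by omega)]; ring
  have ns : n s = -1 := by
    have : G y s = 0 := E.far' nb2 0 7
    rw [exy] at this; omega
  have decs := dec s s
  rw [dec2, dec3, dec4, s1, s2, s3, ks, ls, ms, ns] at decs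
  have rs := gR4.nonneg s
  have cs2 := cut (e2 s)
  have cs3 := cut (e3 s)
  have es2 : e2 s = 0 := by omega
  have es3 : e3 s = 0 := by omega
  have rs0 : R4 s s = 0 := by omega
  obtain ⟨t, yt, td⟩ := E.nbr2 (by omega : C.deg y = 2) d
  have nb3 : NB C.graph [s, z, a, b, x, c, d, y, t] :=
    ⟨zs.symm, sa, az.symm, zb, H.ab, H.nax, H.bx, H.nbc, H.xc, H.nxd, H.cd, yc.symm, dy,
      td.symm, yt⟩
  have ht : Out a b x c d t := ⟨(E.ne nb3 2 8).symm, (E.ne nb3 3 8).symm, (E.ne nb3 4 8).symm,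
    (E.ne nb3 5 8).symm, td⟩
  obtain ⟨wt, t1, t2, t3, t4⟩ := c3_out E H hWc F ht
  have g1 : G a t = 0 := E.far nb3 2 8
  have g2 : G d t = 0 := E.far nb3 6 8
  have g3 : G y t = -1 := E.adj _ _ yt
  have g4 : G s t = 0 := E.far nb3 0 8
  have g5 : G z t = 0 := E.far nb3 1 8
  rw [ex] at g1
  rw [exz] at g5
  rw [exd] at g2
  rw [exy] at g3
  rw [dec, dec2, dec3, dec4, s1, s2, s3, ks, ls, ms, ns, es2, es3, gR4.zero rs0] at g4
  omega

theorem case3 (E : Env C G) (H : Ch C a b x c d) (hWc : C.adjw c = 1)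
    (F : F3 C G b x c e1 e2 e3 f h R) {v : C.V} (hv : Out a b x c d v)
    (hm : e1 v ≠ 0 ∨ e2 v ≠ 0 ∨ e3 v ≠ 0) : False := by
  obtain ⟨wv, v1, v2, v3, v4⟩ := c3_out E H hWc F hv
  have q1 : G x a = 0 := E.far' H.nb 0 2
  have q2 : G b a = -1 := E.adj _ _ H.ab.symm
  have q3 : G c a = 0 := E.far' H.nb 0 3
  have r1 : G x d = 0 := E.far H.nb 2 4
  have r2 : G b d = 0 := E.far H.nb 1 4
  have r3 : G c d = -1 := E.adj _ _ H.cd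
  have ha := F.hx a
  have ha' := F.hb a
  have ha'' := F.hc a
  have hd := F.hx d
  have hd' := F.hb d
  have hd'' := F.hc d
  rw [q1] at ha
  rw [q2] at ha'
  rw [q3] at ha''
  rw [r1] at hd
  rw [r2] at hd'
  rw [r3] at hd''
  have Wa : C.adjw a = 1 := by
    have h1 := H.Wa
    have h2 : C.adjw a ≤ 1 := c4_W E H hWc (E.ne H.nb 0 4 : a ≠ d)
    omega
  have wa := H.wa E
  have wd := H.wd E
  have Wd := H.Wd
  have kd := num3d hd hd' hd'' (F.gR.nonneg d) (by omega) (F.dec d d)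
  have gad : G a d = 0 := E.far H.nb 0 4
  rcases num3a ha ha' ha'' (F.gR.nonneg a) (by omega) (F.dec a a) with h1 | h1 | h1
  · exact c3_A1 E H hWc F hv (by omega) h1 kd
  · exact c3_A1 E H hWc F.swap hv (by omega) (by tauto) (by omega)
  · obtain ⟨a1, a2, a3, a4, a5⟩ := h1
    rcases kd with ⟨d1, d2, d3, d4, d5, d6⟩ | kd
    · rw [F.dec, a1, a2, a3, a4, a5, d4, d5, F.gR.zero' d6] at gad
      omega
    · have deca := F.dec a a
      rw [F.dec, a1, a2, a3, a4, a5, kd.2.2.1, kd.2.2.2] at gad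
      rw [a1, a2, a3, a4, a5] at deca
      have ra := F.gR.nonneg a
      have ra0 : R a a ≠ 0 := fun h0 => by rw [F.gR.zero h0] at gad; omega
      obtain ⟨k, R1, gR1, ka, r1, dec1, -⟩ := F.gR.peel1 a (by omega) (by omega)
      have dec : ∀ p q, G p q = e1 p * e1 q + e2 p * e2 q + e3 p * e3 q + f p * f q + h p * h q +
          k p * k q + R1 p q := by
        intro p q; rw [F.dec, dec1]; ring
      have ex : ∀ p, G a p = - f p - h p + k p := by
        intro p; rw [dec, a1, a2, a3, a4, a5, ka, gR1.zero (by omega)]; ring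
      have kd1 : k d = -1 := by
        rw [dec1, ka, gR1.zero (by omega)] at gad; omega
      obtain ⟨z, az, zb⟩ := E.nbr2 (by have := E.self a; omega : C.deg a = 2) b
      rcases Wd with Wd | Wd
      · exact c3_W1 E H hWc F gR1 dec ex kd1 kd az zb Wd
      · exact c3_W2 E H hWc F gR1 dec ex kd1 kd az zb Wd

end

end

section
variable {C : Config} {G : C.V → C.V → ℤ} {a b x c d : C.V}

theorem num1o {e1 e2 e3 f g R w : ℤ} (hx : 0 = e1 + e2 + e3) (hb : 0 = -e1 + f)
    (hc : 0 = -e2 + g) (hR : 0 ≤ R) (hw : w ≤ 5)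
    (dec : w = e1 * e1 + e2 * e2 + e3 * e3 + f * f + g * g + R) :
    (e1 = 0 ∧ e2 = 0 ∧ e3 = 0 ∧ f = 0 ∧ g = 0 ∧ R = w) ∨
    ((e1 = 1 ∨ e1 = -1) ∧ e2 = 0 ∧ e3 = -e1 ∧ f = e1 ∧ g = 0 ∧ R = w - 3) ∨
    ((e2 = 1 ∨ e2 = -1) ∧ e1 = 0 ∧ e3 = -e2 ∧ f = 0 ∧ g = e2 ∧ R = w - 3) ∨
    ((e1 = 1 ∨ e1 = -1) ∧ e2 = -e1 ∧ e3 = 0 ∧ f = e1 ∧ g = -e1 ∧ R = w - 4) := by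
  obtain rfl : f = e1 := by omega
  obtain rfl : g = e2 := by omega
  obtain rfl : e3 = - f - g := by omega
  have a1 := mul_self_nonneg f
  have a2 := mul_self_nonneg g
  have a3 := mul_self_nonneg (- f - g)
  rcases tri (c := f) (by omega) with rfl | rfl | rfl <;>
  rcases tri (c := g) (by omega) with rfl | rfl | rfl <;> omega

theorem num1a {e1 e2 e3 f g R w : ℤ} (hx : 0 = e1 + e2 + e3) (hb : -1 = -e1 + f)
    (hc : 0 = -e2 + g) (hR : 0 ≤ R) (hw : w ≤ 4)
    (dec : w = e1 * e1 + e2 * e2 + e3 * e3 + f * f + g * g + R) :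
    (e1 = 1 ∧ e2 = 0 ∧ e3 = -1 ∧ f = 0 ∧ g = 0 ∧ R = w - 2) ∨
    (e1 = 1 ∧ e2 = -1 ∧ e3 = 0 ∧ f = 0 ∧ g = -1 ∧ R = w - 3) ∨
    (e1 = 0 ∧ e2 = 0 ∧ e3 = 0 ∧ f = -1 ∧ g = 0 ∧ R = w - 1) ∨
    ((e2 = 1 ∨ e2 = -1) ∧ e1 = 0 ∧ e3 = -e2 ∧ f = -1 ∧ g = e2 ∧ R = 0 ∧ w = 4) := by
  obtain rfl : f = e1 - 1 := by omega
  obtain rfl : g = e2 := by omega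
  obtain rfl : e3 = - e1 - g := by omega
  have a1 := cut e1
  have a2 := mul_self_nonneg g
  have a3 := mul_self_nonneg (- e1 - g)
  have a4 := mul_self_nonneg (e1 - 1)
  have a5 : (e1 - 1) * (e1 - 1) = e1 * e1 - 2 * e1 + 1 := by ring
  rcases (show e1 = -1 ∨ e1 = 0 ∨ e1 = 1 ∨ e1 = 2 by omega) with rfl | rfl | rfl | rfl <;>
  rcases tri (c := g) (by omega) with rfl | rfl | rfl <;> omega

variable {e1 e2 e3 f g h : C.V → ℤ} {R : C.V → C.V → ℤ}

theorem F1.rev (F : F1 C G b x c e1 e2 e3 f g R) : F1 C G c x b e2 e1 e3 g f R :=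
  ⟨F.gR, fun p q => by rw [F.dec]; ring, fun p => by rw [F.hx]; ring, F.hc, F.hb⟩

theorem Out.rev {p : C.V} (h : Out a b x c d p) : Out d c x b a p :=
  ⟨h.2.2.2.2, h.2.2.2.1, h.2.2.1, h.2.1, h.1⟩

theorem c1_out (E : Env C G) (H : Ch C a b x c d)
    (F : F1 C G b x c e1 e2 e3 f g R) {p : C.V} (hp : Out a b x c d p) :
    (e1 p = 0 ∧ e2 p = 0 ∧ e3 p = 0 ∧ f p = 0 ∧ g p = 0 ∧ R p p = G p p) ∨
    ((e1 p = 1 ∨ e1 p = -1) ∧ e2 p = 0 ∧ e3 p = -e1 p ∧ f p = e1 p ∧ g p = 0 ∧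
      R p p = G p p - 3) ∨
    ((e2 p = 1 ∨ e2 p = -1) ∧ e1 p = 0 ∧ e3 p = -e2 p ∧ f p = 0 ∧ g p = e2 p ∧
      R p p = G p p - 3) ∨
    ((e1 p = 1 ∨ e1 p = -1) ∧ e2 p = -e1 p ∧ e3 p = 0 ∧ f p = e1 p ∧ g p = -e1 p ∧
      R p p = G p p - 4) := by
  have h1 := F.hx p
  have h2 := F.hb p
  have h3 := F.hc p
  rw [H.out_x E hp] at h1
  rw [H.out_b E hp] at h2
  rw [H.out_c E hp] at h3
  have h5 := E.self p
  have h6 := E.d2 p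
  have h7 := E.W3 p
  exact num1o h1 h2 h3 (F.gR.nonneg p) (by omega) (F.dec p p)

theorem c1_a (E : Env C G) (H : Ch C a b x c d)
    (F : F1 C G b x c e1 e2 e3 f g R) :
    (e1 a = 1 ∧ e2 a = 0 ∧ e3 a = -1 ∧ f a = 0 ∧ g a = 0 ∧ R a a = G a a - 2) ∨
    (e1 a = 1 ∧ e2 a = -1 ∧ e3 a = 0 ∧ f a = 0 ∧ g a = -1 ∧ R a a = G a a - 3) ∨
    (e1 a = 0 ∧ e2 a = 0 ∧ e3 a = 0 ∧ f a = -1 ∧ g a = 0 ∧ R a a = G a a - 1) ∨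
    ((e2 a = 1 ∨ e2 a = -1) ∧ e1 a = 0 ∧ e3 a = -e2 a ∧ f a = -1 ∧ g a = e2 a ∧ R a a = 0 ∧
      G a a = 4) := by
  have q1 : G x a = 0 := E.far' H.nb 0 2
  have q2 : G b a = -1 := E.adj _ _ H.ab.symm
  have q3 : G c a = 0 := E.far' H.nb 0 3
  have h1 := F.hx a
  have h2 := F.hb a
  have h3 := F.hc a
  rw [q1] at h1
  rw [q2] at h2
  rw [q3] at h3
  have wa := H.wa E
  have Wa := H.Wa
  exact num1a h1 h2 h3 (F.gR.nonneg a) (by omega) (F.dec a a)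

/-- `a` of type A4 is impossible -/
theorem c1_A4 (E : Env C G) (H : Ch C a b x c d) (hWc : C.adjw c = 0)
    (F : F1 C G b x c e1 e2 e3 f g R)
    (ha : (e2 a = 1 ∨ e2 a = -1) ∧ e1 a = 0 ∧ e3 a = -e2 a ∧ f a = -1 ∧ g a = e2 a ∧ R a a = 0 ∧
      G a a = 4) : e2 a = -1 := by
  obtain ⟨a2, a1, a3, a4, a5, a6, a7⟩ := ha
  have wa := H.wa E
  have Wa := H.Wa
  have wd := H.wd E
  have Wd := H.Wd
  have Wd' : C.adjw d = 1 := by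
    by_contra hcon
    have hne : a ≠ d := E.ne H.nb 0 4
    exact hne (E.uniq (by omega) (by omega))
  by_contra hcon
  have a2 : e2 a = 1 := by omega
  rw [a2] at a3 a5
  have ex : ∀ p, G a p = - f p + e2 p - e3 p + g p := by
    intro p; rw [F.dec, a1, a2, a3, a4, a5, F.gR.zero a6]; ring
  have gad : G a d = 0 := E.far H.nb 0 4
  rw [ex] at gad
  have := c1_a E (H.rev hWc) F.rev
  omega

theorem c1_L1 (E : Env C G) (H : Ch C a b x c d) (hWc : C.adjw c = 0)
    (F : F1 C G b x c e1 e2 e3 f g R) {v : C.V} (hv : Out a b x c d v) (hW : C.adjw v ≤ 1)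
    (h : e1 v ≠ 0) (h2 : e2 v = 0) : False := by
  obtain ⟨v1, v2, v3, v4, v5, v6⟩ : ((e1 v = 1 ∨ e1 v = -1) ∧ e2 v = 0 ∧ e3 v = -e1 v ∧
      f v = e1 v ∧ g v = 0 ∧ R v v = G v v - 3) := by
    have := c1_out E H F hv
    omega
  have sv := E.self v
  have dv := E.d2 v
  have rv := F.gR.nonneg v
  have rv0 : R v v = 0 := by omega
  have exv : (∀ p, G v p = e1 p - e3 p + f p) ∨ (∀ p, G v p = -(e1 p - e3 p + f p)) := by
    rcases v1 with v1 | v1 <;> rw [v1] at v3 v4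
    · left; intro p; rw [F.dec, v1, v2, v3, v4, v5, F.gR.zero rv0]; ring
    · right; intro p; rw [F.dec, v1, v2, v3, v4, v5, F.gR.zero rv0]; ring
  have va : C.graph.Adj v a := by
    rcases E.or hv.1 with ⟨h1, -⟩ | ⟨h1, h3⟩
    · exfalso
      rcases c1_a E H F with ha | ha | ha | ha
      · rcases exv with ex | ex <;> rw [ex] at h1 <;> omega
      · rcases exv with ex | ex <;> rw [ex] at h1 <;> omega
      · rcases exv with ex | ex <;> rw [ex] at h1 <;> omega
      · have := c1_A4 E H hWc F ha
        rcases exv with ex | ex <;> rw [ex] at h1 <;> omega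
    · exact h3
  obtain ⟨u, vu, ua⟩ := E.nbr2 (by omega : C.deg v = 2) a
  have nb : NB C.graph [u, v, a, b, x, c, d] := ⟨vu.symm, ua, va, hv.2.1, H.nb⟩
  have hu : Out a b x c d u := ⟨ua, E.ne nb 0 3, E.ne nb 0 4, E.ne nb 0 5, E.ne nb 0 6⟩
  have gu := E.adj _ _ vu
  have ou := c1_out E H F hu
  have ru := F.gR.nonneg u
  have su := E.self u
  have du := E.d2 u
  have Wu : 0 < C.adjw u := by
    rcases exv with ex | ex <;> rw [ex] at gu <;> omega
  have Wa := H.Wa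
  exact H.nbo hv (E.bad vu va ua Wu (by omega))

theorem c1_L1' (E : Env C G) (H : Ch C a b x c d) (hWc : C.adjw c = 0)
    (F : F1 C G b x c e1 e2 e3 f g R) {p : C.V} (hp : Out a b x c d p) (hW : C.adjw p ≤ 1) :
    e1 p = 0 ∧ e2 p = 0 ∧ e3 p = 0 ∧ f p = 0 ∧ g p = 0 ∧ R p p = G p p := by
  rcases c1_out E H F hp with h | h | h | h
  · exact h
  · exact (c1_L1 E H hWc F hp hW (by omega) h.2.1).elim
  · exact (c1_L1 E (H.rev hWc) H.Wb F.rev hp.rev hW (by omega) h.2.1).elim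
  · have sv := E.self p
    have dv := E.d2 p
    have rv := F.gR.nonneg p
    omega

end

section

structure K (C : Config) (G : C.V → C.V → ℤ) (a b x c d v : C.V) (R : C.V → C.V → ℤ) : Prop where
  E : Env C G
  H : Ch C a b x c d
  gR : Gram R
  hv : Out a b x c d v
  Wa : C.adjw a = 1
  Wd : C.adjw d = 1
  va : ¬ C.graph.Adj v a
  vd : ¬ C.graph.Adj v d
  W2 : 2 ≤ C.adjw v
  oth : ∀ p, Out a b x c d p → p ≠ v → C.adjw p ≤ 1 ∧ ∀ q, G p q = R p q

variable {C : Config} {G : C.V → C.V → ℤ} {a b x c d v : C.V} {R : C.V → C.V → ℤ}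

theorem K.nbv (k : K C G a b x c d v R) {u : C.V} (h : C.graph.Adj v u) :
    Out a b x c d u ∧ u ≠ v ∧ C.adjw u ≤ 1 ∧ ∀ q, G u q = R u q := by
  have h1 := k.H.out_nbr k.E k.hv h (fun e => k.va (e ▸ h)) (fun e => k.vd (e ▸ h))
  exact ⟨h1, h.ne.symm, k.oth u h1 h.ne.symm⟩

theorem K.iv (k : K C G a b x c d v R) (h : C.adjw v = 3) {p q : C.V} (hpq : C.graph.Adj p q)
    (hp : C.adjw p = 1) (hq : C.adjw q = 1) : False :=
  k.E.wc.2.2.2.2.1 ⟨v, h⟩ p q hpq hp hq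

/-- `A3, D1` -/
theorem c1_AD (k : K C G a b x c d v R) {s : ℤ} (hs : s = 1 ∨ s = -1)
    (rvv : R v v = G v v - 3) (raa : R a a = G a a - 1) (rdd : R d d = G d d - 2)
    (rva : R v a = s) (rvd : R v d = -s) (rad : R a d = 0) : False := by
  have E := k.E
  have H := k.H
  have wa := H.wa E
  have wd := H.wd E
  have Wa := k.Wa
  have Wd := k.Wd
  have sv := E.self v
  have dv := E.d2 v
  have Wv := E.W3 v
  have rd0 : R d d ≠ 0 := fun h => by rw [k.gR.zero' h] at rvd; omega
  have rd := k.gR.nonneg d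
  obtain ⟨l, R1, gR1, ld, r1, dec1, -⟩ := k.gR.peel1 d (by omega) (by omega)
  have r1d : R1 d d = 0 := by omega
  have lv : l v = -s := by rw [dec1, ld, gR1.zero' r1d] at rvd; omega
  have la : l a = 0 := by rw [dec1, ld, gR1.zero' r1d] at rad; omega
  have r1v := gR1.nonneg v
  have h1 := dec1 v v
  have r1va : R1 v a = s := by rw [dec1, la] at rva; omega
  have r1v0 : R1 v v ≠ 0 := fun h => by rw [gR1.zero h] at r1va; omega
  have h2 : l v * l v = 1 := by rw [lv]; rcases hs with rfl | rfl <;> rfl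
  have W3 : C.adjw v = 3 := by omega
  obtain ⟨m, R2, gR2, mv, r2, dec2, -⟩ := gR1.peel1 v (by omega) (by omega)
  have ma : m a = s := by rw [dec2, mv, gR2.zero (by omega)] at r1va; omega
  obtain ⟨z, dz, zc⟩ := E.nbr2 (by have := E.self d; omega : C.deg d = 2) c
  obtain ⟨hz, nb⟩ := H.out_d E dz zc
  have zv : z ≠ v := by rintro rfl; exact k.vd dz.symm
  obtain ⟨Wz, gz⟩ := k.oth z hz zv
  have Wz0 := E.W0 z
  have Wz1 : C.adjw z = 0 := by
    by_contra hcon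
    exact k.iv W3 dz Wd (by omega)
  have sz := E.self z
  have ddz := E.d2 z
  have wz := E.w2 z
  have lz : l z = -1 := by
    have := E.adj _ _ dz.symm
    rw [gz, dec1, ld, gR1.zero' r1d] at this; omega
  have gzz := gz z
  rw [dec1, dec2, lz] at gzz
  have rz := gR2.nonneg z
  have gza : G z a = 0 := E.far' nb 0 5
  rw [gz, dec1, dec2, lz, la, ma] at gza
  have cz := cut (m z)
  have mz : m z = 0 := by
    by_contra hcon
    rw [gR2.zero (by omega)] at gza
    rcases hs with rfl | rfl <;> omega
  have gzv := gz v
  rw [dec1, dec2, lz, lv, mv, mz, gR2.zero' (by omega)] at gzv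
  rcases E.or zv with ⟨h, -⟩ | ⟨-, h⟩
  · rcases hs with rfl | rfl <;> omega
  · exact H.nbo hz (E.bad dz.symm h k.hv.2.2.2.2.symm (by omega) (by omega))

/-- `A3`, norm four, adjusted weight two -/
theorem c1_P1W2 (k : K C G a b x c d v R) {s : ℤ} (hs : s = 1 ∨ s = -1)
    {m n : C.V → ℤ} {R2 : C.V → C.V → ℤ} (g2 : Gram R2)
    (dec : ∀ p q, R p q = m p * m q + n p * n q + R2 p q)
    (mv : m v = 1) (nv : n v = 0) (r2v : R2 v v = 0)
    (exa : ∀ p, R p a = s * m p + n p) {u1 u2 : C.V} (h1 : C.graph.Adj v u1)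
    (h2 : C.graph.Adj v u2) (hne : u1 ≠ u2) (hW : C.adjw u1 = 0) : False := by
  have E := k.E
  have H := k.H
  obtain ⟨ho1, nv1, -, gg1⟩ := k.nbv h1
  obtain ⟨ho2, nv2, -, gg2⟩ := k.nbv h2
  have nb : NB C.graph [u1, v, u2] := ⟨h1.symm, hne, h2⟩
  have g12 : G u1 u2 = 0 := E.far nb 0 2
  have m1 : m u1 = -1 := by
    have := E.adj _ _ h1.symm
    rw [gg1, dec, mv, nv, g2.zero' r2v] at this; omega
  have m2 : m u2 = -1 := by
    have := E.adj _ _ h2.symm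
    rw [gg2, dec, mv, nv, g2.zero' r2v] at this; omega
  have su := E.self u1
  have du := E.d2 u1
  have wu := E.w2 u1
  have guu := gg1 u1
  rw [dec, m1] at guu
  rw [gg1, dec, m1, m2] at g12
  have ru := g2.nonneg u1
  have cu := cut (n u1)
  have o1 := E.or ho1.1
  have o2 := E.or ho2.1
  rw [gg1, exa, m1] at o1
  rw [gg2, exa, m2] at o2
  have na : ¬ C.graph.Adj u1 a := fun h =>
    H.nbo ho1 (E.bad h1.symm h k.hv.1 (by have := k.W2; omega) (by have := k.Wa; omega))
  have o1' := o1.resolve_right (fun h => na h.2)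
  have : n u1 = s := by omega
  rw [g2.zero (by rcases hs with rfl | rfl <;> rw [this] at guu <;> omega), this] at g12
  rcases hs with rfl | rfl <;> omega

/-- `A3`, norm four, adjusted weight three -/
theorem c1_P1W3 (k : K C G a b x c d v R) {s : ℤ} (hs : s = 1 ∨ s = -1)
    {m n : C.V → ℤ} {R2 : C.V → C.V → ℤ} (g2 : Gram R2)
    (dec : ∀ p q, R p q = m p * m q + n p * n q + R2 p q)
    (mv : m v = 1) (nv : n v = 0) (r2v : R2 v v = 0) (r2a : R2 a a = 0)
    (exa : ∀ p, R p a = s * m p + n p) {u z : C.V} (vu : C.graph.Adj v u)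
    (az : C.graph.Adj a z) (zb : z ≠ b) (W3 : C.adjw v = 3) : False := by
  have E := k.E
  have H := k.H
  have Wa := k.Wa
  obtain ⟨hu, uv, Wu, gu⟩ := k.nbv vu
  obtain ⟨hz, nbz⟩ := H.out_a E az zb
  have zv : z ≠ v := by rintro rfl; exact k.va az.symm
  obtain ⟨Wz, gz⟩ := k.oth z hz zv
  have Wz0 := E.W0 z
  have Wz1 : C.adjw z = 0 := by
    by_contra hcon
    exact k.iv W3 az Wa (by omega)
  have zv' : ¬ C.graph.Adj z v := fun h =>
    H.nbo hz (E.bad az.symm h k.hv.1.symm (by omega) (by omega))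
  have sz := E.self z
  have ddz := E.d2 z
  have wz := E.w2 z
  have mz : m z = 0 := by
    have := E.nadj _ _ zv zv'
    rw [gz, dec, mv, nv, g2.zero' r2v] at this; omega
  have nz : n z = -1 := by
    have := E.adj _ _ az.symm
    rw [gz, exa, mz] at this; omega
  have gzz := gz z
  rw [dec, mz, nz] at gzz
  obtain ⟨q, R3, g3, qz, r3, dec3, hq⟩ := g2.peel1 z (by omega) (by omega)
  have exz : ∀ p, R p z = - n p + q p := by
    intro p; rw [dec, dec3, mz, nz, qz, g3.zero' (by omega)]; ring
  obtain ⟨qv, r3v⟩ := hq v r2v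
  obtain ⟨y, zy, ya⟩ := E.nbr2 (by omega : C.deg z = 2) a
  have nby : NB C.graph [y, z, a, b, x, c, d] := ⟨zy.symm, ya, nbz⟩
  have hy : Out a b x c d y := ⟨ya, E.ne nby 0 3, E.ne nby 0 4, E.ne nby 0 5, E.ne nby 0 6⟩
  have yv : y ≠ v := by rintro rfl; exact zv' zy
  obtain ⟨Wy, gy⟩ := k.oth y hy yv
  have Wy0 := E.W0 y
  have yv' : ¬ C.graph.Adj y v := fun h => by
    have nb : NB C.graph [a, z, y, v] := ⟨az, ya.symm, zy, zv, h⟩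
    rcases (by omega : C.adjw y = 0 ∨ C.adjw y = 1) with h0 | h0
    · exact E.forb nb (pt := [1, 0, 0, 3]) (by simp [forbiddenPatterns])
        (by simp [Wa, Wz1, h0, W3])
    · exact E.forb nb (pt := [1, 0, 1, 3]) (by simp [forbiddenPatterns])
        (by simp [Wa, Wz1, h0, W3])
  have my : m y = 0 := by
    have := E.nadj _ _ yv yv'
    rw [gy, dec, mv, nv, g2.zero' r2v] at this; omega
  have ny : n y = 0 := by
    have : G y a = 0 := E.far nby 0 2
    rw [gy, exa, my] at this; omega
  have qy : q y = -1 := by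
    have := E.adj _ _ zy.symm
    rw [gy, exz] at this; omega
  have mu : m u = -1 := by
    have := E.adj _ _ vu.symm
    rw [gu, dec, mv, nv, g2.zero' r2v] at this; omega
  have uz : u ≠ z := by rintro rfl; exact zv' vu.symm
  have uy : u ≠ y := by rintro rfl; exact yv' vu.symm
  have nu : n u = s := by
    have : G u a = 0 := E.nadj _ _ hu.1 (fun h => by
      rcases E.adj_eq H.ab az zb.symm h.symm with h | h
      · exact hu.2.1 h
      · exact uz h)
    rw [gu, exa, mu] at this; omega
  have qu : q u = s := by
    have : G u z = 0 := E.nadj _ _ uz (fun h => by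
      rcases E.adj_eq az.symm zy ya.symm h.symm with h | h
      · exact hu.1 h
      · exact uy h)
    rw [gu, exz] at this; omega
  have su := E.self u
  have du := E.d2 u
  have guu := gu u
  have gyu := gy u
  have r3u := g3.nonneg u
  rw [dec, dec3, mu, nu, qu] at guu
  have hss : s * s = 1 := by rcases hs with rfl | rfl <;> rfl
  rw [dec, dec3, my, ny, qy, qu, g3.zero' (by omega)] at gyu
  rcases E.or uy.symm with ⟨h, -⟩ | ⟨-, yu⟩
  · rcases hs with rfl | rfl <;> omega
  have Wu1 : C.adjw u = 1 := by omega
  have Wy1 : C.adjw y = 0 := by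
    by_contra hcon
    exact k.iv W3 yu (by omega) Wu1
  have nb : NB C.graph [v, u, y, z, a] := ⟨vu, yv.symm, yu.symm, uz, zy.symm, ya, az.symm⟩
  exact E.forb nb (pt := [3, 1, 0, 0, 1]) (by simp [forbiddenPatterns])
        (by simp [Wa, Wz1, Wu1, Wy1, W3])

/-- `A3`, norm four -/
theorem c1_P1 (k : K C G a b x c d v R) {s : ℤ} (hs : s = 1 ∨ s = -1)
    (rvv : R v v = G v v - 3) (raa : R a a = G a a - 1) (wv : G v v = 4)
    (rva : R v a = s) : False := by
  have E := k.E
  have H := k.H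
  have wa := H.wa E
  have Wa := k.Wa
  have sv := E.self v
  have dv := E.d2 v
  have Wv := E.W3 v
  have W2 := k.W2
  obtain ⟨m, R1, gR1, mv, r1, dec1, -⟩ := k.gR.peel1 v (by omega) (by omega)
  have r1v : R1 v v = 0 := by omega
  have ma : m a = s := by rw [dec1, mv, gR1.zero r1v] at rva; omega
  have hss : s * s = 1 := by rcases hs with rfl | rfl <;> rfl
  have h1 := dec1 a a
  rw [ma] at h1
  have r1a := gR1.nonneg a
  have sa := E.self a
  obtain ⟨u, vu⟩ := E.nbr1 (by omega : 1 ≤ C.deg v)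
  obtain ⟨hu, uv, Wu, gu⟩ := k.nbv vu
  have mu : m u = -1 := by
    have := E.adj _ _ vu.symm
    rw [gu, dec1, mv, gR1.zero' r1v] at this; omega
  have da : C.deg a = 2 := by
    by_contra hcon
    have h2 : R1 a a = 0 := by omega
    have h3 := gu a
    rw [dec1, mu, ma, gR1.zero' h2] at h3
    rcases E.or hu.1 with ⟨h, -⟩ | ⟨-, h⟩
    · rcases hs with rfl | rfl <;> omega
    · exact hcon (E.deg_two H.ab h.symm hu.2.1.symm)
  obtain ⟨n, R2, gR2, na, r2, dec2, hn⟩ := gR1.peel1 a (by omega) (by omega)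
  obtain ⟨nv, r2v⟩ := hn v r1v
  have r2a : R2 a a = 0 := by omega
  have dec : ∀ p q, R p q = m p * m q + n p * n q + R2 p q := by
    intro p q; rw [dec1, dec2]; ring
  have exa : ∀ p, R p a = s * m p + n p := by
    intro p; rw [dec, ma, na, gR2.zero' r2a]; ring
  rcases (by omega : C.adjw v = 2 ∨ C.adjw v = 3) with W | W
  · obtain ⟨u2, vu2, hne⟩ := E.nbr2 (by omega : C.deg v = 2) u
    by_cases h0 : C.adjw u = 0
    · exact c1_P1W2 k hs gR2 dec mv nv r2v exa vu vu2 hne.symm h0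
    by_cases h2 : C.adjw u2 = 0
    · exact c1_P1W2 k hs gR2 dec mv nv r2v exa vu2 vu hne h2
    have := E.W0 u
    have := E.W0 u2
    exact H.nbo k.hv (E.bad vu2 vu hne (by omega) (by omega))
  · obtain ⟨z, az, zb⟩ := E.nbr2 da b
    exact c1_P1W3 k hs gR2 dec mv nv r2v r2a exa vu az zb W

end

section
variable {C : Config} {G : C.V → C.V → ℤ} {a b x c d v : C.V} {R : C.V → C.V → ℤ}

/-- `A3`, norm five, `a` of norm two -/
theorem c1_P2a (k : K C G a b x c d v R) {s : ℤ} (hs : s = 1 ∨ s = -1) (W3 : C.adjw v = 3)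
    {m m' : C.V → ℤ} {R2 : C.V → C.V → ℤ} (g2 : Gram R2)
    (dec : ∀ p q, R p q = m p * m q + m' p * m' q + R2 p q)
    (exv : ∀ p, R p v = m p + m' p) (exa : ∀ p, R p a = s * m p) (wa : G a a = 2)
    {u1 u2 : C.V} (h1 : C.graph.Adj v u1)
    (h2 : C.graph.Adj v u2) (hne : u1 ≠ u2) (hW : C.adjw u1 = 0) : False := by
  have E := k.E
  have H := k.H
  have Wa := k.Wa
  have Wd := k.Wd
  obtain ⟨ho1, nv1, -, gg1⟩ := k.nbv h1
  obtain ⟨ho2, nv2, Wu2, gg2⟩ := k.nbv h2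
  have nb : NB C.graph [u1, v, u2] := ⟨h1.symm, hne, h2⟩
  have ma : ∀ p, Out a b x c d p → p ≠ v → m p = 0 := by
    intro p hp pv
    have : G p a = 0 := E.nadj _ _ hp.1 (fun h => by
      have := E.deg_two H.ab h.symm hp.2.1.symm
      have := E.self a
      omega)
    rw [(k.oth p hp pv).2, exa] at this
    rcases hs with rfl | rfl <;> omega
  have m1 := ma u1 ho1 nv1
  have m2 := ma u2 ho2 nv2
  have n1 : m' u1 = -1 := by
    have := E.adj _ _ h1.symm
    rw [gg1, exv] at this; omega
  have n2 : m' u2 = -1 := by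
    have := E.adj _ _ h2.symm
    rw [gg2, exv] at this; omega
  have su := E.self u1
  have du := E.d2 u1
  have wu := E.w2 u1
  have guu := gg1 u1
  rw [dec, m1, n1] at guu
  obtain ⟨q, R3, g3, q1, r3, dec3, -⟩ := g2.peel1 u1 (by omega) (by omega)
  have ex1 : ∀ p, R p u1 = - m' p + q p := by
    intro p; rw [dec, dec3, m1, n1, q1, g3.zero' (by omega)]; ring
  have q2 : q u2 = -1 := by
    have : G u2 u1 = 0 := E.far' nb 0 2
    rw [gg2, ex1] at this; omega
  obtain ⟨y1, uy1, yv1⟩ := E.nbr2 (by omega : C.deg u1 = 2) v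
  have Wy1 : C.adjw y1 = 0 := by
    have := E.W0 y1
    by_contra hcon
    exact H.nbo ho1 (E.bad uy1 h1.symm yv1 (by omega) (by omega))
  have hy1 := H.out_nbr E ho1 uy1 (by rintro rfl; omega) (by rintro rfl; omega)
  obtain ⟨-, gy1⟩ := k.oth y1 hy1 yv1
  have nby : NB C.graph [y1, u1, v, u2] := ⟨uy1.symm, yv1, nb⟩
  have my := ma y1 hy1 yv1
  have ny : m' y1 = 0 := by
    have : G y1 v = 0 := E.far nby 0 2
    rw [gy1, exv] at this; omega
  have qy : q y1 = -1 := by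
    have := E.adj _ _ uy1.symm
    rw [gy1, ex1] at this; omega
  have sy := E.self y1
  have dy := E.d2 y1
  have wy := E.w2 y1
  have gyy := gy1 y1
  rw [dec, dec3, my, ny, qy] at gyy
  obtain ⟨r, R4, g4, r1, r4, dec4, -⟩ := g3.peel1 y1 (by omega) (by omega)
  have exy : ∀ p, R p y1 = - q p + r p := by
    intro p; rw [dec, dec3, dec4, my, ny, qy, r1, g4.zero' (by omega)]; ring
  have r2 : r u2 = -1 := by
    have : G u2 y1 = 0 := E.far' nby 0 3
    rw [gg2, exy] at this; omega
  have su2 := E.self u2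
  have du2 := E.d2 u2
  have guu2 := gg2 u2
  rw [dec, dec3, dec4, m2, n2, q2, r2] at guu2
  have r4u := g4.nonneg u2
  have W21 : C.adjw u2 = 1 := by omega
  have ex2 : ∀ p, R p u2 = - m' p - q p - r p := by
    intro p; rw [dec, dec3, dec4, m2, n2, q2, r2, g4.zero' (by omega)]; ring
  obtain ⟨y2, uy2, yv2⟩ := E.nbr2 (by omega : C.deg u2 = 2) v
  have Wy2 : C.adjw y2 ≠ 1 := fun h => k.iv W3 uy2 W21 h
  have hy2 := H.out_nbr E ho2 uy2 (by rintro rfl; omega) (by rintro rfl; omega)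
  obtain ⟨-, gy2⟩ := k.oth y2 hy2 yv2
  have nb2 : NB C.graph [y2, u2, v, u1, y1] :=
    ⟨uy2.symm, yv2, h2.symm, hne.symm, h1, yv1.symm, uy1⟩
  have my2 := ma y2 hy2 yv2
  have c1 : G y2 v = 0 := E.far nb2 0 2
  have c2 : G y2 u1 = 0 := E.far nb2 0 3
  have c3 : G y2 y1 = 0 := E.far nb2 0 4
  have c4 := E.adj _ _ uy2.symm
  rw [gy2, exv] at c1
  rw [gy2, ex1] at c2
  rw [gy2, exy] at c3
  rw [gy2, ex2] at c4
  omega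

theorem num_z {s m m' n R : ℤ} (hs : s = 1 ∨ s = -1) (h1 : s * m + n = -1) (h2 : m + m' = 0)
    (hR : 0 ≤ R) (h : 2 = m * m + m' * m' + n * n + R) :
    (m = 0 ∧ m' = 0 ∧ n = -1 ∧ R = 1) ∨ (m = -s ∧ m' = s ∧ n = 0 ∧ R = 0) := by
  have a1 := mul_self_nonneg m
  have a2 := mul_self_nonneg m'
  have a3 := mul_self_nonneg n
  rcases tri (c := m) (by omega) with rfl | rfl | rfl <;>
  rcases tri (c := m') (by omega) with rfl | rfl | rfl <;>
  rcases tri (c := n) (by omega) with rfl | rfl | rfl <;>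
  rcases hs with rfl | rfl <;> omega

theorem num_u {s m m' n R w : ℤ} (hs : s = 1 ∨ s = -1) (h1 : s * m + n = 0) (h2 : m + m' = -1)
    (hR : 0 ≤ R) (hw : w ≤ 3) (h : w = m * m + m' * m' + n * n + R) :
    (m = 0 ∧ m' = -1 ∧ n = 0 ∧ R = w - 1) ∨ (m = -1 ∧ m' = 0 ∧ n = s ∧ R = w - 2) := by
  have a1 := mul_self_nonneg m
  have a2 := mul_self_nonneg m'
  have a3 := mul_self_nonneg n
  rcases tri (c := m) (by omega) with rfl | rfl | rfl <;>
  rcases tri (c := m') (by omega) with rfl | rfl | rfl <;>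
  rcases tri (c := n) (by omega) with rfl | rfl | rfl <;>
  rcases hs with rfl | rfl <;> omega

theorem num_y {s m m' n R w : ℤ} (hs : s = 1 ∨ s = -1) (h1 : s * m + n = 0) (h2 : m + m' = 0)
    (hR : 0 ≤ R) (hw : w ≤ 2) (h : w = m * m + m' * m' + n * n + R) :
    m = 0 ∧ m' = 0 ∧ n = 0 ∧ R = w := by
  have a1 := mul_self_nonneg m
  have a2 := mul_self_nonneg m'
  have a3 := mul_self_nonneg n
  rcases tri (c := m) (by omega) with rfl | rfl | rfl <;>
  rcases tri (c := m') (by omega) with rfl | rfl | rfl <;>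
  rcases tri (c := n) (by omega) with rfl | rfl | rfl <;>
  rcases hs with rfl | rfl <;> omega

/-- `A3`, norm five, `a` of norm three -/
theorem c1_P2b (k : K C G a b x c d v R) {s : ℤ} (hs : s = 1 ∨ s = -1) (W3 : C.adjw v = 3)
    {m m' n : C.V → ℤ} {R3 : C.V → C.V → ℤ} (g3 : Gram R3)
    (dec : ∀ p q, R p q = m p * m q + m' p * m' q + n p * n q + R3 p q)
    (exv : ∀ p, R p v = m p + m' p) (exa : ∀ p, R p a = s * m p + n p)
    {z : C.V} (az : C.graph.Adj a z) (zb : z ≠ b)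
    {u1 u2 : C.V} (h1 : C.graph.Adj v u1)
    (h2 : C.graph.Adj v u2) (hne : u1 ≠ u2) (hW : C.adjw u1 = 0) : False := by
  have E := k.E
  have H := k.H
  have Wa := k.Wa
  have Wd := k.Wd
  obtain ⟨ho1, nv1, -, gg1⟩ := k.nbv h1
  obtain ⟨ho2, nv2, Wu2, gg2⟩ := k.nbv h2
  have nb : NB C.graph [u1, v, u2] := ⟨h1.symm, hne, h2⟩
  obtain ⟨hz, nbz⟩ := H.out_a E az zb
  have zv : z ≠ v := by rintro rfl; exact k.va az.symm
  obtain ⟨Wz, gz⟩ := k.oth z hz zv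
  have Wz0 := E.W0 z
  have Wz1 : C.adjw z = 0 := by
    by_contra hcon
    exact k.iv W3 az Wa (by omega)
  have zv' : ¬ C.graph.Adj z v := fun h =>
    H.nbo hz (E.bad az.symm h k.hv.1.symm (by omega) (by omega))
  have sz := E.self z
  have ddz := E.d2 z
  have wz := E.w2 z
  -- relations with `a`
  have ra : ∀ p, Out a b x c d p → p ≠ v → p ≠ z → s * m p + n p = 0 := by
    intro p hp pv pz
    have : G p a = 0 := E.nadj _ _ hp.1 (fun h => by
      rcases E.adj_eq H.ab az zb.symm h.symm with h | h
      · exact hp.2.1 h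
      · exact pz h)
    rwa [(k.oth p hp pv).2, exa] at this
  -- neighbours of `v` are not adjacent to `z`
  have uz : ∀ u, C.graph.Adj v u → u ≠ z ∧ ¬ C.graph.Adj u z := by
    intro u hu
    obtain ⟨-, uv, Wu, -⟩ := k.nbv hu
    have huz : u ≠ z := by rintro rfl; exact zv' hu.symm
    refine ⟨huz, fun h => ?_⟩
    have ua : u ≠ a := by rintro rfl; exact k.va hu
    have nb : NB C.graph [a, z, u, v] := ⟨az, ua.symm, h.symm, zv, hu.symm⟩
    have Wu0 := E.W0 u
    rcases (by omega : C.adjw u = 0 ∨ C.adjw u = 1) with h0 | h0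
    · exact E.forb nb (pt := [1, 0, 0, 3]) (by simp [forbiddenPatterns])
        (by simp [Wa, Wz1, h0, W3])
    · exact E.forb nb (pt := [1, 0, 1, 3]) (by simp [forbiddenPatterns])
        (by simp [Wa, Wz1, h0, W3])
  obtain ⟨u1z, u1z'⟩ := uz u1 h1
  obtain ⟨u2z, u2z'⟩ := uz u2 h2
  have su := E.self u1
  have du := E.d2 u1
  have wu := E.w2 u1
  have su2 := E.self u2
  have du2 := E.d2 u2
  have z1 : s * m z + n z = -1 := by
    have := E.adj _ _ az.symm
    rwa [gz, exa] at this
  have z2 : m z + m' z = 0 := by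
    have := E.nadj _ _ zv zv'
    rwa [gz, exv] at this
  have tz := num_z hs z1 z2 (g3.nonneg z) (by rw [← dec, ← gz]; omega)
  have p1 := ra u1 ho1 nv1 u1z
  have p2 := ra u2 ho2 nv2 u2z
  have p3 : m u1 + m' u1 = -1 := by
    have := E.adj _ _ h1.symm
    rwa [gg1, exv] at this
  have p4 : m u2 + m' u2 = -1 := by
    have := E.adj _ _ h2.symm
    rwa [gg2, exv] at this
  have t1 := num_u hs p1 p3 (g3.nonneg u1) (by omega) ((gg1 u1).trans (dec _ _))
  have t2 := num_u hs p2 p4 (g3.nonneg u2) (by omega) ((gg2 u2).trans (dec _ _))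
  have gu1z := E.nadj _ _ u1z u1z'
  have gu2z := E.nadj _ _ u2z u2z'
  rw [gg1, dec] at gu1z
  -- type of `z`
  obtain ⟨z1, z2, z3, z4⟩ := tz.resolve_right (by
    rintro ⟨z1, z2, z3, z4⟩
    rw [z1, z2, z3, g3.zero' z4] at gu1z
    rcases t1 with ⟨y1, y2, y3, -⟩ | ⟨y1, y2, y3, -⟩ <;> rw [y1, y2, y3] at gu1z <;>
      rcases hs with rfl | rfl <;> omega)
  obtain ⟨y1, y2, y3, y4⟩ := t1.resolve_right (by
    rintro ⟨y1, y2, y3, y4⟩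
    rw [y1, y2, y3, z1, z2, z3, g3.zero (by omega)] at gu1z
    rcases hs with rfl | rfl <;> omega)
  obtain ⟨q, R4, g4, qz, r4, dec4, -⟩ := g3.peel1 z (by omega) (by omega)
  have exz : ∀ p, R p z = - n p + q p := by
    intro p; rw [dec, dec4, z1, z2, z3, qz, g4.zero' (by omega)]; ring
  have q1 : q u1 = 0 := by
    rw [← dec, exz] at gu1z; omega
  have r4u : R4 u1 u1 = 1 := by
    have := dec4 u1 u1
    rw [q1] at this; omega
  obtain ⟨t, R5, g5, tu1, r5, dec5, -⟩ := g4.peel1 u1 (by omega) (by omega)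
  have exu : ∀ p, R p u1 = - m' p + t p := by
    intro p; rw [dec, dec4, dec5, y1, y2, y3, q1, tu1, g5.zero' (by omega)]; ring
  obtain ⟨w1, uw1, wv1⟩ := E.nbr2 (by omega : C.deg u1 = 2) v
  have Ww1 : C.adjw w1 = 0 := by
    have := E.W0 w1
    by_contra hcon
    exact H.nbo ho1 (E.bad uw1 h1.symm wv1 (by omega) (by omega))
  have hw1 := H.out_nbr E ho1 uw1 (by rintro rfl; omega) (by rintro rfl; omega)
  obtain ⟨-, gw1⟩ := k.oth w1 hw1 wv1
  have nbw : NB C.graph [w1, u1, v, u2] := ⟨uw1.symm, wv1, nb⟩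
  have w1z : w1 ≠ z := by rintro rfl; exact u1z' uw1
  have b1 := ra w1 hw1 wv1 w1z
  have b2 : m w1 + m' w1 = 0 := by
    have : G w1 v = 0 := E.far nbw 0 2
    rwa [gw1, exv] at this
  have sw := E.self w1
  have dw := E.d2 w1
  have ww := E.w2 w1
  obtain ⟨c1, c2, c3, c4⟩ :=
    num_y hs b1 b2 (g3.nonneg w1) (by omega) ((gw1 w1).trans (dec _ _))
  have c5 : q w1 = 0 := by
    have : G w1 z = 0 := E.nadj _ _ w1z (fun h => by
      have nb : NB C.graph [a, z, w1, u1, v] :=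
        ⟨az, hw1.1.symm, h.symm, u1z.symm, uw1.symm, wv1, h1.symm⟩
      exact E.forb nb (pt := [1, 0, 0, 0, 3]) (by simp [forbiddenPatterns])
        (by simp [Wa, Wz1, Ww1, hW, W3]))
    rw [gw1, exz] at this; omega
  have c6 : t w1 = -1 := by
    have := E.adj _ _ uw1.symm
    rw [gw1, exu] at this; omega
  have c7 : R5 w1 w1 = 1 := by
    have h5 := dec4 w1 w1
    rw [dec5, c5, c6] at h5; omega
  obtain ⟨r, R6, g6, rw1, r6, dec6, -⟩ := g5.peel1 w1 (by omega) (by omega)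
  have exw : ∀ p, R p w1 = - t p + r p := by
    intro p; rw [dec, dec4, dec5, dec6, c1, c2, c3, c5, c6, rw1, g6.zero' (by omega)]; ring
  have k1 : t u2 = m' u2 := by
    have : G u2 u1 = 0 := E.far' nb 0 2
    rw [gg2, exu] at this; omega
  have k2 : r u2 = t u2 := by
    have : G u2 w1 = 0 := E.far' nbw 0 3
    rw [gg2, exw] at this; omega
  have k3 : q u2 = n u2 := by
    rw [gg2, exz] at gu2z; omega
  have r6u := g6.nonneg u2
  have d4 := dec4 u2 u2
  rw [dec5, dec6] at d4
  have W21 : C.adjw u2 = 1 ∧ R6 u2 u2 = 0 := by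
    rcases t2 with ⟨e1, e2, e3, e4⟩ | ⟨e1, e2, e3, e4⟩
    · rw [k3, k2, k1, e2, e3] at d4
      omega
    · rw [k3, k2, k1, e2, e3] at d4
      have hss : s * s = 1 := by rcases hs with rfl | rfl <;> rfl
      omega
  obtain ⟨W21, r6u0⟩ := W21
  have wu2 : G u2 u2 = 3 := by
    rcases t2 with ⟨e1, e2, e3, e4⟩ | ⟨e1, e2, e3, e4⟩
    · rw [k3, k2, k1, e2, e3] at d4
      omega
    · rw [k3, k2, k1, e2, e3] at d4
      have hss : s * s = 1 := by rcases hs with rfl | rfl <;> rfl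
      omega
  obtain ⟨w2, uw2, wv2⟩ := E.nbr2 (by omega : C.deg u2 = 2) v
  have Ww2 : C.adjw w2 ≠ 1 := fun h => k.iv W3 uw2 W21 h
  have hw2 := H.out_nbr E ho2 uw2 (by rintro rfl; omega) (by rintro rfl; omega)
  obtain ⟨Ww2', gw2⟩ := k.oth w2 hw2 wv2
  have nb2 : NB C.graph [w2, u2, v, u1, w1] :=
    ⟨uw2.symm, wv2, h2.symm, hne.symm, h1, wv1.symm, uw1⟩
  have w2z : w2 ≠ z := by rintro rfl; exact u2z' uw2
  have s1 : G w2 v = 0 := E.far nb2 0 2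
  have s2 : G w2 u1 = 0 := E.far nb2 0 3
  have s3 : G w2 w1 = 0 := E.far nb2 0 4
  have s4 := E.adj _ _ uw2.symm
  have s5 := ra w2 hw2 wv2 w2z
  rw [gw2, exv] at s1
  rw [gw2, exu] at s2
  rw [gw2, exw] at s3
  rw [gw2, dec, dec4, dec5, dec6, k2, k1, k3, g6.zero' r6u0] at s4
  have Ww20 := E.W0 w2
  have Ww2z : C.adjw w2 = 0 := by omega
  have sw2 := E.self w2
  have dw2 := E.d2 w2
  obtain ⟨f1, f2, f3, f4⟩ :=
    num_y hs s5 s1 (g3.nonneg w2) (by omega) ((gw2 w2).trans (dec _ _))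
  rw [f1, f2, f3] at s4
  rcases t2 with ⟨e1, e2, e3, e4⟩ | ⟨e1, e2, e3, e4⟩
  · rw [e1, e2, e3] at s4
    omega
  · rw [e1, e2, e3] at s4
    have s6 := gw2 z
    rw [exz] at s6
    rcases E.or w2z with ⟨h, -⟩ | ⟨h, hadj⟩
    · rcases hs with rfl | rfl <;> omega
    · have nb : NB C.graph [v, u2, w2, z, a] :=
        ⟨h2, wv2.symm, uw2, u2z, hadj, hw2.1, az.symm⟩
      exact E.forb nb (pt := [3, 1, 0, 0, 1]) (by simp [forbiddenPatterns])
        (by simp [Wa, Wz1, W21, Ww2z, W3])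

/-- `A3`, norm five -/
theorem c1_P2 (k : K C G a b x c d v R) {s : ℤ} (hs : s = 1 ∨ s = -1)
    (rvv : R v v = G v v - 3) (raa : R a a = G a a - 1) (wv : G v v = 5)
    (rva : R v a = s) : False := by
  have E := k.E
  have H := k.H
  have wa := H.wa E
  have Wa := k.Wa
  have sv := E.self v
  have dv := E.d2 v
  have Wv := E.W3 v
  have W2 := k.W2
  have W3 : C.adjw v = 3 := by omega
  have sa := E.self a
  obtain ⟨m, R1, gR1, mv, r1, dec1, -⟩ := k.gR.peel1 v (by omega) (by omega)
  obtain ⟨m', R2, gR2, mv', r2, dec2, -⟩ := gR1.peel1 v (by omega) (by omega)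
  have r2v : R2 v v = 0 := by omega
  have dec : ∀ p q, R p q = m p * m q + m' p * m' q + R2 p q := by
    intro p q; rw [dec1, dec2]; ring
  have exv : ∀ p, R p v = m p + m' p := by
    intro p; rw [dec, mv, mv', gR2.zero' r2v]; ring
  have hma : m a + m' a = s := by
    rw [← exv, k.gR.symm]; exact rva
  have daa := dec a a
  have r2a := gR2.nonneg a
  have ca := cut (m a)
  have ca' := cut (m' a)
  clear dec1 dec2 r1 r2 gR1
  obtain ⟨m, m', dec, exv, ma, ma', mv, mv'⟩ : ∃ m m' : C.V → ℤ,
      (∀ p q, R p q = m p * m q + m' p * m' q + R2 p q) ∧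
      (∀ p, R p v = m p + m' p) ∧ m a = s ∧ m' a = 0 ∧ m v = 1 ∧ m' v = 1 := by
    rcases (by omega : (m a = s ∧ m' a = 0) ∨ (m' a = s ∧ m a = 0)) with ⟨h1, h2⟩ | ⟨h1, h2⟩
    · exact ⟨m, m', dec, exv, h1, h2, mv, mv'⟩
    · exact ⟨m', m, fun p q => by rw [dec]; ring, fun p => by rw [exv]; ring, h1, h2, mv', mv⟩
  have hss : s * s = 1 := by rcases hs with rfl | rfl <;> rfl
  have daa := dec a a
  rw [ma, ma'] at daa
  obtain ⟨u1, h1⟩ := E.nbr1 (by omega : 1 ≤ C.deg v)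
  obtain ⟨u2, h2, hne⟩ := E.nbr2 (by omega : C.deg v = 2) u1
  obtain ⟨u1, u2, h1, h2, hne, hW⟩ : ∃ u1 u2, C.graph.Adj v u1 ∧ C.graph.Adj v u2 ∧ u1 ≠ u2 ∧
      C.adjw u1 = 0 := by
    by_cases h01 : C.adjw u1 = 0
    · exact ⟨u1, u2, h1, h2, hne.symm, h01⟩
    by_cases h02 : C.adjw u2 = 0
    · exact ⟨u2, u1, h2, h1, hne, h02⟩
    have := E.W0 u1
    have := E.W0 u2
    exact (H.nbo k.hv (E.bad h2 h1 hne (by omega) (by omega))).elim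
  by_cases wa2 : G a a = 2
  · have exa : ∀ p, R p a = s * m p := by
      intro p; rw [dec, ma, ma', gR2.zero' (by omega)]; ring
    exact c1_P2a k hs W3 gR2 dec exv exa wa2 h1 h2 hne hW
  · obtain ⟨n, R3, g3, na, r3, dec3, hn⟩ := gR2.peel1 a (by omega) (by omega)
    have exa : ∀ p, R p a = s * m p + n p := by
      intro p; rw [dec, dec3, ma, ma', na, g3.zero' (by omega)]; ring
    obtain ⟨z, az, zb⟩ := E.nbr2 (by omega : C.deg a = 2) b
    exact c1_P2b k hs W3 g3 (fun p q => by rw [dec, dec3]; ring) exv exa az zb h1 h2 hne hW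

end

section
variable {C : Config} {G : C.V → C.V → ℤ} {a b x c d v : C.V}
variable {e1 e2 e3 f g : C.V → ℤ} {R : C.V → C.V → ℤ}

theorem c1_K (E : Env C G) (H : Ch C a b x c d) (hWc : C.adjw c = 0)
    (F : F1 C G b x c e1 e2 e3 f g R) (hv : Out a b x c d v) (W2 : 2 ≤ C.adjw v) :
    K C G a b x c d v R := by
  have Wa : C.adjw a = 1 := by
    have := H.Wa
    by_contra hcon
    exact hv.1 (E.uniq (by omega) (by omega))
  have Wd : C.adjw d = 1 := by
    have := H.Wd
    by_contra hcon
    exact hv.2.2.2.2 (E.uniq (by omega) (by omega))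
  have W3 := E.W3 v
  refine ⟨E, H, F.gR, hv, Wa, Wd, ?_, ?_, W2, ?_⟩
  · intro h
    have nb : NB C.graph [x, b, a, v] := ⟨H.bx.symm, H.nax.symm, H.ab.symm, hv.2.1.symm, h.symm⟩
    rcases (by omega : C.adjw v = 2 ∨ C.adjw v = 3) with h0 | h0
    · exact E.forb nb (pt := [1, 0, 1, 2]) (by simp [forbiddenPatterns])
        (by simp [Wa, H.Wx, H.Wb, h0])
    · exact E.forb nb (pt := [1, 0, 1, 3]) (by simp [forbiddenPatterns])
        (by simp [Wa, H.Wx, H.Wb, h0])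
  · intro h
    have nb : NB C.graph [x, c, d, v] := ⟨H.xc, H.nxd, H.cd, hv.2.2.2.1.symm, h.symm⟩
    rcases (by omega : C.adjw v = 2 ∨ C.adjw v = 3) with h0 | h0
    · exact E.forb nb (pt := [1, 0, 1, 2]) (by simp [forbiddenPatterns])
        (by simp [Wd, H.Wx, hWc, h0])
    · exact E.forb nb (pt := [1, 0, 1, 3]) (by simp [forbiddenPatterns])
        (by simp [Wd, H.Wx, hWc, h0])
  · intro p hp pv
    have Wp : C.adjw p ≤ 1 := by
      by_contra hcon
      exact pv (E.uniq (by omega) (by omega))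
    obtain ⟨p1, p2, p3, p4, p5, -⟩ := c1_L1' E H hWc F hp Wp
    refine ⟨Wp, fun q => ?_⟩
    rw [F.dec, p1, p2, p3, p4, p5]; ring

theorem c1_L2 (k : K C G a b x c d v R) (hWc : C.adjw c = 0)
    (F : F1 C G b x c e1 e2 e3 f g R)
    (hv : (e1 v = 1 ∨ e1 v = -1) ∧ e2 v = -e1 v ∧ e3 v = 0 ∧ f v = e1 v ∧ g v = -e1 v ∧
      R v v = G v v - 4) : False := by
  have E := k.E
  have H := k.H
  have Wa := k.Wa
  have Wd := k.Wd
  have wa := H.wa E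
  have wd := H.wd E
  have ta := c1_a E H F
  have td := c1_a E (H.rev hWc) F.rev
  have gva := E.nadj _ _ k.hv.1 k.va
  have gvd := E.nadj _ _ k.hv.2.2.2.2 k.vd
  have gad : G a d = 0 := E.far H.nb 0 4
  obtain ⟨hs, v2, v3, v4, v5, v6⟩ := hv
  obtain ⟨s, v1⟩ : ∃ s, e1 v = s := ⟨_, rfl⟩
  rw [v1] at hs v2 v4 v5
  rw [F.dec, v1, v2, v3, v4, v5] at gva gvd
  have sv := E.self v
  have dv := E.d2 v
  have Wv := E.W3 v
  have rv := k.gR.nonneg v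
  have rv0 : R v v ≠ 0 := fun h0 => by
    rw [k.gR.zero h0] at gva
    rcases ta with ⟨a1, a2, a3, a4, a5, a6⟩ | ⟨a1, a2, a3, a4, a5, a6⟩ |
      ⟨a1, a2, a3, a4, a5, a6⟩ | h
    · rw [a1, a2, a3, a4, a5] at gva; omega
    · rw [a1, a2, a3, a4, a5] at gva; omega
    · rw [a1, a2, a3, a4, a5] at gva; omega
    · omega
  obtain ⟨m, R1, g1, mv, r1, dec1, -⟩ := k.gR.peel1 v (by omega) (by omega)
  have r1v : R1 v v = 0 := by omega
  have mva : R v a = m a := by rw [dec1, mv, g1.zero r1v]; ring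
  have mvd : R v d = m d := by rw [dec1, mv, g1.zero r1v]; ring
  rw [mva] at gva
  rw [mvd] at gvd
  have r1a := g1.nonneg a
  have r1d := g1.nonneg d
  have da := dec1 a a
  have dd := dec1 d d
  have hss : s * s = 1 := by rcases hs with rfl | rfl <;> rfl
  have hss' : -s * -s = 1 := by rcases hs with rfl | rfl <;> rfl
  have sa := E.self a
  have dda := E.d2 a
  have hz : C.deg a = 2 → ∃ z, Out a b x c d z ∧ R z a = -1 ∧ R z d = 0 := by
    intro h
    obtain ⟨z, az, zb⟩ := E.nbr2 h b
    obtain ⟨hz, nb⟩ := H.out_a E az zb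
    have zv : z ≠ v := by rintro rfl; exact k.va az.symm
    obtain ⟨Wz, gz⟩ := k.oth z hz zv
    refine ⟨z, hz, ?_, ?_⟩
    · rw [← gz]; exact E.adj _ _ az.symm
    · rw [← gz]; exact E.far nb 0 5
  rw [F.dec] at gad
  rcases ta with ⟨a1, a2, a3, a4, a5, a6⟩ | ⟨a1, a2, a3, a4, a5, a6⟩ |
      ⟨a1, a2, a3, a4, a5, a6⟩ | h
  · rw [a1, a2, a3, a4, a5] at gva gad
    have ma : m a = -s := by omega
    rw [ma, hss'] at da
    have r1a0 : R1 a a = 0 := by omega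
    rcases td with ⟨d1, d2, d3, d4, d5, d6⟩ | ⟨d1, d2, d3, d4, d5, d6⟩ |
      ⟨d1, d2, d3, d4, d5, d6⟩ | h
    · rw [d1, d2, d3, d4, d5] at gvd gad
      have md : m d = s := by omega
      rw [md, hss] at dd
      obtain ⟨z, hz, z1, z2⟩ := hz (by omega)
      rw [dec1, ma, g1.zero' r1a0] at z1
      rw [dec1, md, g1.zero' (by omega)] at z2
      rcases hs with rfl | rfl <;> omega
    · rw [d1, d2, d3, d4, d5] at gvd
      have md : m d = s + s + s := by omega
      have : (s + s + s) * (s + s + s) = 9 * (s * s) := by ring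
      rw [md, this] at dd
      omega
    · rw [d1, d2, d3, d4, d5] at gvd gad
      have md : m d = -s := by omega
      rw [dec1, ma, md, g1.zero r1a0] at gad
      omega
    · omega
  · rw [a1, a2, a3, a4, a5] at gva
    have ma : m a = -s + -s + -s := by omega
    have : (-s + -s + -s) * (-s + -s + -s) = 9 * (s * s) := by ring
    rw [ma, this] at da
    omega
  · rw [a1, a2, a3, a4, a5] at gva gad
    have ma : m a = s := by omega
    rw [ma, hss] at da
    rcases td with ⟨d1, d2, d3, d4, d5, d6⟩ | ⟨d1, d2, d3, d4, d5, d6⟩ |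
      ⟨d1, d2, d3, d4, d5, d6⟩ | h
    · rw [d1, d2, d3, d4, d5] at gvd gad
      have md : m d = s := by omega
      rw [md, hss] at dd
      rw [dec1, ma, md, g1.zero' (by omega)] at gad
      omega
    · rw [d1, d2, d3, d4, d5] at gvd
      have md : m d = s + s + s := by omega
      have : (s + s + s) * (s + s + s) = 9 * (s * s) := by ring
      rw [md, this] at dd
      omega
    · rw [d1, d2, d3, d4, d5] at gvd gad
      have md : m d = -s := by omega
      rw [md, hss'] at dd
      have h1 : s * -s = -1 := by rw [mul_neg, hss]
      rw [dec1, ma, md, h1] at gad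
      have r1a0 : R1 a a ≠ 0 := fun h => by rw [g1.zero h] at gad; omega
      obtain ⟨n, R2, g2, na, r2, dec2, -⟩ := g1.peel1 a (by omega) (by omega)
      have r2a : R2 a a = 0 := by omega
      rw [dec2, na, g2.zero r2a] at gad
      have nd : n d = 1 := by omega
      have dd2 := dec2 d d
      have r2d := g2.nonneg d
      rw [nd] at dd2
      obtain ⟨z, hz, z1, z2⟩ := hz (by omega)
      rw [dec1, dec2, ma, na, g2.zero' r2a] at z1
      rw [dec1, dec2, md, nd, g2.zero' (by omega)] at z2
      rcases hs with rfl | rfl <;> omega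
    · omega
  · omega

theorem c1_L3 (k : K C G a b x c d v R) (hWc : C.adjw c = 0)
    (F : F1 C G b x c e1 e2 e3 f g R)
    (hv : (e1 v = 1 ∨ e1 v = -1) ∧ e2 v = 0 ∧ e3 v = -e1 v ∧ f v = e1 v ∧ g v = 0 ∧
      R v v = G v v - 3) : False := by
  have E := k.E
  have H := k.H
  have Wa := k.Wa
  have Wd := k.Wd
  have W2 := k.W2
  have wa := H.wa E
  have wd := H.wd E
  have ta := c1_a E H F
  have td := c1_a E (H.rev hWc) F.rev
  have gva := E.nadj _ _ k.hv.1 k.va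
  have gvd := E.nadj _ _ k.hv.2.2.2.2 k.vd
  have gad : G a d = 0 := E.far H.nb 0 4
  obtain ⟨hs, v2, v3, v4, v5, v6⟩ := hv
  obtain ⟨s, v1⟩ : ∃ s, e1 v = s := ⟨_, rfl⟩
  rw [v1] at hs v3 v4
  rw [F.dec, v1, v2, v3, v4, v5] at gva gvd
  rw [F.dec] at gad
  have sv := E.self v
  have dv := E.d2 v
  have Wv := E.W3 v
  have rv := k.gR.nonneg v
  have ra := k.gR.nonneg a
  have hss : s * s = 1 := by rcases hs with rfl | rfl <;> rfl
  have h3 : e1 a = 0 ∧ e2 a = 0 ∧ e3 a = 0 ∧ f a = -1 ∧ g a = 0 ∧ R a a = G a a - 1 := by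
    rcases ta with ⟨a1, a2, a3, a4, a5, a6⟩ | ⟨a1, a2, a3, a4, a5, a6⟩ | h | h
    · exfalso
      rw [a1, a2, a3, a4, a5] at gva
      have ra0 : R a a ≠ 0 := fun h => by rw [k.gR.zero' h] at gva; omega
      obtain ⟨m, R1, g1, ma, r1, dec1, -⟩ := k.gR.peel1 a (by omega) (by omega)
      rw [dec1, ma, g1.zero' (by omega)] at gva
      have mv : m v = -(s + s) := by omega
      have := dec1 v v
      have h4 : -(s + s) * -(s + s) = 4 * (s * s) := by ring
      rw [mv, h4] at this
      have := g1.nonneg v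
      omega
    · exfalso
      rw [a1, a2, a3, a4, a5, k.gR.zero' (by omega)] at gva
      omega
    · exact h
    · omega
  obtain ⟨a1, a2, a3, a4, a5, a6⟩ := h3
  rw [a1, a2, a3, a4, a5] at gva gad
  have rva : R v a = s := by omega
  rcases td with ⟨d1, d2, d3, d4, d5, d6⟩ | ⟨d1, d2, d3, d4, d5, d6⟩ |
      ⟨d1, d2, d3, d4, d5, d6⟩ | h
  · rw [d1, d2, d3, d4, d5] at gvd gad
    exact c1_AD k hs v6 a6 d6 rva (by omega) (by omega)
  · rw [d1, d2, d3, d4, d5, k.gR.zero' (by have := k.gR.nonneg d; omega)] at gvd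
    omega
  · have rv0 : R v v ≠ 0 := fun h => by rw [k.gR.zero h] at rva; omega
    rcases (by omega : G v v = 4 ∨ G v v = 5) with h | h
    · exact c1_P1 k hs v6 a6 h rva
    · exact c1_P2 k hs v6 a6 h rva
  · omega

theorem case1 (E : Env C G) (H : Ch C a b x c d) (hWc : C.adjw c = 0)
    (F : F1 C G b x c e1 e2 e3 f g R) (hv : Out a b x c d v)
    (hm : e1 v ≠ 0 ∨ e2 v ≠ 0 ∨ e3 v ≠ 0) : False := by
  by_cases W2 : 2 ≤ C.adjw v
  · rcases c1_out E H F hv with h | h | h | h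
    · omega
    · exact c1_L3 (c1_K E H hWc F hv W2) hWc F h
    · exact c1_L3 (c1_K E (H.rev hWc) H.Wb F.rev hv.rev W2) H.Wb F.rev (by tauto)
    · exact c1_L2 (c1_K E H hWc F hv W2) hWc F h
  · have := c1_L1' E H hWc F hv (by omega)
    omega

end

section
variable {C : Config}

theorem env_of (hlin : C.IsLinear) (hwc : C.WorkingConditions) {N : ℕ} {φ : C.V → Fin N → ℤ}
    (hφ : C.IsEmbedding N φ) : Env C (fun u v => dot (φ u) (φ v)) where
  lin := hlin
  wc := hwc
  gram := ⟨N, φ, Finset.univ, fun _ _ => rfl⟩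
  self := fun u => by
    have := hφ u u
    simp only [if_true] at this
    simp only [this, Config.adjw]
    ring
  adj := fun u v h => by
    have := hφ u v
    rw [if_neg h.ne, if_pos h] at this
    exact this
  nadj := fun u v h1 h2 => by
    have := hφ u v
    rw [if_neg h1, if_neg h2] at this
    exact this

theorem final5 (hlin : C.IsLinear) (hwc : C.WorkingConditions) {N : ℕ} {φ : C.V → Fin N → ℤ}
    (hφ : C.IsEmbedding N φ) {a b x c d v : C.V} (H : Ch C a b x c d) (hv : Out a b x c d v)
    (hsupp : (supp (φ v) ∩ supp (φ x)).Nonempty) : False := by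
  have E := env_of hlin hwc hφ
  obtain ⟨i, hi⟩ := hsupp
  simp only [supp, Finset.mem_inter, Finset.mem_filter, Finset.mem_univ, true_and] at hi
  obtain ⟨e1, e2, e3, f, g, h, R, hm, hF⟩ := frame E H v (fun p => φ p i)
    (fun p q => ∑ j ∈ Finset.univ.erase i, φ p j * φ q j) ⟨N, φ, _, fun _ _ => rfl⟩
    (fun p q => by
      simp only [dot]
      rw [Finset.add_sum_erase _ (fun j => φ p j * φ q j) (Finset.mem_univ i)]) hi.2 hi.1
  rcases hF with ⟨hc, F⟩ | ⟨hc, F⟩ | ⟨hc, F⟩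
  · exact case1 E H hc F hv hm
  · exact case3 E H hc F hv hm
  · exact case4 E H hc F hv hm

theorem finalD (hlin : C.IsLinear) (hwc : C.WorkingConditions) {N : ℕ} {φ : C.V → Fin N → ℤ}
    (hφ : C.IsEmbedding N φ) {x y₁ y₂ v : C.V} (hy : y₁ ≠ y₂) (hb₁ : C.IsBad y₁)
    (hb₂ : C.IsBad y₂) (ha₁ : C.graph.Adj x y₁) (ha₂ : C.graph.Adj x y₂) (hvx : v ≠ x)
    (hsupp : (supp (φ v) ∩ supp (φ x)).Nonempty) {vb : ℕ → C.V} (hch : C.IsChain 4 vb)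
    (h0 : C.adjw (vb 0) = 1) (h1 : C.adjw (vb 1) = 0) (h2 : C.adjw (vb 2) = 1)
    (h3 : C.adjw (vb 3) = 0 ∨ C.adjw (vb 3) = 1) (h4 : C.adjw (vb 4) = 1 ∨ C.adjw (vb 4) = 2)
    (hbad : ∀ p, C.IsBad p → p = vb 1 ∨ p = vb 3) : ∃ i ≤ 4, vb i = v := by
  have E := env_of hlin hwc hφ
  have ne : ∀ i j, i ≤ 4 → j ≤ 4 → i ≠ j → vb i ≠ vb j := fun i j hi hj hij h =>
    hij (hch.1 i hi j hj h)
  have ad := hch.2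
  have nb : NB C.graph [vb 0, vb 1, vb 2, vb 3, vb 4] :=
    ⟨ad 0 (by omega), ne 0 2 (by omega) (by omega) (by omega), ad 1 (by omega),
      ne 1 3 (by omega) (by omega) (by omega), ad 2 (by omega),
      ne 2 4 (by omega) (by omega) (by omega), ad 3 (by omega)⟩
  have hadj : C.graph.Adj x (vb 1) ∧ C.graph.Adj x (vb 3) := by
    rcases hbad _ hb₁ with h | h <;> rcases hbad _ hb₂ with h' | h' <;> subst h <;> subst h'
    · exact (hy rfl).elim
    · exact ⟨ha₁, ha₂⟩
    · exact ⟨ha₂, ha₁⟩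
    · exact (hy rfl).elim
  have hx : x = vb 2 := by
    rcases E.adj_eq (ad 0 (by omega)).symm (ad 1 (by omega))
      (ne 0 2 (by omega) (by omega) (by omega)) hadj.1.symm with h | h
    · exact ((E.nA nb 0 3) (h ▸ hadj.2)).elim
    · exact h
  subst hx
  by_contra hcon
  push Not at hcon
  exact final5 hlin hwc hφ ⟨nb, Or.inl h0, h1, h2, h3, h4, hbad⟩
    ⟨(hcon 0 (by omega)).symm, (hcon 1 (by omega)).symm, hvx, (hcon 3 (by omega)).symm,
      (hcon 4 (by omega)).symm⟩ hsupp

theorem final_tri (hlin : C.IsLinear) {x p q : C.V} (h1 : C.graph.Adj x p)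
    (h2 : C.graph.Adj x q) (h3 : C.graph.Adj p q) : False := by
  have nb : NB C.graph [x, p, q] := ⟨h1, h2.ne, h3⟩
  exact (NB.far hlin.2 nb 0 2 (by decide) (by simp)).2 h2

end

/-- Lemma 5.9: if `x` is not bad but is adjacent to two bad vertices, then every vertex
whose support meets that of `x` lies in the bad part. -/
theorem statement10 (C : Config) (hlin : C.IsLinear) (hwc : C.WorkingConditions)
    (hbad : ∃ y : C.V, C.IsBad y) (N : ℕ) (φ : C.V → Fin N → ℤ)
    (hφ : C.IsEmbedding N φ)
    (x : C.V) (hxnb : ¬ C.IsBad x)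
    (y₁ y₂ : C.V) (hy : y₁ ≠ y₂) (hb₁ : C.IsBad y₁) (hb₂ : C.IsBad y₂)
    (ha₁ : C.graph.Adj x y₁) (ha₂ : C.graph.Adj x y₂)
    (v : C.V) (hvx : v ≠ x) (hsupp : (supp (φ v) ∩ supp (φ x)).Nonempty) :
    ∀ p ∈ badPatterns, ∀ mb (vb : ℕ → C.V), C.IsBadPartChain p mb vb →
      ∃ i ≤ mb, vb i = v := by
  have E := env_of hlin hwc hφ
  rintro p hp mb vb ⟨hch, hlen, hW, hB⟩
  have hbd : ∀ y, C.IsBad y → ∃ i, ∃ h : i < p.length, (p.get ⟨i, h⟩).2 = true ∧ y = vb i := by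
    intro y h
    obtain ⟨⟨i, hi⟩, h1, h2⟩ := (hB y).1 h
    exact ⟨i, hi, h1, h2.symm⟩
  have hW' : ∀ i, ∀ h : i < p.length, C.adjw (vb i) = (p.get ⟨i, h⟩).1 := fun i h => hW ⟨i, h⟩
  have one : (∀ y, C.IsBad y → y = vb 1) → ∃ i ≤ mb, vb i = v := fun h =>
    (hy ((h _ hb₁).trans (h _ hb₂).symm)).elim
  have two : C.graph.Adj (vb 1) (vb 2) → (∀ y, C.IsBad y → y = vb 1 ∨ y = vb 2) →
      ∃ i ≤ mb, vb i = v := by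
    intro ha h
    exfalso
    rcases h _ hb₁ with h1 | h1 <;> rcases h _ hb₂ with h2 | h2 <;> subst h1 <;> subst h2
    · exact hy rfl
    · exact final_tri hlin ha₁ ha₂ ha
    · exact final_tri hlin ha₂ ha₁ ha
    · exact hy rfl
  clear hW
  simp only [badPatterns, List.mem_cons, List.not_mem_nil, or_false] at hp
  rcases hp with rfl | rfl | rfl | rfl | rfl | rfl | rfl | rfl | rfl | rfl | rfl | rfl | rfl
  iterate 6
    · refine one fun y h => ?_
      obtain ⟨i, hi, h1, rfl⟩ := hbd y h
      simp only [List.length_cons, List.length_nil] at hi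
      interval_cases i <;> first | rfl | simp at h1
  iterate 4
    · obtain rfl : mb = 4 := by simpa using hlen
      refine finalD hlin hwc hφ hy hb₁ hb₂ ha₁ ha₂ hvx hsupp hch (hW' 0 (by simp))
        (hW' 1 (by simp)) (hW' 2 (by simp)) (by have h := hW' 3 (by simp); simp at h; omega)
        (by have h := hW' 4 (by simp); simp at h; omega) fun y h => ?_
      obtain ⟨i, hi, h1, rfl⟩ := hbd y h
      simp only [List.length_cons, List.length_nil] at hi
      interval_cases i <;> first | exact Or.inl rfl | exact Or.inr rfl | simp at h1
  · obtain rfl : mb = 3 := by simpa using hlen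
    refine two (hch.2 1 (by omega)) fun y h => ?_
    obtain ⟨i, hi, h1, rfl⟩ := hbd y h
    simp only [List.length_cons, List.length_nil] at hi
    interval_cases i <;> first | exact Or.inl rfl | exact Or.inr rfl | simp at h1
  · obtain rfl : mb = 4 := by simpa using hlen
    exfalso
    have b2 : C.IsBad (vb 2) := (hB _).2 ⟨⟨2, by simp⟩, rfl, rfl⟩
    have h : ∀ y, C.IsBad y → y = vb 1 ∨ y = vb 2 ∨ y = vb 3 := by
      intro y h
      obtain ⟨i, hi, h1, rfl⟩ := hbd y h
      simp only [List.length_cons, List.length_nil] at hi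
      interval_cases i <;>
        first | exact Or.inl rfl | exact Or.inr (Or.inl rfl) | exact Or.inr (Or.inr rfl)
              | simp at h1
    have a0 := hch.2 0 (by omega)
    have a12 := hch.2 1 (by omega)
    have a23 := hch.2 2 (by omega)
    have n02 : vb 0 ≠ vb 2 := fun e => absurd (hch.1 0 (by omega) 2 (by omega) e) (by omega)
    have n13 : vb 1 ≠ vb 3 := fun e => absurd (hch.1 1 (by omega) 3 (by omega) e) (by omega)
    have h13 : C.graph.Adj x (vb 1) → C.graph.Adj x (vb 3) → False := by
      intro p1 p3
      rcases E.adj_eq a0.symm a12 n02 p1.symm with e | e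
      · subst e
        have nb : NB C.graph [vb 0, vb 1, vb 2, vb 3] := ⟨a0, n02, a12, n13, a23⟩
        exact (E.nA nb 0 3) p3
      · exact hxnb (e ▸ b2)
    rcases h _ hb₁ with h1 | h1 | h1 <;> rcases h _ hb₂ with h2 | h2 | h2 <;>
      rw [h1] at ha₁ hy <;> rw [h2] at ha₂ hy
    · exact hy rfl
    · exact final_tri hlin ha₁ ha₂ a12
    · exact h13 ha₁ ha₂
    · exact final_tri hlin ha₂ ha₁ a12
    · exact hy rfl
    · exact final_tri hlin ha₁ ha₂ a23
    · exact h13 ha₂ ha₁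
    · exact final_tri hlin ha₂ ha₁ a23
    · exact hy rfl
  · obtain rfl : mb = 3 := by simpa using hlen
    refine two (hch.2 1 (by omega)) fun y h => ?_
    obtain ⟨i, hi, h1, rfl⟩ := hbd y h
    simp only [List.length_cons, List.length_nil] at hi
    interval_cases i <;> first | exact Or.inl rfl | exact Or.inr rfl | simp at h1

end LensPaper
end

section
/- Suppose Γ is a configuration satisfying the Working Conditions with at least one bad vertex, let φ be an embedding of Γ into ℤ^N, let x be a bad vertex with neighbors u_1 and u_2, and suppose the restriction of φ to the vertices of the extended bad part is semi-standard at x. Then for every basis vector e with e ∈ supp(φ(u_1)) ∩ supp(φ(u_2)) and e ∉ supp(φ(x)), and every vertex v with v ∉ {u_1, u_2}, we have e ∉ supp(φ(v)). -/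
namespace LensPaper

/-! ### Helper lemmas -/

theorem mem_supp {N : ℕ} {x : Fin N → ℤ} {i : Fin N} : i ∈ supp x ↔ x i ≠ 0 := by
  simp [supp]

theorem dot_exists {N : ℕ} {y z : Fin N → ℤ} (h : dot y z = 0) {i : Fin N}
    (hy : y i ≠ 0) (hz : z i ≠ 0) : ∃ j, j ≠ i ∧ y j ≠ 0 ∧ z j ≠ 0 := by
  by_contra hcon
  push Not at hcon
  have : dot y z = y i * z i := by
    unfold dot
    apply Finset.sum_eq_single_of_mem _ (Finset.mem_univ _)
    intro j _ hj
    by_cases h1 : y j = 0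
    · simp [h1]
    · simp [hcon j hj h1]
  rw [this] at h
  exact (mul_ne_zero hy hz) h

theorem dot_single {N : ℕ} {y z : Fin N → ℤ} {i : Fin N}
    (hy : y i ≠ 0) (hz : z i ≠ 0) (h : ∀ j, j ≠ i → y j ≠ 0 → z j = 0) : dot y z ≠ 0 := by
  intro h0
  obtain ⟨j, h1, h2, h3⟩ := dot_exists h0 hy hz
  exact h3 (h j h1 h2)

theorem card_le_dot {N : ℕ} (y : Fin N → ℤ) (S : Finset (Fin N)) (h : ∀ i ∈ S, y i ≠ 0) :
    (S.card : ℤ) ≤ dot y y := by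
  calc (S.card : ℤ) = ∑ i ∈ S, (1 : ℤ) := by simp
    _ ≤ ∑ i ∈ S, y i * y i := by
        apply Finset.sum_le_sum
        intro i hi
        have := mul_self_pos.2 (h i hi)
        omega
    _ ≤ dot y y := by
        unfold dot
        apply Finset.sum_le_sum_of_subset_of_nonneg (Finset.subset_univ _)
        intro i _ _
        exact mul_self_nonneg _

theorem unit_of_card {N : ℕ} (y : Fin N → ℤ) (h : ((supp y).card : ℤ) = dot y y)
    (i : Fin N) (hi : y i ≠ 0) : y i * y i = 1 := by
  have h1 : dot y y = ∑ i ∈ supp y, y i * y i := by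
    unfold dot
    symm
    apply Finset.sum_subset (Finset.subset_univ _)
    intro j _ hj
    rw [mem_supp] at hj
    push Not at hj
    simp [hj]
  have h2 : ∑ i ∈ supp y, (y i * y i - 1) = 0 := by
    rw [Finset.sum_sub_distrib, ← h1, ← h]; simp
  rw [Finset.sum_eq_zero_iff_of_nonneg] at h2
  · have := h2 i (mem_supp.2 hi); omega
  · intro j hj
    have := mul_self_pos.2 (mem_supp.1 hj)
    omega

theorem abs_sum_le {N : ℕ} (y z : Fin N → ℤ) (S : Finset (Fin N))
    (hz : ∀ i ∈ S, z i * z i = 1) : |∑ i ∈ S, y i * z i| ≤ ∑ i ∈ S, y i * y i := by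
  refine (Finset.abs_sum_le_sum_abs _ _).trans (Finset.sum_le_sum ?_)
  intro i hi
  have h1 : |z i| = 1 := by
    have h := hz i hi
    rcases Int.isUnit_iff.1 (IsUnit.of_mul_eq_one _ h) with h | h <;> simp [h]
  rw [abs_mul, h1, mul_one, ← abs_mul_abs_self (y i)]
  rcases (abs_nonneg (y i)).eq_or_lt with h | h
  · rw [← h]; simp
  · nlinarith

theorem sq_sum_le {N : ℕ} (y z : Fin N → ℤ) (S : Finset (Fin N)) (hS : S.card ≤ 1)
    (hz : ∀ i ∈ S, z i * z i = 1) :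
    (∑ i ∈ S, y i * z i) * (∑ i ∈ S, y i * z i) ≤ ∑ i ∈ S, y i * y i := by
  rcases Nat.le_one_iff_eq_zero_or_eq_one.1 hS with h | h
  · simp [Finset.card_eq_zero.1 h]
  · obtain ⟨a, rfl⟩ := Finset.card_eq_one.1 h
    have := hz a (by simp)
    simp only [Finset.sum_singleton]
    have : y a * z a * (y a * z a) = y a * y a * (z a * z a) := by ring
    rw [this, hz a (by simp)]; simp

/-- In an acyclic graph the ends of a chain are not adjacent. -/
theorem chain_walk (C : Config) (v : ℕ → C.V) : ∀ m, (∀ i < m, C.graph.Adj (v i) (v (i + 1))) →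
    ∃ p : C.graph.Walk (v 0) (v m), p.support = (List.range (m + 1)).map v := by
  intro m
  induction m with
  | zero => intro _; exact ⟨SimpleGraph.Walk.nil, by simp⟩
  | succ n ih =>
    intro h
    obtain ⟨p, hp⟩ := ih (fun i hi => h i (by omega))
    refine ⟨p.concat (h n (by omega)), ?_⟩
    rw [SimpleGraph.Walk.support_concat, hp, List.range_succ (n := n + 1)]
    simp

theorem chain_ends (C : Config) (hac : C.graph.IsAcyclic) (m : ℕ) (v : ℕ → C.V)
    (hc : C.IsChain m v) (hm : 2 ≤ m) : ¬ C.graph.Adj (v 0) (v m) := by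
  intro hadj
  obtain ⟨p, hp⟩ := chain_walk C v m hc.2
  have hpath : p.IsPath := by
    rw [SimpleGraph.Walk.isPath_def, hp]
    apply List.Nodup.map_on _ List.nodup_range
    intro a ha b hb hab
    simp only [List.mem_range] at ha hb
    exact hc.1 a (by omega) b (by omega) hab
  have hq : (SimpleGraph.Walk.cons hadj SimpleGraph.Walk.nil).IsPath := by
    simp [hadj.ne]
  have h := hac.path_unique ⟨p, hpath⟩ ⟨_, hq⟩
  have h2 : p = SimpleGraph.Walk.cons hadj SimpleGraph.Walk.nil := congrArg Subtype.val h
  have h3 := congrArg List.length hp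
  rw [h2] at h3
  simp at h3
  omega

theorem chain_adj (C : Config) (hac : C.graph.IsAcyclic) (m : ℕ) (v : ℕ → C.V)
    (hc : C.IsChain m v) {i j : ℕ} (hj : j ≤ m) (hij : i + 2 ≤ j) :
    ¬ C.graph.Adj (v i) (v j) := by
  have := chain_ends C hac (j - i) (fun t => v (i + t)) ⟨?_, ?_⟩ (by omega)
  · simpa [show i + (j - i) = j by omega] using this
  · intro a ha b hb hab
    have := hc.1 (i + a) (by omega) (i + b) (by omega) hab
    omega
  · intro a ha
    exact hc.2 (i + a) (by omega)

theorem three_nbrs (C : Config) (hd : ∀ v, C.deg v ≤ 2) {s a b c : C.V}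
    (ha : C.graph.Adj s a) (hb : C.graph.Adj s b) (hc : C.graph.Adj s c)
    (hab : a ≠ b) (hac : a ≠ c) (hbc : b ≠ c) : False := by
  have h : ({a, b, c} : Finset C.V).card ≤ C.deg s := by
    unfold Config.deg
    rw [← Set.ncard_coe_finset]
    apply Set.ncard_le_ncard _ (Set.toFinite _)
    intro t ht
    simp at ht
    rcases ht with rfl | rfl | rfl <;> assumption
  rw [Finset.card_eq_three.2 ⟨a, b, c, hab, hac, hbc, rfl⟩] at h
  have := hd s
  omega

theorem two_nbrs (C : Config) {s a b : C.V}
    (ha : C.graph.Adj s a) (hb : C.graph.Adj s b)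
    (hab : a ≠ b) : 2 ≤ C.deg s := by
  unfold Config.deg
  rw [← Finset.card_pair hab, ← Set.ncard_coe_finset]
  apply Set.ncard_le_ncard _ (Set.toFinite _)
  intro t ht
  simp at ht
  rcases ht with rfl | rfl <;> assumption

/-- Everything known around the bad vertex `v (k+1)`. -/
structure Ctx (C : Config) (N : ℕ) (φ : C.V → Fin N → ℤ) (m : ℕ) (v : ℕ → C.V) (k : ℕ)
    (e f : Fin N) (y : C.V) : Prop where
  lin : C.IsLinear
  w2 : ∀ z, 2 ≤ C.w z
  emb : C.IsEmbedding N φ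
  chain : C.IsChain m v
  front : C.IsLeaf (v 0) ∨ (C.adjw (v 1) = 0 ∧ C.adjw (v 2) = 0)
  back : C.IsLeaf (v m) ∨ (C.adjw (v (m - 1)) = 0 ∧ C.adjw (v (m - 2)) = 0)
  hk : k + 2 ≤ m
  pos1 : 0 < C.adjw (v k)
  pos2 : 0 < C.adjw (v (k + 2))
  ss : C.IsSemiStandardAtOn N φ (v (k + 1)) (C.ebpSet m v)
  hy : ∀ i ≤ m, v i ≠ y
  e1 : φ (v k) e ≠ 0
  e2 : φ (v (k + 2)) e ≠ 0
  ex : φ (v (k + 1)) e = 0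
  f1 : φ (v k) f ≠ 0
  f2 : φ (v (k + 2)) f ≠ 0
  fx : φ (v (k + 1)) f ≠ 0
  ye : φ y e ≠ 0

namespace Ctx

variable {C : Config} {N : ℕ} {φ : C.V → Fin N → ℤ} {m : ℕ} {v : ℕ → C.V} {k : ℕ}
  {e f : Fin N} {y : C.V}

theorem rev (h : Ctx C N φ m v k e f y) :
    Ctx C N φ m (fun i => v (m - i)) (m - (k + 2)) e f y := by
  have hk := h.hk
  have a0 : m - (m - (k + 2)) = k + 2 := by omega
  have a1 : m - (m - (k + 2) + 1) = k + 1 := by omega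
  have a2 : m - (m - (k + 2) + 2) = k := by omega
  have hS : C.ebpSet m (fun i => v (m - i)) = C.ebpSet m v := by
    ext z
    constructor
    · rintro ⟨i, hi, rfl⟩; exact ⟨m - i, by omega, rfl⟩
    · rintro ⟨i, hi, rfl⟩; exact ⟨m - i, by omega, by simp [show m - (m - i) = i by omega]⟩
  refine ⟨h.lin, h.w2, h.emb, ⟨?_, ?_⟩, ?_, ?_, by omega, ?_, ?_, ?_, ?_, ?_, ?_, ?_, ?_, ?_, ?_,
    h.ye⟩
  · intro i hi j hj hij
    have := h.chain.1 _ (by omega) _ (by omega) hij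
    omega
  · intro i hi
    have := h.chain.2 (m - (i + 1)) (by omega)
    rw [show m - (i + 1) + 1 = m - i by omega] at this
    exact this.symm
  · simpa using h.back
  · simpa [show m - (m - 1) = 1 by omega, show m - (m - 2) = 2 by omega] using h.front
  · simpa only [a0] using h.pos2
  · simpa only [a2] using h.pos1
  · rw [hS]; simpa only [a1] using h.ss
  · intro i _; exact h.hy _ (by omega)
  · simpa only [a0] using h.e2
  · simpa only [a2] using h.e1
  · simpa only [a1] using h.ex
  · simpa only [a0] using h.f2
  · simpa only [a2] using h.f1
  · simpa only [a1] using h.fx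

theorem mem (_h : Ctx C N φ m v k e f y) {i : ℕ} (hi : i ≤ m) : v i ∈ C.ebpSet m v := ⟨i, hi, rfl⟩

theorem ne (h : Ctx C N φ m v k e f y) {i j : ℕ} (hi : i ≤ m) (hj : j ≤ m) (hij : i ≠ j) :
    v i ≠ v j := fun hh => hij (h.chain.1 i hi j hj hh)

theorem adj (h : Ctx C N φ m v k e f y) {i : ℕ} (hi : i + 1 ≤ m) : C.graph.Adj (v i) (v (i + 1)) :=
  h.chain.2 i (by omega)

theorem adj_iff (h : Ctx C N φ m v k e f y) {i j : ℕ} (hi : i ≤ m) (hj : j ≤ m)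
    (ha : C.graph.Adj (v i) (v j)) : i + 1 = j ∨ j + 1 = i := by
  by_contra hcon
  have hne : i ≠ j := by rintro rfl; exact C.graph.loopless.irrefl _ ha
  rcases Nat.lt_or_gt_of_ne hne with hh | hh
  · exact chain_adj C h.lin.2 m v h.chain hj (by omega) ha
  · exact chain_adj C h.lin.2 m v h.chain hi (by omega) ha.symm

theorem disj (h : Ctx C N φ m v k e f y) {i j : ℕ} (hj : j ≤ m) (hij : i + 2 ≤ j)
    (hk : ¬ (i = k ∧ j = k + 2)) {c : Fin N} (hc : φ (v i) c ≠ 0) : φ (v j) c = 0 := by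
  have h1 := h.ss.1 (v i) (h.mem (by omega)) (v j) (h.mem hj)
  have hkm := h.hk
  rw [if_neg (h.ne (by omega) hj (by omega)), if_neg, if_neg] at h1
  · have h2 : (supp (φ (v i)) ∩ supp (φ (v j))) = ∅ := by
      rw [← Finset.card_eq_zero]; exact_mod_cast h1
    by_contra hcon
    have : c ∈ supp (φ (v i)) ∩ supp (φ (v j)) := by simp [mem_supp, hc, hcon]
    rw [h2] at this
    simp at this
  · rintro ⟨ha, hb⟩
    have := h.adj_iff (by omega) (by omega) ha
    have := h.adj_iff (by omega) (by omega) hb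
    omega
  · intro ha
    have := h.adj_iff (by omega) (by omega) ha
    omega

theorem one (h : Ctx C N φ m v k e f y) {i : ℕ} (hi : i + 1 ≤ m) :
    ∃ c, supp (φ (v i)) ∩ supp (φ (v (i + 1))) = {c} := by
  have h1 := h.ss.1 (v i) (h.mem (by omega)) (v (i + 1)) (h.mem hi)
  rw [if_neg (h.ne (by omega) hi (by omega)), if_pos (h.adj hi)] at h1
  exact Finset.card_eq_one.1 (by exact_mod_cast h1)

theorem one_eq (h : Ctx C N φ m v k e f y) {i : ℕ} (hi : i + 1 ≤ m) {c d : Fin N}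
    (hc : φ (v i) c ≠ 0) (hc' : φ (v (i + 1)) c ≠ 0)
    (hd : φ (v i) d ≠ 0) (hd' : φ (v (i + 1)) d ≠ 0) : c = d := by
  obtain ⟨a, ha⟩ := h.one hi
  have h1 : c ∈ ({a} : Finset (Fin N)) := by rw [← ha]; simp [mem_supp, hc, hc']
  have h2 : d ∈ ({a} : Finset (Fin N)) := by rw [← ha]; simp [mem_supp, hd, hd']
  simp at h1 h2
  rw [h1, h2]

theorem card (h : Ctx C N φ m v k e f y) {i : ℕ} (hi : i ≤ m) :
    ((supp (φ (v i))).card : ℤ) = C.w (v i) := by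
  have h1 := h.ss.1 (v i) (h.mem hi) (v i) (h.mem hi)
  simpa using h1

theorem dotself (h : Ctx C N φ m v k e f y) (z : C.V) : dot (φ z) (φ z) = C.w z := by
  have := h.emb z z
  simpa using this

theorem unit (h : Ctx C N φ m v k e f y) {i : ℕ} (hi : i ≤ m) {c : Fin N} (hc : φ (v i) c ≠ 0) :
    φ (v i) c * φ (v i) c = 1 :=
  unit_of_card _ (by rw [h.card hi, h.dotself]) c hc

theorem dot0 (h : Ctx C N φ m v k e f y) {i : ℕ} (hi : i ≤ m) (ha : ¬ C.graph.Adj y (v i)) :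
    dot (φ y) (φ (v i)) = 0 := by
  rw [h.emb, if_neg (h.hy i hi).symm, if_neg ha]

theorem adj_interior (h : Ctx C N φ m v k e f y) {i : ℕ} (hi : i + 2 ≤ m) :
    ¬ C.graph.Adj y (v (i + 1)) := fun ha =>
  three_nbrs C h.lin.1 (h.adj (show i + 1 ≤ m by omega)).symm
    (h.adj (show (i + 1) + 1 ≤ m by omega)) ha.symm
    (h.ne (by omega) (by omega) (by omega)) (h.hy _ (by omega)) (h.hy _ (by omega))

theorem adj_front (h : Ctx C N φ m v k e f y) (hl : C.IsLeaf (v 0)) :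
    ¬ C.graph.Adj y (v 0) := fun ha => by
  have hk := h.hk
  have := two_nbrs C ha.symm (h.adj (show 0 + 1 ≤ m by omega)) (h.hy _ (by omega)).symm
  unfold Config.IsLeaf at hl
  omega

theorem front1 (h : Ctx C N φ m v k e f y) (hk : k ≤ 1) : C.IsLeaf (v 0) := by
  rcases h.front with hl | ⟨ha, hb⟩
  · exact hl
  · have p1 := h.pos1
    have p2 := h.pos2
    rcases Nat.le_one_iff_eq_zero_or_eq_one.1 hk with rfl | rfl
    · simp at p2; omega
    · omega

/-- `y` is not adjacent to the left neighbour of the bad vertex. -/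
theorem nadj_u (h : Ctx C N φ m v k e f y) : ¬ C.graph.Adj y (v k) := by
  have hk := h.hk
  rcases k with _ | i
  · exact h.adj_front (h.front1 (by omega))
  · exact h.adj_interior (by omega)

theorem nadj_u2 (h : Ctx C N φ m v k e f y) : ¬ C.graph.Adj y (v (k + 2)) := by
  have := h.rev.nadj_u
  have hk := h.hk
  simpa [show m - (m - (k + 2)) = k + 2 by omega] using this

theorem ne_ef (h : Ctx C N φ m v k e f y) : e ≠ f := by
  rintro rfl; exact h.fx h.ex

theorem inter (h : Ctx C N φ m v k e f y) :
    supp (φ (v k)) ∩ supp (φ (v (k + 2))) = {e, f} := by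
  have hk := h.hk
  have h1 := h.ss.1 (v k) (h.mem (by omega)) (v (k + 2)) (h.mem (by omega))
  rw [if_neg (h.ne (by omega) (by omega) (by omega)), if_neg, if_pos] at h1
  · symm
    apply Finset.eq_of_subset_of_card_le
    · intro c hc
      simp at hc
      rcases hc with rfl | rfl
      · simp [mem_supp, h.e1, h.e2]
      · simp [mem_supp, h.f1, h.f2]
    · rw [Finset.card_pair h.ne_ef]
      exact_mod_cast h1.le
  · exact ⟨(h.adj (by omega)).symm, h.adj (i := k + 1) (by omega)⟩
  · intro ha
    have := h.adj_iff (by omega) (by omega) ha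
    omega

theorem inter' (h : Ctx C N φ m v k e f y) {c : Fin N} (h1 : φ (v k) c ≠ 0)
    (h2 : φ (v (k + 2)) c ≠ 0) : c = e ∨ c = f := by
  have : c ∈ ({e, f} : Finset (Fin N)) := by rw [← h.inter]; simp [mem_supp, *]
  simpa using this

theorem sum_split (a : Fin N → ℤ) (z : Fin N → ℤ) (hef : e ≠ f) (he : z e ≠ 0) (hf : z f ≠ 0) :
    dot a z = a e * z e + a f * z f + ∑ i ∈ supp z \ {e, f}, a i * z i := by
  have h1 : dot a z = ∑ i ∈ supp z, a i * z i := by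
    unfold dot
    symm
    apply Finset.sum_subset (Finset.subset_univ _)
    intro j _ hj
    rw [mem_supp] at hj
    push Not at hj
    simp [hj]
  rw [h1, ← Finset.sum_sdiff (s₁ := {e, f}) (s₂ := supp z)]
  · rw [Finset.sum_pair hef]; ring
  · intro c hc
    simp at hc
    rcases hc with rfl | rfl <;> simp [mem_supp, *]

theorem adjw_le (h : Ctx C N φ m v k e f y) (z : C.V) : C.w z ≤ C.adjw z + 2 := by
  unfold Config.adjw
  have := h.lin.1 z
  omega

theorem yf (h : Ctx C N φ m v k e f y) (h3 : C.adjw y ≤ 3)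
    (huniq : ∀ u, 1 < C.adjw y → u ≠ y → C.adjw u ≤ 1) : φ y f = 0 := by
  by_contra hb
  have hk := h.hk
  have hx0 := h.dot0 (show k + 1 ≤ m by omega) (h.adj_interior hk)
  obtain ⟨g, hgf, hyg, hxg⟩ := dot_exists hx0 hb h.fx
  have hg1 : φ (v k) g = 0 := by
    by_contra hc
    exact hgf (h.one_eq (show k + 1 ≤ m by omega) hc hxg h.f1 h.fx)
  have hg2 : φ (v (k + 2)) g = 0 := by
    by_contra hc
    exact hgf (h.one_eq (i := k + 1) (show k + 1 + 1 ≤ m by omega) hxg hc h.fx h.f2)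
  have hge : g ≠ e := by rintro rfl; exact h.e1 hg1
  set R1 := supp (φ (v k)) \ {e, f} with hR1
  set R2 := supp (φ (v (k + 2))) \ {e, f} with hR2
  have s1 := sum_split (φ y) (φ (v k)) h.ne_ef h.e1 h.f1
  have s2 := sum_split (φ y) (φ (v (k + 2))) h.ne_ef h.e2 h.f2
  rw [h.dot0 (by omega) h.nadj_u, ← hR1] at s1
  rw [h.dot0 (by omega) h.nadj_u2, ← hR2] at s2
  have z1 : ∀ i ∈ R1, φ (v k) i * φ (v k) i = 1 := by
    intro i hi
    simp [hR1, mem_supp] at hi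
    exact h.unit (by omega) hi.1
  have z2 : ∀ i ∈ R2, φ (v (k + 2)) i * φ (v (k + 2)) i = 1 := by
    intro i hi
    simp [hR2, mem_supp] at hi
    exact h.unit (by omega) hi.1
  have a1 := abs_sum_le (φ y) (φ (v k)) R1 z1
  have a2 := abs_sum_le (φ y) (φ (v (k + 2))) R2 z2
  -- norm bound
  have hd12 : Disjoint R1 R2 := by
    rw [Finset.disjoint_left]
    intro i hi hj
    simp [hR1, hR2, mem_supp] at hi hj
    rcases h.inter' hi.1 hj.1 with h' | h'
    · exact hi.2.1 h'
    · exact hi.2.2 h'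
  have hd3 : Disjoint ({e, f, g} : Finset (Fin N)) (R1 ∪ R2) := by
    rw [Finset.disjoint_left]
    intro i hi
    simp at hi
    rcases hi with rfl | rfl | rfl <;> simp [hR1, hR2, mem_supp, hg1, hg2]
  have hnorm : φ y e * φ y e + φ y f * φ y f + φ y g * φ y g
      + ∑ i ∈ R1, φ y i * φ y i + ∑ i ∈ R2, φ y i * φ y i ≤ C.w y := by
    rw [← h.dotself y]
    have : φ y e * φ y e + φ y f * φ y f + φ y g * φ y g
      + ∑ i ∈ R1, φ y i * φ y i + ∑ i ∈ R2, φ y i * φ y i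
       = ∑ i ∈ {e, f, g} ∪ (R1 ∪ R2), φ y i * φ y i := by
      rw [Finset.sum_union hd3, Finset.sum_union hd12, Finset.sum_insert, Finset.sum_pair hgf.symm]
      · ring
      · simp [h.ne_ef, hge.symm]
    rw [this]
    unfold dot
    apply Finset.sum_le_sum_of_subset_of_nonneg (Finset.subset_univ _)
    intro i _ _
    exact mul_self_nonneg _
  -- signs
  have t1 := h.unit (show k ≤ m by omega) h.e1
  have t2 := h.unit (show k ≤ m by omega) h.f1
  have t3 := h.unit (show k + 2 ≤ m by omega) h.e2
  have t4 := h.unit (show k + 2 ≤ m by omega) h.f2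
  have hdot : φ (v k) e * φ (v (k + 2)) e + φ (v k) f * φ (v (k + 2)) f = 0 := by
    have h1 := h.emb (v k) (v (k + 2))
    rw [if_neg (h.ne (by omega) (by omega) (by omega)), if_neg] at h1
    · rw [sum_split (φ (v k)) (φ (v (k + 2))) h.ne_ef h.e2 h.f2] at h1
      rw [Finset.sum_eq_zero, add_zero] at h1
      · exact h1
      · intro i hi
        rw [← hR2] at hi
        have : i ∉ R1 := fun hh => Finset.disjoint_left.1 hd12 hh hi
        simp [hR1, hR2, mem_supp] at this hi
        by_cases hz : φ (v k) i = 0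
        · simp [hz]
        · exact absurd (this hz hi.2.1) hi.2.2
    · intro ha
      have := h.adj_iff (by omega) (by omega) ha
      omega
  have pe : 0 < φ y e * φ y e := mul_self_pos.2 h.ye
  have pf : 0 < φ y f * φ y f := mul_self_pos.2 hb
  have pg : 0 < φ y g * φ y g := mul_self_pos.2 hyg
  have A1 : ∑ i ∈ R1, φ y i * φ (v k) i = -(φ y e * φ (v k) e + φ y f * φ (v k) f) := by linarith
  have A2 : ∑ i ∈ R2, φ y i * φ (v (k + 2)) i
      = -(φ y e * φ (v (k + 2)) e + φ y f * φ (v (k + 2)) f) := by linarith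
  rw [A1] at a1
  rw [A2] at a2
  have key : 2 ≤ |(-(φ y e * φ (v k) e + φ y f * φ (v k) f))| +
      |(-(φ y e * φ (v (k + 2)) e + φ y f * φ (v (k + 2)) f))| ∧
      (φ y e * φ (v k) e + φ y f * φ (v k) f) ^ 2 +
      (φ y e * φ (v (k + 2)) e + φ y f * φ (v (k + 2)) f) ^ 2 =
        2 * (φ y e * φ y e) + 2 * (φ y f * φ y f) := by
    have ye := h.ye
    clear_value R1 R2
    clear a1 a2 A1 A2 s1 s2 hnorm pe pf pg z1 z2
    generalize φ (v k) e = p at *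
    generalize φ (v k) f = q at *
    generalize φ (v (k + 2)) e = r at *
    generalize φ (v (k + 2)) f = s at *
    generalize φ y e = a at *
    generalize φ y f = b at *
    constructor
    · rcases Int.isUnit_iff.1 (IsUnit.of_mul_eq_one _ t1) with rfl | rfl <;>
      rcases Int.isUnit_iff.1 (IsUnit.of_mul_eq_one _ t2) with rfl | rfl <;>
      rcases Int.isUnit_iff.1 (IsUnit.of_mul_eq_one _ t3) with rfl | rfl <;>
      rcases Int.isUnit_iff.1 (IsUnit.of_mul_eq_one _ t4) with rfl | rfl <;>
      simp only [abs_eq_max_neg] <;> omega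
    · rcases Int.isUnit_iff.1 (IsUnit.of_mul_eq_one _ t1) with rfl | rfl <;>
      rcases Int.isUnit_iff.1 (IsUnit.of_mul_eq_one _ t2) with rfl | rfl <;>
      rcases Int.isUnit_iff.1 (IsUnit.of_mul_eq_one _ t3) with rfl | rfl <;>
      rcases Int.isUnit_iff.1 (IsUnit.of_mul_eq_one _ t4) with rfl | rfl <;>
      simp at hdot <;> ring
  obtain ⟨key1, key2⟩ := key
  have hw := h.adjw_le y
  have big : 1 < C.adjw y := by linarith
  have c1 : R1.card ≤ 1 := by
    have := h.card (show k ≤ m by omega)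
    have h1 := huniq (v k) big (h.hy _ (by omega))
    have h2 := h.adjw_le (v k)
    have h3 : R1.card = (supp (φ (v k))).card - 2 := by
      rw [hR1, Finset.card_sdiff_of_subset, Finset.card_pair h.ne_ef]
      intro c hc
      simp at hc
      rcases hc with rfl | rfl <;> simp [mem_supp, h.e1, h.f1]
    omega
  have c2 : R2.card ≤ 1 := by
    have := h.card (show k + 2 ≤ m by omega)
    have h1 := huniq (v (k + 2)) big (h.hy _ (by omega))
    have h2 := h.adjw_le (v (k + 2))
    have h3 : R2.card = (supp (φ (v (k + 2)))).card - 2 := by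
      rw [hR2, Finset.card_sdiff_of_subset, Finset.card_pair h.ne_ef]
      intro c hc
      simp at hc
      rcases hc with rfl | rfl <;> simp [mem_supp, h.e2, h.f2]
    omega
  have b1 := sq_sum_le (φ y) (φ (v k)) R1 c1 z1
  have b2 := sq_sum_le (φ y) (φ (v (k + 2))) R2 c2 z2
  rw [A1] at b1
  rw [A2] at b2
  linarith

/-- First propagation step to the left. -/
theorem step1 (h : Ctx C N φ m v k e f y) (hyf : φ y f = 0) (hu : C.adjw (v k) ≤ 1) :
    ∃ j, k = j + 1 ∧ ∃ c c', c ≠ e ∧ c ≠ c' ∧ φ y c ≠ 0 ∧ φ y c' ≠ 0 ∧ φ (v k) c ≠ 0 ∧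
      φ (v j) c ≠ 0 ∧ φ (v j) c' ≠ 0 := by
  have hk := h.hk
  obtain ⟨c, hce, hyc, huc⟩ := dot_exists (h.dot0 (by omega) h.nadj_u) h.ye h.e1
  have hcf : c ≠ f := by rintro rfl; exact hyc hyf
  have hsub : ({e, f, c} : Finset (Fin N)) ⊆ supp (φ (v k)) := by
    intro i hi
    simp at hi
    rcases hi with rfl | rfl | rfl <;> simp [mem_supp, h.e1, h.f1, huc]
  have hc3 : ({e, f, c} : Finset (Fin N)).card = 3 :=
    Finset.card_eq_three.2 ⟨e, f, c, h.ne_ef, hce.symm, hcf.symm, rfl⟩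
  have hcard := h.card (show k ≤ m by omega)
  have hle := Finset.card_le_card hsub
  have hw := h.adjw_le (v k)
  have hdeg : 2 ≤ C.deg (v k) := by
    unfold Config.adjw at hu; omega
  have hsupp : ({e, f, c} : Finset (Fin N)) = supp (φ (v k)) :=
    Finset.eq_of_subset_of_card_le hsub (by omega)
  rcases k with _ | j
  · have := h.front1 (by omega)
    unfold Config.IsLeaf at this
    omega
  refine ⟨j, rfl, ?_⟩
  have hjc : φ (v j) c ≠ 0 := by
    obtain ⟨a, ha⟩ := h.one (show j + 1 ≤ m by omega)
    have ha' : a ∈ supp (φ (v j)) ∩ supp (φ (v (j + 1))) := by rw [ha]; simp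
    rw [← hsupp] at ha'
    simp [mem_supp] at ha'
    obtain ⟨h1, rfl | rfl | rfl⟩ := ha'
    · exact absurd (h.disj (i := j) (j := j + 1 + 2) (by omega) (by omega) (by omega) h1) h.e2
    · exact absurd (h.disj (i := j) (j := j + 1 + 2) (by omega) (by omega) (by omega) h1) h.f2
    · exact h1
  have hna : ¬ C.graph.Adj y (v j) := by
    rcases j with _ | i
    · exact h.adj_front (h.front1 (by omega))
    · exact h.adj_interior (by omega)
  obtain ⟨c', h1, h2, h3⟩ := dot_exists (h.dot0 (by omega) hna) hyc hjc
  exact ⟨c, c', hce, h1.symm, hyc, h2, huc, hjc, h3⟩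

theorem step2 (h : Ctx C N φ m v k e f y) {j : ℕ} (hj : k = j + 1) (hkm : k + 3 ≤ m)
    (hz : C.adjw (v j) ≤ 0) {c c' d d' : Fin N}
    (hcc : c ≠ c') (hyc' : φ y c' ≠ 0) (hc : φ (v k) c ≠ 0)
    (hjc : φ (v j) c ≠ 0) (hjc' : φ (v j) c' ≠ 0)
    (hd : φ (v (k + 2)) d ≠ 0) (hd' : φ (v (k + 3)) d' ≠ 0)
    (hall : ∀ i, φ y i ≠ 0 → i = e ∨ i = c ∨ i = c' ∨ i = d ∨ i = d') :
    C.graph.Adj y (v 0) := by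
  subst hj
  have hsub : ({c, c'} : Finset (Fin N)) ⊆ supp (φ (v j)) := by
    intro i hi
    simp at hi
    rcases hi with rfl | rfl <;> simp [mem_supp, *]
  have hcard := h.card (show j ≤ m by omega)
  have hw := h.adjw_le (v j)
  have hw2 := h.w2 (v j)
  have hdeg : 2 ≤ C.deg (v j) := by
    unfold Config.adjw at hz; omega
  have hsupp : ({c, c'} : Finset (Fin N)) = supp (φ (v j)) :=
    Finset.eq_of_subset_of_card_le hsub (by rw [Finset.card_pair hcc]; omega)
  rcases j with _ | i
  · have := h.front1 (by omega)
    unfold Config.IsLeaf at this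
    omega
  have hic' : φ (v i) c' ≠ 0 := by
    obtain ⟨a, ha⟩ := h.one (show i + 1 ≤ m by omega)
    have ha' : a ∈ supp (φ (v i)) ∩ supp (φ (v (i + 1))) := by rw [ha]; simp
    rw [← hsupp] at ha'
    simp [mem_supp] at ha'
    obtain ⟨h1, rfl | rfl⟩ := ha'
    · exact absurd (h.disj (i := i) (j := i + 1 + 1) (by omega) (by omega) (by omega) h1) hc
    · exact h1
  have key : ∀ t b, i + 2 ≤ t → t ≤ m → φ (v t) b ≠ 0 → φ (v i) b = 0 := by
    intro t b h1 h2 h3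
    by_contra hcon
    exact h3 (h.disj h2 h1 (by omega) hcon)
  have hne := dot_single (z := φ (v i)) hyc' hic' (by
    intro b hb hyb
    rcases hall b hyb with rfl | rfl | rfl | rfl | rfl
    · exact key _ _ (by omega) (by omega) h.e2
    · exact key _ _ (by omega) (by omega) hc
    · exact absurd rfl hb
    · exact key _ _ (by omega) (by omega) hd
    · exact key _ _ (by omega) (by omega) hd')
  have hadj : C.graph.Adj y (v i) := by
    by_contra hna
    exact hne (h.dot0 (by omega) hna)
  rcases i with _ | i
  · exact hadj
  · exact absurd hadj (h.adj_interior (by omega))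

theorem four (h : Ctx C N φ m v k e f y) (hyf : φ y f = 0) (hu : C.adjw (v k) ≤ 1) :
    4 ≤ C.w y := by
  have hk := h.hk
  obtain ⟨j, rfl, c, c', hce, hcc, hyc, hyc', hc, hjc, hjc'⟩ := h.step1 hyf hu
  obtain ⟨d, hde, hyd, hd⟩ := dot_exists (h.dot0 hk h.nadj_u2) h.ye h.e2
  have hc'1 : φ (v (j + 1)) c' = 0 := by
    by_contra hh
    exact hcc (h.one_eq (by omega) hjc hc hjc' hh)
  have hc'2 : φ (v (j + 1 + 2)) c' = 0 := h.disj (by omega) (by omega) (by omega) hjc'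
  have hc2 : φ (v (j + 1 + 2)) c = 0 := h.disj (by omega) (by omega) (by omega) hjc
  have := card_le_dot (φ y) {e, c, c', d} (by
    intro i hi
    simp at hi
    rcases hi with rfl | rfl | rfl | rfl
    · exact h.ye
    all_goals assumption)
  rw [h.dotself] at this
  have e1 : e ≠ c' := by rintro rfl; exact h.e1 hc'1
  have e2 : c ≠ d := by rintro rfl; exact hd hc2
  have e3 : c' ≠ d := by rintro rfl; exact hd hc'2
  rw [Finset.card_insert_of_notMem (by simp [hce.symm, e1, hde.symm]),
    Finset.card_insert_of_notMem (by simp [hcc, e2]), Finset.card_pair e3] at this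
  simpa using this

set_option maxHeartbeats 1000000 in
theorem contra (h : Ctx C N φ m v k e f y) (h3 : C.adjw y ≤ 3)
    (huniq : ∀ a b, 1 < C.adjw a → 1 < C.adjw b → a = b)
    (h4 : C.adjw y = 3 → ∀ u u' : C.V, C.graph.Adj u u' → C.adjw u = 1 → C.adjw u' = 1 → False) :
    False := by
  have hk := h.hk
  have hyf := h.yf h3 (fun u h1 h2 => by
    by_contra hcon
    exact h2 (huniq _ _ (by omega) h1))
  have ev : m - (m - (k + 2)) = k + 2 := by omega
  have hfour : 4 ≤ C.w y := by
    by_cases hu : C.adjw (v k) ≤ 1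
    · exact h.four hyf hu
    · refine h.rev.four hyf ?_
      simp only [ev]
      by_contra hcon
      exact h.ne (show k ≤ m by omega) hk (by omega) (huniq _ _ (by omega) (by omega))
  have hw := h.adjw_le y
  have hsmall : ∀ i ≤ m, C.adjw (v i) ≤ 1 := by
    intro i hi
    by_contra hcon
    exact h.hy i hi (huniq _ _ (by omega) (by omega))
  obtain ⟨j, hj, c, c', hce, hcc, hyc, hyc', hc, hjc, hjc'⟩ := h.step1 hyf (hsmall _ (by omega))
  obtain ⟨l, hl, d, d', hde, hdd, hyd, hyd', hd, hld, hld'⟩ :=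
    h.rev.step1 hyf (hsmall _ (by omega))
  have hr := h.rev
  have ek : m - l = k + 3 := by omega
  have hd : φ (v (k + 2)) d ≠ 0 := by rw [← ev]; exact hd
  have hld : φ (v (k + 3)) d ≠ 0 := by rw [← ek]; exact hld
  have hld' : φ (v (k + 3)) d' ≠ 0 := by rw [← ek]; exact hld'
  subst hj
  have hkm : j + 1 + 3 ≤ m := by omega
  have hc'1 : φ (v (j + 1)) c' = 0 := by
    by_contra hh
    exact hcc (h.one_eq (by omega) hjc hc hjc' hh)
  have hd'1 : φ (v (j + 1 + 2)) d' = 0 := by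
    by_contra hh
    exact hdd (h.one_eq (i := j + 1 + 2) (by omega) hd hld hh hld')
  have hc2 : φ (v (j + 1 + 2)) c = 0 := h.disj (by omega) (by omega) (by omega) hjc
  have hc'2 : φ (v (j + 1 + 2)) c' = 0 := h.disj (by omega) (by omega) (by omega) hjc'
  have hc3 : φ (v (j + 1 + 3)) c = 0 := h.disj (by omega) (by omega) (by omega) hjc
  have hc'3 : φ (v (j + 1 + 3)) c' = 0 := h.disj (by omega) (by omega) (by omega) hjc'
  have n1 : e ≠ c' := by rintro rfl; exact h.e1 hc'1
  have n2 : c ≠ d := by rintro rfl; exact hd hc2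
  have n3 : c' ≠ d := by rintro rfl; exact hd hc'2
  have n4 : c ≠ d' := by rintro rfl; exact hld' hc3
  have n5 : c' ≠ d' := by rintro rfl; exact hld' hc'3
  have n6 : e ≠ d' := by rintro rfl; exact h.e2 hd'1
  have hcard5 : ({e, c, c', d, d'} : Finset (Fin N)).card = 5 := by
    rw [Finset.card_insert_of_notMem (by simp [hce.symm, n1, hde.symm, n6]),
      Finset.card_insert_of_notMem (by simp [hcc, n2, n4]),
      Finset.card_insert_of_notMem (by simp [n3, n5]), Finset.card_pair hdd]
  have hnz : ∀ i ∈ ({e, c, c', d, d'} : Finset (Fin N)), φ y i ≠ 0 := by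
    intro i hi
    simp at hi
    rcases hi with rfl | rfl | rfl | rfl | rfl
    · exact h.ye
    all_goals assumption
  have h5 := card_le_dot (φ y) _ hnz
  rw [h.dotself, hcard5] at h5
  have h33 : C.adjw y = 3 := by push_cast at h5; omega
  have hall : ∀ i, φ y i ≠ 0 → i = e ∨ i = c ∨ i = c' ∨ i = d ∨ i = d' := by
    intro i hi
    by_contra hcon
    have hni : i ∉ ({e, c, c', d, d'} : Finset (Fin N)) := by simpa using hcon
    have h6 := card_le_dot (φ y) (insert i {e, c, c', d, d'}) (by
      intro t ht
      rcases Finset.mem_insert.1 ht with rfl | ht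
      · exact hi
      · exact hnz t ht)
    rw [Finset.card_insert_of_notMem hni, hcard5, h.dotself] at h6
    push_cast at h6
    omega
  have hIV := h4 h33
  have q1 : C.adjw (v j) ≤ 0 := by
    by_contra hcon
    have p1 := h.pos1
    have s1 := hsmall j (by omega)
    have s2 := hsmall (j + 1) (by omega)
    exact hIV (v j) (v (j + 1)) (h.adj (show j + 1 ≤ m by omega)) (by omega) (by omega)
  have q2 : C.adjw (v (j + 1 + 3)) ≤ 0 := by
    by_contra hcon
    have p1 := h.pos2
    have s1 := hsmall (j + 1 + 2) (by omega)
    have s2 := hsmall (j + 1 + 3) (by omega)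
    have ad : C.graph.Adj (v (j + 1 + 2)) (v (j + 1 + 3)) :=
      h.adj (show (j + 1 + 2) + 1 ≤ m by omega)
    exact hIV _ _ ad (le_antisymm s1 p1) (le_antisymm s2 (not_le.1 hcon))
  have r1 : C.graph.Adj y (v 0) := h.step2 rfl hkm q1 hcc hyc' hc hjc hjc' hd hld' hall
  have r2 : C.graph.Adj y (v (m - 0)) := by
    have ea : m - (m - (j + 1 + 2) + 2) = j + 1 := by omega
    have eb : m - (m - (j + 1 + 2) + 3) = j := by omega
    refine h.rev.step2 (j := l) (c := d) (c' := d') (d := c) (d' := c') hl (by omega) ?_ hdd hyd' ?_ ?_ ?_ ?_ ?_ ?_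
    · simp only [ek]; exact q2
    · simp only [ev]; exact hd
    · simp only [ek]; exact hld
    · simp only [ek]; exact hld'
    · simp only [ea]; exact hc
    · simp only [eb]; exact hjc'
    · intro i hi
      have := hall i hi
      tauto
  have hfin := chain_ends C h.lin.2 (m + 1) (fun i => if i ≤ m then v i else y) ⟨?_, ?_⟩ (by omega)
  · simp at hfin
    exact hfin r1.symm
  · intro a ha b hb hab
    by_cases h1 : a ≤ m <;> by_cases h2 : b ≤ m <;> simp only [h1, h2, if_true, if_false] at hab
    · exact h.chain.1 a h1 b h2 hab
    · exact absurd hab (h.hy a h1)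
    · exact absurd hab.symm (h.hy b h2)
    · omega
  · intro i hi
    by_cases h1 : i + 1 ≤ m
    · simp only [show i ≤ m by omega, h1, if_true]
      exact h.adj h1
    · have : i = m := by omega
      subst this
      simp
      exact r2.symm

end Ctx

/-- Bad positions are interior. -/
theorem bad_interior : ∀ p ∈ badPatterns, ∀ i : Fin p.length, (p.get i).2 = true →
    0 < i.1 ∧ i.1 + 1 < p.length := by
  decide

theorem main_aux (C : Config) (hlin : C.IsLinear) (hwc : C.WorkingConditions)
    (N : ℕ) (φ : C.V → Fin N → ℤ)
    (hφ : C.IsEmbedding N φ) (m : ℕ) (vc : ℕ → C.V) (hebp : C.IsExtBadPart m vc)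
    (k : ℕ) (hk : k + 2 ≤ m) (hx : C.IsBad (vc (k + 1)))
    (hss : C.IsSemiStandardAtOn N φ (vc (k + 1)) (C.ebpSet m vc))
    (e : Fin N) (he₁ : φ (vc k) e ≠ 0) (he₂ : φ (vc (k + 2)) e ≠ 0) (hex : φ (vc (k + 1)) e = 0)
    (y : C.V) (hv₁ : y ≠ vc k) (hv₂ : y ≠ vc (k + 2)) :
    φ y e = 0 := by
  obtain ⟨⟨hch, -, hfr, hbk⟩, -⟩ := hebp
  obtain ⟨W1, W2, W3, -, W5, -, -, -⟩ := hwc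
  by_contra hye
  have a1 : C.graph.Adj (vc (k + 1)) (vc k) := (hch.2 k (by omega)).symm
  have a2 : C.graph.Adj (vc (k + 1)) (vc (k + 2)) := hch.2 (k + 1) (by omega)
  have hn : vc k ≠ vc (k + 2) := fun hh => by
    have := hch.1 k (by omega) (k + 2) hk hh
    omega
  have hpos : 0 < C.adjw (vc k) ∧ 0 < C.adjw (vc (k + 2)) := by
    obtain ⟨p, q, hpq, hp, hq, pp, pq⟩ := hx
    have hmem : ∀ t, C.graph.Adj (vc (k + 1)) t → t = vc k ∨ t = vc (k + 2) := by
      intro t ht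
      by_contra hcon
      push Not at hcon
      exact three_nbrs C hlin.1 a1 a2 ht hn hcon.1.symm hcon.2.symm
    rcases hmem p hp with rfl | rfl <;> rcases hmem q hq with rfl | rfl
    · exact absurd rfl hpq
    · exact ⟨pp, pq⟩
    · exact ⟨pq, pp⟩
    · exact absurd rfl hpq
  have htri := hss.2 _ ⟨k, by omega, rfl⟩ _ ⟨k + 2, hk, rfl⟩ hn a1 a2
  obtain ⟨f, hf⟩ := Finset.card_eq_one.1 htri
  have hf' : f ∈ supp (φ (vc k)) ∩ supp (φ (vc (k + 1))) ∩ supp (φ (vc (k + 2))) := by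
    rw [hf]; simp
  simp only [Finset.mem_inter, mem_supp] at hf'
  have mk : (∀ i ≤ m, vc i ≠ y) → Ctx C N φ m vc k e f y := fun hy =>
    ⟨hlin, W1, hφ, hch, hfr.imp id (fun h => h.2), hbk.imp id (fun h => h.2), hk, hpos.1, hpos.2,
      hss, hy, he₁, he₂, hex, hf'.1.1, hf'.2, hf'.1.2, hye⟩
  by_cases hy : ∀ i ≤ m, vc i ≠ y
  · exact (mk hy).contra (W2 y) W3 (fun h => W5 ⟨y, h⟩)
  · push Not at hy
    obtain ⟨i, hi, rfl⟩ := hy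
    have hik : i ≠ k := by rintro rfl; exact hv₁ rfl
    have hik1 : i ≠ k + 1 := by rintro rfl; exact hye hex
    have hik2 : i ≠ k + 2 := by rintro rfl; exact hv₂ rfl
    have dj : ∀ j ≤ m, (i + 2 ≤ j ∧ j ≠ k + 1 ∨ j + 2 ≤ i) → φ (vc j) e ≠ 0 → False := by
      intro j hj hij hje
      have nadj : ∀ a b, b ≤ m → a + 2 ≤ b → ¬ C.graph.Adj (vc a) (vc b) := fun a b hb hab =>
        chain_adj C hlin.2 m vc hch hb hab
      have h1 := hss.1 _ ⟨i, hi, rfl⟩ _ ⟨j, hj, rfl⟩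
      rw [if_neg, if_neg, if_neg] at h1
      · have h2 : (supp (φ (vc i)) ∩ supp (φ (vc j))) = ∅ := by
          rw [← Finset.card_eq_zero]; exact_mod_cast h1
        have : e ∈ supp (φ (vc i)) ∩ supp (φ (vc j)) := by simp [mem_supp, hye, hje]
        rw [h2] at this
        simp at this
      · rintro ⟨h2, -⟩
        rcases Nat.lt_or_gt_of_ne hik1 with hh | hh
        · exact nadj i (k + 1) (by omega) (by omega) h2.symm
        · exact nadj (k + 1) i (by omega) (by omega) h2
      · intro h2
        rcases hij with hh | hh
        · exact nadj i j hj hh.1 h2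
        · exact nadj j i hi hh h2.symm
      · intro h2
        have := hch.1 i hi j hj h2
        omega
    rcases Nat.lt_or_gt_of_ne hik1 with hh | hh
    · exact dj (k + 2) hk (by omega) he₂
    · exact dj k (by omega) (by omega) he₁

/-- Lemma 5.10: the folded basis vector of a semi-standard embedding appears only in
the supports of the two neighbors of the bad vertex. -/
theorem statement11 (C : Config) (hlin : C.IsLinear) (hwc : C.WorkingConditions)
    (hbad : ∃ y : C.V, C.IsBad y) (N : ℕ) (φ : C.V → Fin N → ℤ)
    (hφ : C.IsEmbedding N φ) (m : ℕ) (vc : ℕ → C.V) (hebp : C.IsExtBadPart m vc)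
    (x : C.V) (hx : C.IsBad x)
    (u₁ u₂ : C.V) (hu : u₁ ≠ u₂) (hxu₁ : C.graph.Adj x u₁) (hxu₂ : C.graph.Adj x u₂)
    (hss : C.IsSemiStandardAtOn N φ x (C.ebpSet m vc))
    (e : Fin N) (he₁ : φ u₁ e ≠ 0) (he₂ : φ u₂ e ≠ 0) (hex : φ x e = 0)
    (v : C.V) (hv₁ : v ≠ u₁) (hv₂ : v ≠ u₂) :
    φ v e = 0 := by
  obtain ⟨p, hp, mb, vb, hb⟩ := hwc.2.2.2.2.2.2.2 hbad
  obtain ⟨i, hflag, hix⟩ := (hb.2.2.2 x).1 hx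
  obtain ⟨hi0, hi1⟩ := bad_interior p hp i hflag
  have hmb := hb.2.1
  have hcov := hebp.1.2.1 p hp mb vb hb
  have hch := hebp.1.1
  have b1 : C.graph.Adj x (vb (i.1 - 1)) := by
    have := hb.1.2 (i.1 - 1) (by omega)
    rw [show i.1 - 1 + 1 = i.1 by omega, hix] at this
    exact this.symm
  have b2 : C.graph.Adj x (vb (i.1 + 1)) := by
    have := hb.1.2 i.1 (by omega)
    rw [hix] at this
    exact this
  have bn : vb (i.1 - 1) ≠ vb (i.1 + 1) := fun hh => by
    have := hb.1.1 _ (by omega) _ (by omega) hh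
    omega
  have hnb : ∀ t, C.graph.Adj x t → ∃ j ≤ m, vc j = t := by
    intro t ht
    have : t = vb (i.1 - 1) ∨ t = vb (i.1 + 1) := by
      by_contra hcon
      push Not at hcon
      exact three_nbrs C hlin.1 b1 b2 ht bn hcon.1.symm hcon.2.symm
    rcases this with rfl | rfl
    · exact hcov _ (by omega)
    · exact hcov _ (by omega)
  obtain ⟨l, hl, hlx⟩ := hcov i.1 (by omega)
  rw [hix] at hlx
  obtain ⟨a, ha, rfl⟩ := hnb u₁ hxu₁
  obtain ⟨b, hb', rfl⟩ := hnb u₂ hxu₂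
  subst hlx
  have hadj : ∀ t ≤ m, C.graph.Adj (vc l) (vc t) → t + 1 = l ∨ l + 1 = t := by
    intro t ht hadj
    by_contra hcon
    have hne : l ≠ t := by rintro rfl; exact C.graph.loopless.irrefl _ hadj
    rcases Nat.lt_or_gt_of_ne hne with hh | hh
    · exact chain_adj C hlin.2 m vc hch ht (by omega) hadj
    · exact chain_adj C hlin.2 m vc hch hl (by omega) hadj.symm
  have hab : a ≠ b := by rintro rfl; exact hu rfl
  rcases hadj a ha hxu₁ with h1 | h1 <;> rcases hadj b hb' hxu₂ with h2 | h2
  · omega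
  · obtain rfl : b = a + 2 := by omega
    subst h1
    exact main_aux C hlin hwc N φ hφ m vc hebp a hb' hx hss e he₁ he₂ hex v hv₁ hv₂
  · obtain rfl : a = b + 2 := by omega
    subst h2
    exact main_aux C hlin hwc N φ hφ m vc hebp b ha hx hss e he₂ he₁ hex v hv₂ hv₁
  · omega

end LensPaper
end
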